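/- Let ℓ ≥ 1 be a real number. Set Λ(2,ℓ) := 12ℓ·2^{6ℓ} + 5ℓ C_{2,ℓ} + 9ℓ D_{2,ℓ}, where C_{2,ℓ} := (10ℓ)^{2^{16ℓ}}, A_2 := 125^2 · 1092/8, B_{2,ℓ} := (1/2) e^{4/e} 2^{20ℓ}, D_{2,ℓ} := A_2 · max(A_2, 2·2^{5ℓA_2}) + (2A_2)^{−A_2/4} e^{B_{2,ℓ}/e} 2^{5ℓB_{2,ℓ}} · δ + 5 with δ = 1 if A_2 < B_{2,ℓ} and δ = 0 otherwise, and φ(ℓ) := 16748 · Λ(2,ℓ). Then, uniformly for all real x ≥ exp(7^{28} (12eℓ)^{28 log(192eℓ)}) and all real y with x^{1/ℓ} ≤ y ≤ x, one has ∑_{x−y < n ≤ x} Δ(n) ≤ φ(ℓ) · y · (log x)^{−1 + 4/π}. -/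

import Mathlib

/-- The Erdős–Hooley Δ-function: the maximum over real `u` of the number of
divisors of `n` in the interval `(e^u, e^{u+1}]`. -/
noncomputable def hooleyDelta (n : ℕ) : ℕ :=
  sSup {m : ℕ | ∃ u : ℝ,
    m = (n.divisors.filter (fun d : ℕ => Real.exp u < (d : ℝ) ∧ (d : ℝ) ≤ Real.exp (u + 1))).card}

noncomputable def A2 : ℝ := 125 ^ 2 * 1092 / 8

noncomputable def B2l (ℓ : ℝ) : ℝ := (1 / 2) * Real.exp (4 / Real.exp 1) * (2 : ℝ) ^ (20 * ℓ)

noncomputable def C2l (ℓ : ℝ) : ℝ := (10 * ℓ) ^ ((2 : ℝ) ^ (16 * ℓ))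

noncomputable def D2l (ℓ : ℝ) : ℝ :=
  A2 * max A2 (2 * (2 : ℝ) ^ (5 * ℓ * A2)) +
    (2 * A2) ^ (-A2 / 4) * Real.exp (B2l ℓ / Real.exp 1) *
      (2 : ℝ) ^ (5 * ℓ * B2l ℓ) * (if A2 < B2l ℓ then 1 else 0) + 5

noncomputable def Lam2 (ℓ : ℝ) : ℝ :=
  12 * ℓ * (2 : ℝ) ^ (6 * ℓ) + 5 * ℓ * C2l ℓ + 9 * ℓ * D2l ℓ

noncomputable def phiConst (ℓ : ℝ) : ℝ := 16748 * Lam2 ℓ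

/-!
Put `z = y ^ (1 / 6)` and `Z = z ^ 2`. Writing `n ∈ (x - y, x]` as `n = a * b`, where `a ≤ Z`
collects the small prime factors of `n` and `b` is free of prime factors below the next prime `q`,
one has `Δ(n) ≤ Δ(a) τ(b)`. Selberg's sieve bounds the number of `b`. If `q ≥ z`, then `τ(b)` is
bounded; if `q` is smaller, then either a large prime power divides `n`, which is rare, or `a > z`
is `q`-smooth, and the saving of Rankin's method beats `τ(b)`. Either way the sum is at most a
constant times `y / log x` times the logarithmic mean `∑_{a ≤ x} Δ(a) / a`.

Since `Δ(a)` is at most a constant times the mean of `|∑_{d ∣ a} d ^ {iθ}|` over `0 ≤ θ ≤ 1`, the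
logarithmic mean is at most a mean of Euler products, governed by `∑_p |1 + p ^ {iθ}| / p` with
`|1 + p ^ {iθ}| = 2 |cos (θ log p / 2)|`. In the Fourier series of `2 |cos|` the constant term is
`4 / π`, which produces the power `(log x) ^ (4 / π)`, and the harmonics are controlled by bounds
for `ζ` near the line `Re s = 1`.
-/

namespace ErdosHooley

open Real

/-! ### The divisor function and `Δ` -/

/-- The divisors of `n` in the window `(e^u, e^{u+1}]` counted by `hooleyDelta`. -/
noncomputable def windowDivisors (n : ℕ) (u : ℝ) : Finset ℕ :=
  n.divisors.filter fun d : ℕ => exp u < (d : ℝ) ∧ (d : ℝ) ≤ exp (u + 1)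

lemma mem_windowDivisors {n d : ℕ} {u : ℝ} :
    d ∈ windowDivisors n u ↔ (d ∣ n ∧ n ≠ 0) ∧ exp u < d ∧ (d : ℝ) ≤ exp (u + 1) := by
  rw [windowDivisors, Finset.mem_filter, Nat.mem_divisors]

lemma bddAbove_card_windowDivisors (n : ℕ) :
    BddAbove {m : ℕ | ∃ u : ℝ, m = (windowDivisors n u).card} :=
  ⟨n.divisors.card, by rintro _ ⟨u, rfl⟩; exact Finset.card_filter_le _ _⟩

lemma card_windowDivisors_le_hooleyDelta (n : ℕ) (u : ℝ) :
    (windowDivisors n u).card ≤ hooleyDelta n :=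
  le_csSup (bddAbove_card_windowDivisors n) ⟨u, rfl⟩

lemma exists_hooleyDelta_eq_card_windowDivisors (n : ℕ) :
    ∃ u : ℝ, hooleyDelta n = (windowDivisors n u).card :=
  Nat.sSup_mem (s := {m : ℕ | ∃ u : ℝ, m = (windowDivisors n u).card}) ⟨_, 0, rfl⟩
    (bddAbove_card_windowDivisors n)

lemma hooleyDelta_le_card_divisors (n : ℕ) : hooleyDelta n ≤ n.divisors.card := by
  obtain ⟨u, hu⟩ := exists_hooleyDelta_eq_card_windowDivisors n
  exact hu ▸ Finset.card_filter_le _ _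

/-- Dividing by a fixed divisor `e` of `b` shifts the window by `-log e`. -/
lemma windowDivisors_mul_subset (a : ℕ) {b : ℕ} (hb : b ≠ 0) (u : ℝ) :
    windowDivisors (a * b) u ⊆
      b.divisors.biUnion fun e => (windowDivisors a (u - log e)).image (· * e) := by
  intro d hd
  obtain ⟨⟨hdvd, hab⟩, h1, h2⟩ := mem_windowDivisors.mp hd
  obtain ⟨d, e, hda, heb, rfl⟩ := exists_dvd_and_dvd_of_dvd_mul hdvd
  have he : (0 : ℝ) < e := by exact_mod_cast Nat.pos_of_dvd_of_pos heb (Nat.pos_of_ne_zero hb)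
  simp only [Finset.mem_biUnion, Finset.mem_image, mem_windowDivisors, Nat.mem_divisors]
  refine ⟨e, ⟨heb, hb⟩, d, ⟨⟨hda, left_ne_zero_of_mul hab⟩, ?_, ?_⟩, rfl⟩
  · rw [exp_sub, exp_log he, div_lt_iff₀ he]
    exact_mod_cast h1
  · rw [sub_add_eq_add_sub, exp_sub, exp_log he, le_div_iff₀ he]
    exact_mod_cast h2

lemma hooleyDelta_mul_le (a : ℕ) {b : ℕ} (hb : b ≠ 0) :
    hooleyDelta (a * b) ≤ b.divisors.card * hooleyDelta a := by
  obtain ⟨u, hu⟩ := exists_hooleyDelta_eq_card_windowDivisors (a * b)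
  rw [hu]
  refine (Finset.card_le_card (windowDivisors_mul_subset a hb u)).trans
    (Finset.card_biUnion_le_card_mul _ _ _ fun e _ => ?_)
  exact Finset.card_image_le.trans (card_windowDivisors_le_hooleyDelta a _)

lemma card_divisors_mul_le (m n : ℕ) :
    (m * n).divisors.card ≤ m.divisors.card * n.divisors.card := by
  rw [Nat.divisors_mul]
  exact Finset.card_mul_le

/-- The integers free of prime factors less than `z`. For `2 < z` this excludes `0`, which every
prime divides. -/
def IsRough (z : ℝ) (n : ℕ) : Prop := ∀ p : ℕ, p.Prime → p ∣ n → z ≤ p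

lemma IsRough.of_dvd {z : ℝ} {m n : ℕ} (hn : IsRough z n) (hmn : m ∣ n) : IsRough z m :=
  fun p hp hpm => hn p hp (hpm.trans hmn)

lemma card_divisors_le_of_isRough {z : ℝ} (hz : 1 < z) {b : ℕ} (hb : b ≠ 0) (h : IsRough z b) :
    (b.divisors.card : ℝ) ≤ 2 ^ (log b / log z) := by
  induction b using Nat.recOnMul with
  | zero => exact absurd rfl hb
  | one => simp
  | prime p hp =>
    have : (1 : ℝ) ≤ log p / log z := by
      rw [one_le_div (log_pos hz)]
      exact log_le_log (by linarith) (h p hp dvd_rfl)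
    rw [hp.divisors, Finset.card_pair hp.one_lt.ne]
    exact_mod_cast self_le_rpow_of_one_le one_le_two this
  | mul a b iha ihb =>
    have ha0 : a ≠ 0 := left_ne_zero_of_mul hb
    have hb0 : b ≠ 0 := right_ne_zero_of_mul hb
    have ha := iha ha0 (h.of_dvd (dvd_mul_right _ _))
    have hb := ihb hb0 (h.of_dvd (dvd_mul_left _ _))
    calc ((a * b).divisors.card : ℝ) ≤ (a.divisors.card : ℝ) * b.divisors.card := by
          exact_mod_cast card_divisors_mul_le a b
      _ ≤ 2 ^ (log a / log z) * 2 ^ (log b / log z) := by gcongr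
      _ = 2 ^ (log (a * b : ℕ) / log z) := by
          rw [← rpow_add two_pos, Nat.cast_mul,
            log_mul (by exact_mod_cast ha0) (by exact_mod_cast hb0), add_div]

lemma pow_rpow_eq_exp {x : ℝ} (hx : 0 < x) (k : ℕ) (δ : ℝ) :
    (x ^ k) ^ δ = exp (k * (δ * log x)) := by
  rw [← rpow_natCast, ← rpow_mul hx.le, rpow_def_of_pos hx]
  ring_nf

lemma add_one_le_mul_pow_rpow {δ x : ℝ} (hδ : 0 < δ) (hx : 2 ≤ x) (k : ℕ) :
    (k : ℝ) + 1 ≤ (1 + 1 / (δ * log 2)) * (x ^ k) ^ δ := by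
  have hlog : log 2 ≤ log x := log_le_log two_pos hx
  have hexp : (k : ℝ) * (δ * log 2) ≤ (x ^ k) ^ δ :=
    calc (k : ℝ) * (δ * log 2) ≤ k * (δ * log x) := by gcongr
      _ ≤ exp (k * (δ * log x)) := by linarith [add_one_le_exp (k * (δ * log x))]
      _ = (x ^ k) ^ δ := (pow_rpow_eq_exp (by linarith) k δ).symm
  have hk : (k : ℝ) ≤ 1 / (δ * log 2) * (x ^ k) ^ δ := by
    rwa [one_div_mul_eq_div, le_div_iff₀ (by positivity)]
  have hone : 1 ≤ (x ^ k) ^ δ := one_le_rpow (one_le_pow₀ (by linarith)) hδ.le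
  linarith

lemma add_one_le_pow_rpow {δ x : ℝ} (hδ : 0 < δ) (hx : 2 ^ (1 / δ) ≤ x) (k : ℕ) :
    (k : ℝ) + 1 ≤ (x ^ k) ^ δ := by
  have hx0 : 0 ≤ x := (by positivity : (0 : ℝ) ≤ 2 ^ (1 / δ)).trans hx
  have htwo : (2 : ℝ) ≤ x ^ δ :=
    calc (2 : ℝ) = ((2 : ℝ) ^ (1 / δ)) ^ δ := by
          rw [← rpow_mul zero_le_two, one_div_mul_cancel hδ.ne', rpow_one]
      _ ≤ x ^ δ := by gcongr
  calc (k : ℝ) + 1 ≤ 2 ^ k := by exact_mod_cast Nat.lt_two_pow_self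
    _ ≤ (x ^ δ) ^ k := by gcongr
    _ = (x ^ k) ^ δ := rpow_pow_comm hx0 δ k

lemma prod_primeFactors_ite_lt_le {K W : ℝ} (hK : 1 ≤ K) (hW : 0 ≤ W) (n : ℕ) :
    ∏ p ∈ n.primeFactors, (if (p : ℝ) < W then K else 1) ≤ K ^ W := by
  have hsub : n.primeFactors.filter (fun p : ℕ => (p : ℝ) < W) ⊆ Finset.Icc 1 ⌊W⌋₊ := by
    intro p hp
    rw [Finset.mem_filter] at hp
    exact Finset.mem_Icc.mpr ⟨(Nat.prime_of_mem_primeFactors hp.1).one_le, Nat.le_floor hp.2.le⟩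
  have hcard := Finset.card_le_card hsub
  rw [Nat.card_Icc, Nat.add_sub_cancel] at hcard
  rw [← Finset.prod_filter, Finset.prod_const, ← rpow_natCast]
  exact rpow_le_rpow_of_exponent_le hK ((Nat.cast_le.mpr hcard).trans (Nat.floor_le hW))

lemma natCast_rpow_eq_prod_primeFactors {n : ℕ} (hn : n ≠ 0) (δ : ℝ) :
    (n : ℝ) ^ δ = ∏ p ∈ n.primeFactors, ((p : ℝ) ^ n.factorization p) ^ δ := by
  conv_lhs => rw [← Nat.prod_factorization_pow_eq_self hn]
  rw [Finsupp.prod, Nat.support_factorization]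
  push_cast
  exact (finsetProd_rpow _ _ (fun _ _ => by positivity) δ).symm

/-- Only the primes below `2 ^ (1 / δ)` contribute to the constant. -/
lemma card_divisors_le_rpow {δ : ℝ} (hδ : 0 < δ) {n : ℕ} (hn : n ≠ 0) :
    (n.divisors.card : ℝ) ≤ (1 + 1 / (δ * log 2)) ^ ((2 : ℝ) ^ (1 / δ)) * (n : ℝ) ^ δ := by
  set K : ℝ := 1 + 1 / (δ * log 2)
  set W : ℝ := (2 : ℝ) ^ (1 / δ)
  have hK : 1 ≤ K := le_add_of_nonneg_right (by positivity)
  have hlocal : ∀ p ∈ n.primeFactors, (n.factorization p : ℝ) + 1 ≤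
      (if (p : ℝ) < W then K else 1) * ((p : ℝ) ^ n.factorization p) ^ δ := by
    intro p hp
    have hp2 : (2 : ℝ) ≤ p := by exact_mod_cast (Nat.prime_of_mem_primeFactors hp).two_le
    split_ifs with hlt
    · exact add_one_le_mul_pow_rpow hδ hp2 _
    · rw [one_mul]
      exact add_one_le_pow_rpow hδ (not_lt.mp hlt) _
  calc (n.divisors.card : ℝ) = ∏ p ∈ n.primeFactors, ((n.factorization p : ℝ) + 1) := by
        rw [Nat.card_divisors hn]
        push_cast
        rfl
    _ ≤ ∏ p ∈ n.primeFactors,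
          ((if (p : ℝ) < W then K else 1) * ((p : ℝ) ^ n.factorization p) ^ δ) :=
        Finset.prod_le_prod (fun _ _ => by positivity) hlocal
    _ = (∏ p ∈ n.primeFactors, (if (p : ℝ) < W then K else 1)) * (n : ℝ) ^ δ := by
        rw [Finset.prod_mul_distrib, natCast_rpow_eq_prod_primeFactors hn]
    _ ≤ K ^ W * (n : ℝ) ^ δ := by
        gcongr
        exact prod_primeFactors_ite_lt_le hK (by positivity) n

/-! ### Selberg's sieve -/

section Selberg

open scoped ArithmeticFunction.Moebius
open ArithmeticFunction (coe_zeta_mul_moebius coe_zeta_mul_apply one_apply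
  isMultiplicative_moebius abs_moebius_le_one moebius_sq_eq_one_of_squarefree)

lemma divisors_mul_filter_dvd {r t : ℕ} (hr : r ≠ 0) (ht : t ≠ 0) :
    (r * t).divisors.filter (r ∣ ·) = t.divisors.image (r * ·) := by
  ext d
  simp only [Finset.mem_filter, Nat.mem_divisors, Finset.mem_image]
  constructor
  · rintro ⟨⟨hdvd, -⟩, e, rfl⟩
    exact ⟨e, ⟨Nat.dvd_of_mul_dvd_mul_left (Nat.pos_of_ne_zero hr) hdvd, ht⟩, rfl⟩
  · rintro ⟨e, ⟨hdvd, -⟩, rfl⟩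
    exact ⟨⟨mul_dvd_mul_left r hdvd, mul_ne_zero hr ht⟩, dvd_mul_right _ _⟩

lemma sum_divisors_moebius (n : ℕ) : ∑ d ∈ n.divisors, μ d = if n = 1 then 1 else 0 := by
  simpa only [coe_zeta_mul_apply, one_apply] using
    congrArg (fun f : ArithmeticFunction ℤ => f n) coe_zeta_mul_moebius

lemma sum_divisors_filter_dvd_moebius {s : ℕ} (hs : Squarefree s) (r : ℕ) :
    ∑ d ∈ s.divisors with r ∣ d, μ d = if r = s then μ s else 0 := by
  by_cases hr : r ∣ s
  · obtain ⟨t, rfl⟩ := hr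
    have hr0 : r ≠ 0 := left_ne_zero_of_mul hs.ne_zero
    have hmul : ∀ e ∈ t.divisors, μ (r * e) = μ r * μ e := fun e he =>
      isMultiplicative_moebius.map_mul_of_coprime
        ((Nat.coprime_of_squarefree_mul hs).coprime_dvd_right (Nat.dvd_of_mem_divisors he))
    rw [divisors_mul_filter_dvd hr0 (right_ne_zero_of_mul hs.ne_zero),
      Finset.sum_image fun _ _ _ _ h => mul_left_cancel₀ hr0 h, Finset.sum_congr rfl hmul,
      ← Finset.mul_sum, sum_divisors_moebius]
    by_cases ht : t = 1 <;> simp [ht, hr0]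
  · rw [if_neg (by rintro rfl; exact hr dvd_rfl), Finset.sum_eq_zero]
    intro d hd
    rw [Finset.mem_filter, Nat.mem_divisors] at hd
    exact absurd (hd.2.trans hd.1.1) hr

/-- The squarefree numbers up to `N`: the support of the Selberg weights of level `N`. -/
def sqfreeUpTo (N : ℕ) : Finset ℕ := (Finset.Icc 1 N).filter Squarefree

/-- The normalising sum `∑ 1 / φ(r)`, over squarefree `r ≤ N`, of Selberg's sieve. -/
noncomputable def selbergMass (N : ℕ) : ℝ := ∑ r ∈ sqfreeUpTo N, 1 / (r.totient : ℝ)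

/-- Selberg's weights of level `N`, which minimise the quadratic form
`∑ λ(d) λ(e) / lcm(d, e)` subject to `λ(1) = 1`. -/
noncomputable def selbergWeight (N d : ℕ) : ℝ :=
  μ d * d / selbergMass N * ∑ r ∈ sqfreeUpTo N with d ∣ r, 1 / (r.totient : ℝ)

lemma mem_sqfreeUpTo {N d : ℕ} : d ∈ sqfreeUpTo N ↔ (1 ≤ d ∧ d ≤ N) ∧ Squarefree d := by
  rw [sqfreeUpTo, Finset.mem_filter, Finset.mem_Icc]

lemma one_mem_sqfreeUpTo {N : ℕ} (hN : 1 ≤ N) : 1 ∈ sqfreeUpTo N :=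
  mem_sqfreeUpTo.mpr ⟨⟨le_rfl, hN⟩, squarefree_one⟩

lemma sqfreeUpTo_subset_Icc (N : ℕ) : sqfreeUpTo N ⊆ Finset.Icc 1 N := Finset.filter_subset _ _

lemma card_sqfreeUpTo_le (N : ℕ) : (sqfreeUpTo N).card ≤ N := by
  simpa using Finset.card_le_card (sqfreeUpTo_subset_Icc N)

lemma selbergMass_pos {N : ℕ} (hN : 1 ≤ N) : 0 < selbergMass N := by
  refine Finset.sum_pos (fun r hr => ?_) ⟨1, one_mem_sqfreeUpTo hN⟩
  have : 0 < r.totient := Nat.totient_pos.mpr (mem_sqfreeUpTo.mp hr).1.1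
  positivity

lemma selbergWeight_one {N : ℕ} (hN : 1 ≤ N) : selbergWeight N 1 = 1 := by
  have hV := (selbergMass_pos hN).ne'
  simp only [selbergWeight, one_dvd, Finset.filter_true]
  rw [← selbergMass]
  simp [hV]

lemma abs_selbergWeight_le {N : ℕ} (hN : 1 ≤ N) (d : ℕ) : |selbergWeight N d| ≤ d := by
  have hV := selbergMass_pos hN
  have hμ : |(μ d : ℝ)| ≤ 1 := by exact_mod_cast abs_moebius_le_one (n := d)
  have hsum : ∑ r ∈ sqfreeUpTo N with d ∣ r, 1 / (r.totient : ℝ) ≤ selbergMass N :=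
    Finset.sum_le_sum_of_subset_of_nonneg (Finset.filter_subset _ _) fun _ _ _ => by positivity
  have hsum0 : 0 ≤ ∑ r ∈ sqfreeUpTo N with d ∣ r, 1 / (r.totient : ℝ) :=
    Finset.sum_nonneg fun _ _ => by positivity
  rw [selbergWeight, abs_mul, abs_div, abs_mul, abs_of_pos hV, abs_of_nonneg hsum0, Nat.abs_cast,
    div_mul_eq_mul_div, div_le_iff₀ hV]
  gcongr
  exact mul_le_of_le_one_left (by positivity) hμ

lemma selbergWeight_div (N : ℕ) {d : ℕ} (hd : d ≠ 0) :
    selbergWeight N d / d =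
      ∑ s ∈ sqfreeUpTo N, if d ∣ s then 1 / (selbergMass N * s.totient) * (μ d : ℝ) else 0 := by
  rw [selbergWeight, Finset.sum_filter, Finset.mul_sum, Finset.sum_div]
  refine Finset.sum_congr rfl fun s _ => ?_
  split_ifs
  · field_simp
  · simp

lemma sqfreeUpTo_filter_dvd_dvd {N s : ℕ} (hs : s ∈ sqfreeUpTo N) (r : ℕ) :
    (sqfreeUpTo N).filter (fun d => r ∣ d ∧ d ∣ s) = s.divisors.filter (r ∣ ·) := by
  obtain ⟨⟨hs1, hsN⟩, hsq⟩ := mem_sqfreeUpTo.mp hs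
  ext d
  simp only [Finset.mem_filter, mem_sqfreeUpTo, Nat.mem_divisors]
  refine ⟨fun ⟨_, hr, hd⟩ => ⟨⟨hd, hsq.ne_zero⟩, hr⟩, fun ⟨⟨hd, _⟩, hr⟩ => ⟨⟨⟨?_, ?_⟩, ?_⟩, hr, hd⟩⟩
  · exact Nat.pos_of_dvd_of_pos hd hs1
  · exact (Nat.le_of_dvd hs1 hd).trans hsN
  · exact hsq.squarefree_of_dvd hd

lemma sum_filter_dvd_selbergWeight_div (N r : ℕ) :
    ∑ d ∈ sqfreeUpTo N with r ∣ d, selbergWeight N d / d =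
      if r ∈ sqfreeUpTo N then μ r / (selbergMass N * r.totient) else 0 := by
  have hinner : ∀ s ∈ sqfreeUpTo N, ∑ d ∈ sqfreeUpTo N with r ∣ d ∧ d ∣ s,
      1 / (selbergMass N * s.totient) * (μ d : ℝ) =
        if r = s then μ s / (selbergMass N * s.totient) else 0 := by
    intro s hs
    have hμ := sum_divisors_filter_dvd_moebius (mem_sqfreeUpTo.mp hs).2 r
    rw [← Finset.mul_sum, sqfreeUpTo_filter_dvd_dvd hs, ← Int.cast_sum, hμ]
    split_ifs
    · rw [one_div_mul_eq_div]
    · simp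
  calc ∑ d ∈ sqfreeUpTo N with r ∣ d, selbergWeight N d / d
      = ∑ d ∈ sqfreeUpTo N with r ∣ d, ∑ s ∈ sqfreeUpTo N,
          if d ∣ s then 1 / (selbergMass N * s.totient) * (μ d : ℝ) else 0 :=
        Finset.sum_congr rfl fun d hd => selbergWeight_div N
          (mem_sqfreeUpTo.mp (Finset.mem_of_mem_filter d hd)).2.ne_zero
    _ = ∑ s ∈ sqfreeUpTo N, ∑ d ∈ sqfreeUpTo N with r ∣ d ∧ d ∣ s,
          1 / (selbergMass N * s.totient) * (μ d : ℝ) := by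
        rw [Finset.sum_comm]
        refine Finset.sum_congr rfl fun s _ => ?_
        rw [← Finset.sum_filter, Finset.filter_filter]
    _ = ∑ s ∈ sqfreeUpTo N, if r = s then μ s / (selbergMass N * s.totient) else 0 :=
        Finset.sum_congr rfl hinner
    _ = _ := Finset.sum_ite_eq _ _ _

lemma natCast_gcd_eq_sum_totient {N d : ℕ} (hd : 1 ≤ d) (hdN : d ≤ N) (e : ℕ) :
    (d.gcd e : ℝ) = ∑ r ∈ Finset.Icc 1 N with r ∣ d ∧ r ∣ e, (r.totient : ℝ) := by
  have hdiv : (d.gcd e).divisors = (Finset.Icc 1 N).filter fun r => r ∣ d ∧ r ∣ e := by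
    ext r
    simp only [Nat.mem_divisors, Finset.mem_filter, Finset.mem_Icc, Nat.dvd_gcd_iff]
    exact ⟨fun ⟨h, _⟩ => ⟨⟨Nat.pos_of_dvd_of_pos h.1 hd, (Nat.le_of_dvd hd h.1).trans hdN⟩, h⟩,
      fun ⟨_, h⟩ => ⟨h, (Nat.gcd_pos_of_pos_left e hd).ne'⟩⟩
  rw [← hdiv]
  exact_mod_cast (Nat.sum_totient (d.gcd e)).symm

/-- Selberg's diagonalisation, from `d e / lcm(d, e) = gcd(d, e) = ∑ φ(r)` over `r ∣ d, r ∣ e`. -/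
lemma sum_sum_mul_div_lcm {N : ℕ} {S : Finset ℕ} (hS : S ⊆ Finset.Icc 1 N) (w : ℕ → ℝ) :
    ∑ d ∈ S, ∑ e ∈ S, w d * w e / (d.lcm e : ℝ) =
      ∑ r ∈ Finset.Icc 1 N, (r.totient : ℝ) * (∑ d ∈ S with r ∣ d, w d / d) ^ 2 := by
  have hterm : ∀ d ∈ S, ∀ e ∈ S, w d * w e / (d.lcm e : ℝ) =
      ∑ r ∈ Finset.Icc 1 N, (r.totient : ℝ) *
        ((if r ∣ d then w d / d else 0) * (if r ∣ e then w e / e else 0)) := by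
    intro d hd e he
    obtain ⟨hd1, hdN⟩ := Finset.mem_Icc.mp (hS hd)
    obtain ⟨he1, -⟩ := Finset.mem_Icc.mp (hS he)
    have hgcd : (d.gcd e : ℝ) ≠ 0 := by exact_mod_cast (Nat.gcd_pos_of_pos_left e hd1).ne'
    have hlcm : (d.lcm e : ℝ) ≠ 0 := by
      exact_mod_cast Nat.lcm_ne_zero (by omega) (by omega)
    have hmul : (d.gcd e : ℝ) * d.lcm e = d * e := by exact_mod_cast Nat.gcd_mul_lcm d e
    calc w d * w e / (d.lcm e : ℝ) = d.gcd e * (w d / d * (w e / e)) := by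
          rw [div_mul_div_comm, ← hmul]
          field_simp
      _ = _ := by
          rw [natCast_gcd_eq_sum_totient hd1 hdN, Finset.sum_mul, Finset.sum_filter]
          refine Finset.sum_congr rfl fun r _ => ?_
          by_cases hrd : r ∣ d <;> by_cases hre : r ∣ e <;> simp [hrd, hre]
  rw [Finset.sum_congr rfl fun d hd => Finset.sum_congr rfl (hterm d hd),
    Finset.sum_congr rfl fun d _ => Finset.sum_comm, Finset.sum_comm]
  refine Finset.sum_congr rfl fun r _ => ?_
  rw [sq, Finset.sum_filter, Finset.sum_mul_sum, Finset.mul_sum]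
  exact Finset.sum_congr rfl fun d _ => (Finset.mul_sum ..).symm

lemma sum_sum_selbergWeight_div_lcm {N : ℕ} (hN : 1 ≤ N) :
    ∑ d ∈ sqfreeUpTo N, ∑ e ∈ sqfreeUpTo N,
      selbergWeight N d * selbergWeight N e / (d.lcm e : ℝ) = 1 / selbergMass N := by
  have hV := (selbergMass_pos hN).ne'
  have hterm : ∀ r ∈ Finset.Icc 1 N,
      (r.totient : ℝ) * (∑ d ∈ sqfreeUpTo N with r ∣ d, selbergWeight N d / d) ^ 2 =
        if Squarefree r then 1 / selbergMass N ^ 2 * (1 / (r.totient : ℝ)) else 0 := by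
    intro r hr
    rw [sum_filter_dvd_selbergWeight_div]
    by_cases hsq : Squarefree r
    · have hmem : r ∈ sqfreeUpTo N := mem_sqfreeUpTo.mpr ⟨Finset.mem_Icc.mp hr, hsq⟩
      have hφ : (r.totient : ℝ) ≠ 0 := by
        exact_mod_cast (Nat.totient_pos.mpr (Finset.mem_Icc.mp hr).1).ne'
      have hμ : (μ r : ℝ) ^ 2 = 1 := by exact_mod_cast moebius_sq_eq_one_of_squarefree hsq
      rw [if_pos hmem, if_pos hsq, div_pow, hμ]
      field_simp
    · rw [if_neg fun h => hsq (mem_sqfreeUpTo.mp h).2, if_neg hsq]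
      simp
  rw [sum_sum_mul_div_lcm (sqfreeUpTo_subset_Icc N), Finset.sum_congr rfl hterm,
    ← Finset.sum_filter, ← Finset.mul_sum, ← sqfreeUpTo, ← selbergMass]
  field_simp

lemma sum_Icc_inv_sq_le_two (N : ℕ) : ∑ b ∈ Finset.Icc 1 N, ((b : ℝ) ^ 2)⁻¹ ≤ 2 := by
  have hIcc : Finset.Icc 1 N = Finset.Ioo 0 (N + 1) := by ext; simp; omega
  simpa [hIcc] using sum_Ioo_inv_sq_le (α := ℝ) 0 (N + 1)

lemma Icc_subset_image_sq_mul_sqfreeUpTo (N : ℕ) :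
    Finset.Icc 1 N ⊆ (Finset.Icc 1 N ×ˢ sqfreeUpTo N).image fun c => c.1 ^ 2 * c.2 := by
  intro n hn
  obtain ⟨hn1, hnN⟩ := Finset.mem_Icc.mp hn
  obtain ⟨a, b, rfl, ha⟩ := Nat.sq_mul_squarefree n
  have hb0 : b ≠ 0 := by rintro rfl; simp at hn1
  have hb : b ≤ b ^ 2 * a :=
    (Nat.le_self_pow two_ne_zero b).trans (Nat.le_mul_of_pos_right _ ha.ne_zero.bot_lt)
  have ha' : a ≤ b ^ 2 * a := Nat.le_mul_of_pos_left _ (by positivity)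
  refine Finset.mem_image.mpr ⟨(b, a), Finset.mem_product.mpr ⟨?_, ?_⟩, rfl⟩
  · exact Finset.mem_Icc.mpr ⟨Nat.one_le_iff_ne_zero.mpr hb0, hb.trans hnN⟩
  · exact mem_sqfreeUpTo.mpr ⟨⟨ha.ne_zero.bot_lt, ha'.trans hnN⟩, ha⟩

/-- Every `n` is a square times a squarefree number, so `∑ 1 / n ≤ ζ(2) ∑ 1 / a` with `a`
squarefree. -/
lemma log_le_two_mul_selbergMass {R : ℝ} (hR : 0 ≤ R) : log R ≤ 2 * selbergMass ⌊R⌋₊ := by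
  set N := ⌊R⌋₊
  have hmass : ∑ a ∈ sqfreeUpTo N, (a : ℝ)⁻¹ ≤ selbergMass N := by
    refine Finset.sum_le_sum fun a ha => ?_
    have hφ : (0 : ℝ) < a.totient := by
      exact_mod_cast Nat.totient_pos.mpr (mem_sqfreeUpTo.mp ha).1.1
    rw [one_div]
    gcongr
    exact_mod_cast Nat.totient_le a
  calc log R ≤ ∑ n ∈ Finset.Icc 1 N, (n : ℝ)⁻¹ := by
        simpa [harmonic_eq_sum_Icc] using log_le_harmonic_floor R hR
    _ ≤ ∑ n ∈ (Finset.Icc 1 N ×ˢ sqfreeUpTo N).image (fun c : ℕ × ℕ => c.1 ^ 2 * c.2),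
          (n : ℝ)⁻¹ :=
        Finset.sum_le_sum_of_subset_of_nonneg (Icc_subset_image_sq_mul_sqfreeUpTo N)
          fun _ _ _ => by positivity
    _ ≤ ∑ c ∈ Finset.Icc 1 N ×ˢ sqfreeUpTo N, (↑(c.1 ^ 2 * c.2) : ℝ)⁻¹ :=
        Finset.sum_image_le_of_nonneg (f := fun n : ℕ => (n : ℝ)⁻¹) fun _ _ => by positivity
    _ = (∑ b ∈ Finset.Icc 1 N, ((b : ℝ) ^ 2)⁻¹) * ∑ a ∈ sqfreeUpTo N, (a : ℝ)⁻¹ := by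
        simp only [Finset.sum_product, Finset.sum_mul_sum, Nat.cast_mul, Nat.cast_pow, mul_inv]
    _ ≤ 2 * selbergMass N :=
        mul_le_mul (sum_Icc_inv_sq_le_two N) hmass
          (Finset.sum_nonneg fun _ _ => by positivity) zero_le_two

lemma IsRough.sum_ite_dvd_selbergWeight {z : ℝ} {N n : ℕ} (hn : IsRough z n) (hN : 1 ≤ N)
    (hNz : N < z) : ∑ d ∈ sqfreeUpTo N, (if d ∣ n then selbergWeight N d else 0) = 1 := by
  rw [Finset.sum_eq_single 1, if_pos (one_dvd n), selbergWeight_one hN]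
  · intro d hd hd1
    obtain ⟨⟨hd0, hdN⟩, -⟩ := mem_sqfreeUpTo.mp hd
    refine if_neg fun hdn => ?_
    obtain ⟨p, hp, hpd⟩ := Nat.exists_prime_and_dvd hd1
    have hpN : (p : ℝ) ≤ N := by exact_mod_cast (Nat.le_of_dvd hd0 hpd).trans hdN
    linarith [hn p hp (hpd.trans hdn)]
  · exact fun h => absurd (one_mem_sqfreeUpTo hN) h

lemma sum_sq_sum_ite_dvd (I S : Finset ℕ) (w : ℕ → ℝ) :
    ∑ n ∈ I, (∑ d ∈ S, if d ∣ n then w d else 0) ^ 2 =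
      ∑ d ∈ S, ∑ e ∈ S, w d * w e * ((I.filter (d.lcm e ∣ ·)).card : ℝ) := by
  simp_rw [sq, Finset.sum_mul_sum]
  rw [Finset.sum_comm]
  refine Finset.sum_congr rfl fun d _ => ?_
  rw [Finset.sum_comm]
  refine Finset.sum_congr rfl fun e _ => ?_
  rw [← nsmul_eq_mul', ← Finset.sum_const, Finset.sum_filter]
  refine Finset.sum_congr rfl fun n _ => ?_
  by_cases hd : d ∣ n <;> by_cases he : e ∣ n <;> simp [Nat.lcm_dvd_iff, hd, he]

open scoped Classical in
lemma card_filter_isRough_le {I : Finset ℕ} {Y z : ℝ} {N : ℕ}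
    (hI : ∀ m : ℕ, m ≠ 0 → |((I.filter (m ∣ ·)).card : ℝ) - Y / m| ≤ 1)
    (hN : 1 ≤ N) (hNz : N < z) :
    ((I.filter (IsRough z)).card : ℝ) ≤ Y / selbergMass N + N ^ 4 := by
  set w := selbergWeight N
  have hterm : ∀ d ∈ sqfreeUpTo N, ∀ e ∈ sqfreeUpTo N,
      w d * w e * ((I.filter (d.lcm e ∣ ·)).card : ℝ) ≤
        Y * (w d * w e / (d.lcm e : ℝ)) + N * N := by
    intro d hd e he
    obtain ⟨⟨-, hdN⟩, hdsq⟩ := mem_sqfreeUpTo.mp hd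
    obtain ⟨⟨-, heN⟩, hesq⟩ := mem_sqfreeUpTo.mp he
    have hcard := hI (d.lcm e) (Nat.lcm_ne_zero hdsq.ne_zero hesq.ne_zero)
    set c := ((I.filter (d.lcm e ∣ ·)).card : ℝ)
    have hwd : |w d| ≤ N := (abs_selbergWeight_le hN d).trans (by exact_mod_cast hdN)
    have hwe : |w e| ≤ N := (abs_selbergWeight_le hN e).trans (by exact_mod_cast heN)
    have herr : w d * w e * (c - Y / (d.lcm e : ℝ)) ≤ N * N := by
      refine (le_abs_self _).trans ?_
      rw [abs_mul, abs_mul, ← mul_one ((N : ℝ) * N)]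
      gcongr
    calc w d * w e * c = Y * (w d * w e / (d.lcm e : ℝ)) +
          w d * w e * (c - Y / (d.lcm e : ℝ)) := by ring
      _ ≤ _ := by gcongr
  calc ((I.filter (IsRough z)).card : ℝ) = ∑ n ∈ I, if IsRough z n then (1 : ℝ) else 0 :=
        (Finset.sum_boole _ _).symm
    _ ≤ ∑ n ∈ I, (∑ d ∈ sqfreeUpTo N, if d ∣ n then w d else 0) ^ 2 := by
        refine Finset.sum_le_sum fun n _ => ?_
        split_ifs with hn
        · rw [hn.sum_ite_dvd_selbergWeight hN hNz, one_pow]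
        · positivity
    _ ≤ ∑ d ∈ sqfreeUpTo N, ∑ e ∈ sqfreeUpTo N,
          (Y * (w d * w e / (d.lcm e : ℝ)) + N * N) := by
        rw [sum_sq_sum_ite_dvd]
        exact Finset.sum_le_sum fun d hd => Finset.sum_le_sum fun e he => hterm d hd e he
    _ = Y / selbergMass N + ((sqfreeUpTo N).card * (sqfreeUpTo N).card) * (N * N) := by
        simp_rw [Finset.sum_add_distrib, ← Finset.mul_sum, Finset.sum_const, nsmul_eq_mul]
        rw [sum_sum_selbergWeight_div_lcm hN]
        ring
    _ ≤ Y / selbergMass N + N * N * (N * N) := by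
        have hcard : ((sqfreeUpTo N).card : ℝ) ≤ N := by exact_mod_cast card_sqfreeUpTo_le N
        gcongr
    _ = Y / selbergMass N + N ^ 4 := by ring

/-- The integers in `(u, u + Y]`, for `0 ≤ u`. -/
noncomputable def intervalNat (u Y : ℝ) : Finset ℕ := Finset.Ioc ⌊u⌋₊ ⌊u + Y⌋₊

lemma mem_intervalNat {u Y : ℝ} (hu : 0 ≤ u) (hY : 0 ≤ Y) {n : ℕ} :
    n ∈ intervalNat u Y ↔ u < n ∧ (n : ℝ) ≤ u + Y := by
  rw [intervalNat, Finset.mem_Ioc, Nat.floor_lt hu, Nat.le_floor_iff (by positivity)]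

lemma pos_of_mem_intervalNat {u Y : ℝ} {n : ℕ} (hn : n ∈ intervalNat u Y) : 0 < n :=
  (Nat.zero_le _).trans_lt (Finset.mem_Ioc.mp hn).1

lemma le_of_mem_intervalNat {u Y : ℝ} {n : ℕ} (hn : n ∈ intervalNat u Y) : (n : ℝ) ≤ u + Y :=
  (Nat.le_floor_iff' (pos_of_mem_intervalNat hn).ne').mp (Finset.mem_Ioc.mp hn).2

lemma abs_card_filter_dvd_intervalNat_sub_le {u Y : ℝ} (hu : 0 ≤ u) (hY : 0 ≤ Y) (m : ℕ) :
    |(((intervalNat u Y).filter (m ∣ ·)).card : ℝ) - Y / m| ≤ 1 := by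
  have hdisj : Disjoint ((Finset.Ioc 0 ⌊u⌋₊).filter (m ∣ ·))
      ((intervalNat u Y).filter (m ∣ ·)) :=
    Finset.disjoint_filter_filter (Finset.Ioc_disjoint_Ioc_of_le le_rfl)
  have hfloor : ⌊(u + Y) / m⌋₊ = ⌊u / m⌋₊ + ((intervalNat u Y).filter (m ∣ ·)).card := by
    rw [Nat.floor_div_natCast, Nat.floor_div_natCast, ← Nat.Ioc_filter_dvd_card_eq_div,
      ← Nat.Ioc_filter_dvd_card_eq_div, ← Finset.card_union_of_disjoint hdisj,
      ← Finset.filter_union, intervalNat, Finset.Ioc_union_Ioc_eq_Ioc (Nat.zero_le _)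
      (Nat.floor_le_floor (by linarith))]
  have hfloor' := congrArg (Nat.cast : ℕ → ℝ) hfloor
  push_cast at hfloor'
  have hlow := Nat.floor_le (show 0 ≤ (u + Y) / m by positivity)
  have hup := Nat.lt_floor_add_one ((u + Y) / m)
  rw [add_div] at hlow hup hfloor'
  rw [abs_le]
  constructor <;>
    linarith [Nat.floor_le (show 0 ≤ u / m by positivity), Nat.lt_floor_add_one (u / m)]

open scoped Classical in
lemma card_isRough_intervalNat_le {u Y z : ℝ} (hu : 0 ≤ u) (hz : 2 ≤ z)
    (hY : z ^ 2 * log z ≤ Y) :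
    (((intervalNat u Y).filter (IsRough z)).card : ℝ) ≤ 5 * Y / log z := by
  have hlz : 0 < log z := log_pos (by linarith)
  have hY0 : 0 ≤ Y := le_trans (by positivity) hY
  have hsq : √z ^ 2 = z := sq_sqrt (by linarith)
  have hsqrt1 : 1 ≤ √z := one_le_sqrt.mpr (by linarith)
  have hN : 1 ≤ ⌊√z⌋₊ := Nat.le_floor (by simpa using hsqrt1)
  have hNz : (⌊√z⌋₊ : ℝ) ≤ √z := Nat.floor_le (sqrt_nonneg z)
  have hmass : log z / 4 ≤ selbergMass ⌊√z⌋₊ := by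
    linarith [log_le_two_mul_selbergMass (sqrt_nonneg z), log_sqrt (show 0 ≤ z by linarith)]
  calc (((intervalNat u Y).filter (IsRough z)).card : ℝ)
      ≤ Y / selbergMass ⌊√z⌋₊ + (⌊√z⌋₊ : ℝ) ^ 4 :=
        card_filter_isRough_le (fun m _ => abs_card_filter_dvd_intervalNat_sub_le hu hY0 m) hN
          (by nlinarith)
    _ ≤ Y / (log z / 4) + √z ^ 4 := by gcongr
    _ = 4 * Y / log z + z ^ 2 := by
        rw [show √z ^ 4 = (√z ^ 2) ^ 2 by ring, hsq]
        field_simp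
    _ ≤ 4 * Y / log z + Y / log z := by
        gcongr
        rwa [le_div_iff₀ hlz]
    _ = 5 * Y / log z := by ring

end Selberg

/-! ### The zeta function near the line `Re s = 1` -/

section ZetaIntegral

open MeasureTheory Set

/-- The integral `∫₁^∞ {t} t^{-s-1} dt`, which carries the regular part of `ζ(s)` near `s = 1`. -/
noncomputable def fractIntegral (s : ℂ) : ℂ :=
  ∫ t in Ioi (1 : ℝ), ((Int.fract t : ℝ) : ℂ) * (t : ℂ) ^ (-(s + 1))

lemma integrableOn_Ioi_one_rpow {a : ℝ} (ha : 0 < a) :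
    IntegrableOn (fun t : ℝ => t ^ (-a - 1)) (Ioi 1) :=
  integrableOn_Ioi_rpow_of_lt (by linarith) one_pos

lemma integral_Ioi_one_rpow {a : ℝ} (ha : 0 < a) : ∫ t in Ioi (1 : ℝ), t ^ (-a - 1) = 1 / a := by
  rw [integral_Ioi_rpow_of_lt (by linarith) one_pos, one_rpow, sub_add_cancel, neg_div_neg_eq]

lemma norm_fract_mul_cpow_le (s : ℂ) {t : ℝ} (ht : 0 < t) :
    ‖((Int.fract t : ℝ) : ℂ) * (t : ℂ) ^ (-(s + 1))‖ ≤ t ^ (-s.re - 1) := by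
  have hre : (-(s + 1)).re = -s.re - 1 := by simp; ring
  rw [norm_mul, Complex.norm_cpow_eq_rpow_re_of_pos ht, Complex.norm_real,
    norm_of_nonneg (Int.fract_nonneg t), hre]
  exact mul_le_of_le_one_left (by positivity) (Int.fract_lt_one t).le

lemma integrableOn_fract_mul_cpow {s : ℂ} (hs : 0 < s.re) :
    IntegrableOn (fun t : ℝ => ((Int.fract t : ℝ) : ℂ) * (t : ℂ) ^ (-(s + 1))) (Ioi 1) := by
  refine (integrableOn_Ioi_one_rpow hs).mono' (.mul ?_ ?_) ?_
  · exact (Complex.measurable_ofReal.comp measurable_fract).aestronglyMeasurable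
  · exact (Complex.measurable_ofReal.pow_const _).aestronglyMeasurable
  · filter_upwards [ae_restrict_mem measurableSet_Ioi] with t ht
    exact norm_fract_mul_cpow_le s (one_pos.trans ht)

lemma norm_fractIntegral_le {s : ℂ} (hs : 0 < s.re) : ‖fractIntegral s‖ ≤ 1 / s.re := by
  rw [← integral_Ioi_one_rpow hs]
  refine norm_integral_le_of_norm_le (integrableOn_Ioi_one_rpow hs) ?_
  filter_upwards [ae_restrict_mem measurableSet_Ioi] with t ht
  exact norm_fract_mul_cpow_le s (one_pos.trans ht)

lemma norm_fractIntegral_le_one {s : ℂ} (hs : 1 ≤ s.re) : ‖fractIntegral s‖ ≤ 1 :=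
  (norm_fractIntegral_le (by linarith)).trans ((div_le_one (by linarith)).mpr hs)

lemma norm_fract_mul_cpow_sub_le {s s' : ℂ} (him : s.im = s'.im) (hre : s.re ≤ s'.re) {t : ℝ}
    (ht : 1 ≤ t) :
    ‖((Int.fract t : ℝ) : ℂ) * (t : ℂ) ^ (-(s + 1)) -
        ((Int.fract t : ℝ) : ℂ) * (t : ℂ) ^ (-(s' + 1))‖ ≤
      t ^ (-s.re - 1) - t ^ (-s'.re - 1) := by
  have ht0 : 0 < t := one_pos.trans_le ht
  have hpolar : ∀ z : ℂ, (t : ℂ) ^ (-(z + 1)) =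
      (t ^ (-z.re - 1) : ℝ) * (t : ℂ) ^ (-(z.im * Complex.I)) := by
    intro z
    rw [Complex.ofReal_cpow ht0.le, ← Complex.cpow_add _ _ (by exact_mod_cast ht0.ne')]
    congr 1
    conv_lhs => rw [← Complex.re_add_im z]
    push_cast
    ring
  have hunit : ‖(t : ℂ) ^ (-(s'.im * Complex.I))‖ = 1 := by
    rw [Complex.norm_cpow_eq_rpow_re_of_pos ht0]
    simp
  have hle : t ^ (-s'.re - 1) ≤ t ^ (-s.re - 1) := rpow_le_rpow_of_exponent_le ht (by linarith)
  rw [hpolar, hpolar, him, ← mul_sub, ← sub_mul, norm_mul, norm_mul, hunit, mul_one,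
    ← Complex.ofReal_sub, Complex.norm_real, Complex.norm_real,
    norm_of_nonneg (Int.fract_nonneg t), norm_of_nonneg (sub_nonneg.mpr hle)]
  exact mul_le_of_le_one_left (sub_nonneg.mpr hle) (Int.fract_lt_one t).le

lemma norm_fractIntegral_sub_le {s s' : ℂ} (him : s.im = s'.im) (hs : 1 ≤ s.re)
    (hre : s.re ≤ s'.re) : ‖fractIntegral s - fractIntegral s'‖ ≤ s'.re - s.re := by
  have h0 : 0 < s.re := by linarith
  have h0' : 0 < s'.re := by linarith
  have hint := integrableOn_Ioi_one_rpow h0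
  have hint' := integrableOn_Ioi_one_rpow h0'
  calc ‖fractIntegral s - fractIntegral s'‖
      ≤ ∫ t in Ioi (1 : ℝ), (t ^ (-s.re - 1) - t ^ (-s'.re - 1)) := by
        rw [fractIntegral, fractIntegral, ← integral_sub (integrableOn_fract_mul_cpow h0)
          (integrableOn_fract_mul_cpow h0')]
        refine norm_integral_le_of_norm_le (hint.sub hint') ?_
        filter_upwards [ae_restrict_mem measurableSet_Ioi] with t ht
        exact norm_fract_mul_cpow_sub_le him hre (le_of_lt ht)
    _ = (s'.re - s.re) / (s.re * s'.re) := by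
        rw [integral_sub hint hint', integral_Ioi_one_rpow h0, integral_Ioi_one_rpow h0']
        field_simp
    _ ≤ s'.re - s.re := div_le_self (by linarith) (by nlinarith)

lemma floor_mul_cpow_eq (s : ℂ) {t : ℝ} (ht : 0 < t) :
    (⌊t⌋₊ : ℂ) * (t : ℂ) ^ (-(s + 1)) =
      (t : ℂ) ^ (-s) - ((Int.fract t : ℝ) : ℂ) * (t : ℂ) ^ (-(s + 1)) := by
  have hne : (t : ℂ) ≠ 0 := by exact_mod_cast ht.ne'
  have hpow : (t : ℂ) ^ (-s) = t * (t : ℂ) ^ (-(s + 1)) := by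
    rw [show -s = 1 + -(s + 1) by ring, Complex.cpow_add _ _ hne, Complex.cpow_one]
  have hfloor : (⌊t⌋₊ : ℝ) = t - Int.fract t := by
    rw [natCast_floor_eq_intCast_floor ht.le, Int.self_sub_fract]
  have hfloor' : (⌊t⌋₊ : ℂ) = t - Int.fract t := by exact_mod_cast congrArg Complex.ofReal hfloor
  rw [hpow, hfloor']
  ring

lemma riemannZeta_eq_fractIntegral {s : ℂ} (hs : 1 < s.re) :
    riemannZeta s = s / (s - 1) - s * fractIntegral s := by
  have hL := LSeries_eq_mul_integral_of_nonneg (fun _ => 1) zero_le_one hs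
    (by simpa using Asymptotics.isBigO_refl _ _) (fun _ => zero_le_one)
  have hζ : LSeries (fun _ => ((1 : ℝ) : ℂ)) s = riemannZeta s := by
    rw [← LSeries_one_eq_riemannZeta hs]
    congr 1
  have hpow : ∫ t in Ioi (1 : ℝ), (t : ℂ) ^ (-s) = 1 / (s - 1) := by
    rw [integral_Ioi_cpow_of_lt (by simpa using hs) one_pos, Complex.ofReal_one, Complex.one_cpow,
      show -s + 1 = -(s - 1) by ring, neg_div_neg_eq]
  have hsum : ∫ t in Ioi (1 : ℝ), (∑ _k ∈ Finset.Icc 1 ⌊t⌋₊, ((1 : ℝ) : ℂ)) * (t : ℂ) ^ (-(s + 1)) =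
      ∫ t in Ioi (1 : ℝ), ((t : ℂ) ^ (-s) - ((Int.fract t : ℝ) : ℂ) * (t : ℂ) ^ (-(s + 1))) := by
    refine setIntegral_congr_fun measurableSet_Ioi fun t ht => ?_
    simpa using floor_mul_cpow_eq s (one_pos.trans ht)
  rw [← hζ, hL, hsum, integral_sub (integrableOn_Ioi_cpow_of_lt (by simpa using hs) one_pos)
    (integrableOn_fract_mul_cpow (by linarith)), hpow, fractIntegral]
  ring

lemma norm_zeta_product_ge_one {s : ℂ} (hs : 1 < s.re) :
    1 ≤ ‖riemannZeta s.re‖ ^ 3 * ‖riemannZeta s‖ ^ 4 * ‖riemannZeta ⟨s.re, 2 * s.im⟩‖ := by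
  have h := DirichletCharacter.norm_LFunction_product_ge_one (N := 1) 1 (sub_pos.mpr hs) s.im
  have hs1 : (1 : ℂ) + ((s.re - 1 : ℝ) : ℂ) = s.re := by push_cast; ring
  have hs2 : (⟨s.re, 2 * s.im⟩ : ℂ) = s.re + 2 * Complex.I * s.im := by
    rw [Complex.mk_eq_add_mul_I]
    push_cast
    ring
  rw [DirichletCharacter.LFunctionTrivChar, hs1, ← hs2, mul_comm Complex.I,
    Complex.re_add_im] at h
  simpa [DirichletCharacter.LFunction_modOne_eq, norm_mul, norm_pow] using h

end ZetaIntegral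

lemma sub_one_ne_zero_of_one_lt_re {s : ℂ} (hs : 1 < s.re) : s - 1 ≠ 0 :=
  sub_ne_zero.mpr fun h => by simp [h] at hs

lemma norm_le_two_add_abs_im {s : ℂ} (hs : 0 ≤ s.re) (hs2 : s.re ≤ 2) : ‖s‖ ≤ 2 + |s.im| := by
  have := Complex.norm_le_abs_re_add_abs_im s
  rw [abs_of_nonneg hs] at this
  linarith

lemma norm_sub_one_le {s : ℂ} (hs : 1 ≤ s.re) : ‖s - 1‖ ≤ s.re - 1 + |s.im| := by
  simpa [abs_of_nonneg (sub_nonneg.mpr hs)] using Complex.norm_le_abs_re_add_abs_im (s - 1)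

lemma abs_im_le_norm_sub_one (s : ℂ) : |s.im| ≤ ‖s - 1‖ := by
  simpa using Complex.abs_im_le_norm (s - 1)

lemma sub_one_mul_riemannZeta {s : ℂ} (hs : 1 < s.re) :
    (s - 1) * riemannZeta s = s - (s - 1) * (s * fractIntegral s) := by
  rw [riemannZeta_eq_fractIntegral hs]
  have := sub_one_ne_zero_of_one_lt_re hs
  field_simp

lemma norm_sub_one_mul_riemannZeta_le_mul {s : ℂ} (hs : 1 < s.re) :
    ‖(s - 1) * riemannZeta s‖ ≤ ‖s‖ * (1 + ‖s - 1‖) := by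
  rw [sub_one_mul_riemannZeta hs]
  calc ‖s - (s - 1) * (s * fractIntegral s)‖
      ≤ ‖s‖ + ‖s - 1‖ * (‖s‖ * 1) := by
        refine (norm_sub_le _ _).trans ?_
        rw [norm_mul, norm_mul]
        gcongr
        exact norm_fractIntegral_le_one hs.le
    _ = ‖s‖ * (1 + ‖s - 1‖) := by ring

lemma norm_sub_one_mul_riemannZeta_le {s : ℂ} (hs : 1 < s.re) (hs2 : s.re ≤ 2) :
    ‖(s - 1) * riemannZeta s‖ ≤ (|s.im| + 2) ^ 2 := by
  have h1 := norm_le_two_add_abs_im (by linarith) hs2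
  have h2 : 1 + ‖s - 1‖ ≤ 2 + |s.im| := by linarith [norm_sub_one_le hs.le]
  calc ‖(s - 1) * riemannZeta s‖ ≤ ‖s‖ * (1 + ‖s - 1‖) := norm_sub_one_mul_riemannZeta_le_mul hs
    _ ≤ (2 + |s.im|) * (2 + |s.im|) := by gcongr
    _ = (|s.im| + 2) ^ 2 := by ring

lemma norm_riemannZeta_ofReal_le {σ : ℝ} (hσ : 1 < σ) (hσ2 : σ ≤ 2) :
    ‖riemannZeta σ‖ ≤ 4 / (σ - 1) := by
  have h := norm_sub_one_mul_riemannZeta_le (s := (σ : ℂ)) (by simpa using hσ) (by simpa using hσ2)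
  have hnorm : ‖(σ : ℂ) - 1‖ = σ - 1 := by
    rw [← Complex.ofReal_one, ← Complex.ofReal_sub, Complex.norm_real,
      norm_of_nonneg (by linarith)]
  rw [norm_mul, hnorm, Complex.ofReal_im, abs_zero] at h
  rw [le_div_iff₀ (by linarith)]
  linarith

lemma half_le_norm_sub_one_mul_riemannZeta {s : ℂ} (hs : 1 < s.re) (h : ‖s - 1‖ ≤ 1 / 8) :
    1 / 2 ≤ ‖(s - 1) * riemannZeta s‖ := by
  have hnorm : ‖s‖ ≤ 9 / 8 := by
    have := norm_add_le (s - 1) 1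
    rw [sub_add_cancel, norm_one] at this
    linarith
  have hsmall : ‖(s - 1) * (1 - s * fractIntegral s)‖ ≤ 1 / 8 * (1 + 9 / 8 * 1) := by
    rw [norm_mul]
    gcongr
    refine (norm_sub_le _ _).trans ?_
    rw [norm_one, norm_mul]
    gcongr
    exact norm_fractIntegral_le_one hs.le
  have hsplit : (s - 1) * riemannZeta s = 1 + (s - 1) * (1 - s * fractIntegral s) := by
    rw [sub_one_mul_riemannZeta hs]
    ring
  have htri := norm_sub_le (1 + (s - 1) * (1 - s * fractIntegral s))
    ((s - 1) * (1 - s * fractIntegral s))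
  rw [add_sub_cancel_right, norm_one] at htri
  rw [hsplit]
  linarith

lemma norm_riemannZeta_sub_le {s s' : ℂ} (him : s.im = s'.im) (hs : 1 < s.re)
    (hre : s.re ≤ s'.re) (hs' : s'.re ≤ 2) (ht : 1 / 16 ≤ |s.im|) :
    ‖riemannZeta s - riemannZeta s'‖ ≤ (s'.re - s.re) * (87 * (|s.im| + 3)) := by
  have hs1 : 1 < s'.re := hs.trans_le hre
  have hd : ‖s - s'‖ = s'.re - s.re := by
    rw [show s - s' = ((s.re - s'.re : ℝ) : ℂ) by apply Complex.ext <;> simp [him],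
      Complex.norm_real, norm_eq_abs, abs_sub_comm, abs_of_nonneg (by linarith)]
  have hd0 : 0 ≤ s'.re - s.re := sub_nonneg.mpr hre
  have hinv : ∀ z : ℂ, 1 / 16 ≤ |z.im| → ‖(z - 1)⁻¹‖ ≤ 16 := fun z hz => by
    rw [norm_inv, inv_le_comm₀ (by linarith [abs_im_le_norm_sub_one z]) (by norm_num)]
    linarith [abs_im_le_norm_sub_one z]
  have hpole : ‖(s - s') * ((s - 1)⁻¹ * (s' - 1)⁻¹)‖ ≤ (s'.re - s.re) * (16 * 16) := by
    rw [norm_mul, hd, norm_mul]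
    gcongr
    exacts [hinv s ht, hinv s' (him ▸ ht)]
  have hreg : ‖(s - s') * fractIntegral s + s' * (fractIntegral s - fractIntegral s')‖ ≤
      (s'.re - s.re) * 1 + (2 + |s.im|) * (s'.re - s.re) := by
    refine (norm_add_le _ _).trans ?_
    rw [norm_mul, norm_mul, hd]
    gcongr
    · exact norm_fractIntegral_le_one hs.le
    · exact him ▸ norm_le_two_add_abs_im (by linarith) hs'
    · exact norm_fractIntegral_sub_le him hs.le hre
  have hsplit : riemannZeta s - riemannZeta s' =
      -((s - s') * ((s - 1)⁻¹ * (s' - 1)⁻¹)) -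
        ((s - s') * fractIntegral s + s' * (fractIntegral s - fractIntegral s')) := by
    have := sub_one_ne_zero_of_one_lt_re hs
    have := sub_one_ne_zero_of_one_lt_re hs1
    rw [riemannZeta_eq_fractIntegral hs, riemannZeta_eq_fractIntegral hs1]
    field_simp
    ring
  have htri := norm_sub_le (-((s - s') * ((s - 1)⁻¹ * (s' - 1)⁻¹)))
    ((s - s') * fractIntegral s + s' * (fractIntegral s - fractIntegral s'))
  rw [← hsplit, norm_neg] at htri
  nlinarith [mul_nonneg hd0 (abs_nonneg s.im)]

lemma sub_one_cube_le_mul_norm_riemannZeta_pow {s : ℂ} (hs : 1 < s.re) (hs2 : s.re ≤ 2)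
    {M : ℝ} (hM : ‖riemannZeta ⟨s.re, 2 * s.im⟩‖ ≤ M) :
    (s.re - 1) ^ 3 ≤ 64 * M * ‖riemannZeta s‖ ^ 4 := by
  have : 0 < s.re - 1 := by linarith
  have h : 1 ≤ 64 * M * ‖riemannZeta s‖ ^ 4 / (s.re - 1) ^ 3 :=
    calc 1 ≤ ‖riemannZeta s.re‖ ^ 3 * ‖riemannZeta s‖ ^ 4 * ‖riemannZeta ⟨s.re, 2 * s.im⟩‖ :=
          norm_zeta_product_ge_one hs
      _ ≤ (4 / (s.re - 1)) ^ 3 * ‖riemannZeta s‖ ^ 4 * M := by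
          gcongr
          exact norm_riemannZeta_ofReal_le hs hs2
      _ = 64 * M * ‖riemannZeta s‖ ^ 4 / (s.re - 1) ^ 3 := by rw [div_pow]; ring
  rwa [le_div_iff₀ (by positivity), one_mul] at h

/-- The constant in the lower bound for `ζ` near the line `Re s = 1`. -/
def zetaConst : ℝ := 4096 * 174 ^ 4

lemma zetaConst_pos : 0 < zetaConst := by unfold zetaConst; norm_num

lemma mul_le_norm_riemannZeta_of_le {s : ℂ} (hs : 1 < s.re) (hs2 : s.re ≤ 2)
    (h : 1 / 16 ≤ ‖(⟨s.re, 2 * s.im⟩ : ℂ) - 1‖) {η : ℝ} (hη0 : 0 ≤ η) (hηs : η ≤ s.re - 1)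
    (hη : η * (zetaConst * (|s.im| + 3) ^ 6) ≤ 1) :
    174 * η * (|s.im| + 3) ≤ ‖riemannZeta s‖ := by
  set V := |s.im| + 3
  have : 0 < V := by positivity
  have hM : ‖riemannZeta ⟨s.re, 2 * s.im⟩‖ ≤ 64 * V ^ 2 := by
    have hmul : ‖(⟨s.re, 2 * s.im⟩ : ℂ) - 1‖ * ‖riemannZeta ⟨s.re, 2 * s.im⟩‖ ≤
        (2 * |s.im| + 2) ^ 2 := by
      simpa [abs_mul] using norm_sub_one_mul_riemannZeta_le (s := ⟨s.re, 2 * s.im⟩) hs hs2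
    have hle : (2 * |s.im| + 2) ^ 2 ≤ (2 * V) ^ 2 := by
      gcongr
      linarith
    nlinarith [norm_nonneg (riemannZeta ⟨s.re, 2 * s.im⟩)]
  have hpow : 4096 * V ^ 2 * (174 * η * V) ^ 4 ≤ 4096 * V ^ 2 * ‖riemannZeta s‖ ^ 4 :=
    calc 4096 * V ^ 2 * (174 * η * V) ^ 4 = η ^ 3 * (η * (zetaConst * V ^ 6)) := by
          unfold zetaConst; ring
      _ ≤ η ^ 3 * 1 := by gcongr
      _ ≤ (s.re - 1) ^ 3 * 1 := by gcongr
      _ = (s.re - 1) ^ 3 := mul_one _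
      _ ≤ 64 * (64 * V ^ 2) * ‖riemannZeta s‖ ^ 4 :=
          sub_one_cube_le_mul_norm_riemannZeta_pow hs hs2 hM
      _ = 4096 * V ^ 2 * ‖riemannZeta s‖ ^ 4 := by ring
  exact le_of_pow_le_pow_left₀ four_ne_zero (norm_nonneg _)
    (le_of_mul_le_mul_left hpow (by positivity))

lemma inv_sixteen_le_norm_double_sub_one {s : ℂ} (hs : 1 < s.re) (h : 1 / 8 < ‖s - 1‖) {σ : ℝ}
    (hσ : s.re ≤ σ) : 1 / 16 ≤ ‖(⟨σ, 2 * s.im⟩ : ℂ) - 1‖ := by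
  have hnorm := norm_sub_one_le hs.le
  rcases lt_or_ge |s.im| (1 / 16) with ht | ht
  · have hre : σ - 1 ≤ ‖(⟨σ, 2 * s.im⟩ : ℂ) - 1‖ := by
      simpa using Complex.re_le_norm ((⟨σ, 2 * s.im⟩ : ℂ) - 1)
    linarith
  · have him := abs_im_le_norm_sub_one ⟨σ, 2 * s.im⟩
    rw [abs_mul, abs_two] at him
    linarith

lemma sixteen_le_zetaConst_mul {V : ℝ} (hV : 3 ≤ V) : 16 ≤ zetaConst * V ^ 6 := by
  have hc : (16 : ℝ) ≤ zetaConst := by unfold zetaConst; norm_num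
  nlinarith [one_le_pow₀ (n := 6) (by linarith : 1 ≤ V)]

/-- The 3-4-1 inequality bounds `ζ` below to the right of `1 + η`; the Lipschitz bound for `ζ`
carries this over to the strip `1 < Re s < 1 + η`. -/
lemma inv_le_norm_riemannZeta {s : ℂ} (hs : 1 < s.re) (hs2 : s.re ≤ 2) (h : 1 / 8 < ‖s - 1‖) :
    1 / (zetaConst * (|s.im| + 3) ^ 6) ≤ ‖riemannZeta s‖ := by
  set V := |s.im| + 3 with hV
  have hV3 : 3 ≤ V := by linarith [abs_nonneg s.im]
  have hc := sixteen_le_zetaConst_mul hV3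
  set η := 1 / (zetaConst * V ^ 6) with hη
  have hη0 : 0 < η := by positivity
  have hη1 : η * (zetaConst * V ^ 6) ≤ 1 := by rw [hη, one_div_mul_cancel (by linarith)]
  have hη16 : η ≤ 1 / 16 := one_div_le_one_div_of_le (by norm_num) hc
  rcases le_or_gt η (s.re - 1) with hcase | hcase
  · have := mul_le_norm_riemannZeta_of_le hs hs2
      (inv_sixteen_le_norm_double_sub_one hs h le_rfl) hη0.le hcase hη1
    rw [← hV] at this
    nlinarith
  · have ht : 1 / 16 ≤ |s.im| := by linarith [norm_sub_one_le hs.le]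
    have hle : s.re ≤ 1 + η := by linarith
    have hright := mul_le_norm_riemannZeta_of_le (s := ⟨1 + η, s.im⟩) (by simpa using hη0)
      (by dsimp only; linarith) (inv_sixteen_le_norm_double_sub_one hs h hle) hη0.le
      (by simp) hη1
    have hlip := norm_riemannZeta_sub_le (s := s) (s' := ⟨1 + η, s.im⟩) rfl hs hle
      (by dsimp only; linarith) ht
    have htri := norm_sub_norm_le (riemannZeta ⟨1 + η, s.im⟩) (riemannZeta s)
    have hdist : (1 + η - s.re) * (87 * V) ≤ η * (87 * V) := by gcongr; linarith
    rw [norm_sub_rev] at htri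
    dsimp only at hright hlip
    rw [← hV] at hright hlip
    nlinarith

lemma inv_le_norm_sub_one_mul_riemannZeta {s : ℂ} (hs : 1 < s.re) (hs2 : s.re ≤ 2) :
    1 / (16 * (zetaConst * (|s.im| + 3) ^ 6)) ≤ ‖(s - 1) * riemannZeta s‖ := by
  have hc := sixteen_le_zetaConst_mul (V := |s.im| + 3) (by linarith [abs_nonneg s.im])
  rcases le_or_gt ‖s - 1‖ (1 / 8) with h8 | h8
  · refine le_trans ?_ (half_le_norm_sub_one_mul_riemannZeta hs h8)
    exact one_div_le_one_div_of_le (by norm_num) (by linarith)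
  · rw [norm_mul, ← one_div_mul_one_div]
    gcongr
    · linarith
    · exact inv_le_norm_riemannZeta hs hs2 h8

lemma abs_log_norm_sub_one_mul_riemannZeta_le {s : ℂ} (hs : 1 < s.re) (hs2 : s.re ≤ 2) :
    |log ‖(s - 1) * riemannZeta s‖| ≤ 36 + 6 * log (|s.im| + 3) := by
  set V := |s.im| + 3
  have hV3 : 3 ≤ V := by linarith [abs_nonneg s.im]
  have hlogV : 0 ≤ log V := log_nonneg (by linarith)
  have hc := zetaConst_pos
  have hlow := inv_le_norm_sub_one_mul_riemannZeta hs hs2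
  have hpos : 0 < ‖(s - 1) * riemannZeta s‖ := lt_of_lt_of_le (by positivity) hlow
  have hup : log ‖(s - 1) * riemannZeta s‖ ≤ 2 * log V := by
    rw [← log_rpow (by linarith), rpow_two]
    refine log_le_log hpos ((norm_sub_one_mul_riemannZeta_le hs hs2).trans ?_)
    gcongr
    linarith
  have hlogc : log (16 * zetaConst) ≤ 36 := by
    have hle : 16 * zetaConst ≤ 2 ^ 50 := by unfold zetaConst; norm_num
    have := log_le_log (by positivity) hle
    rw [log_pow] at this
    push_cast at this
    linarith [log_two_lt_d9]
  have hlow' := log_le_log (by positivity) hlow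
  rw [one_div, log_inv, ← mul_assoc, log_mul (by positivity) (by positivity), log_pow] at hlow'
  push_cast at hlow'
  rw [abs_le]
  constructor <;> linarith

/-! ### Sums of `cos (t log p)` over primes -/

/-- The sum `∑ₚ cos (t log p) p^{-1-ε}` over primes, which is `log |ζ(1 + ε + it)|` up to a bounded
error. -/
noncomputable def primeCosSum (ε t : ℝ) : ℝ :=
  ∑' p : Nat.Primes, cos (t * log p) * (p : ℝ) ^ (-(1 + ε))

lemma summable_primes_rpow {ε : ℝ} (hε : 0 < ε) :
    Summable fun p : Nat.Primes => (p : ℝ) ^ (-(1 + ε)) :=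
  Nat.Primes.summable_rpow.mpr (by linarith)

lemma summable_mul_primes_rpow {ε : ℝ} (hε : 0 < ε) {g : Nat.Primes → ℝ} {M : ℝ}
    (hg : ∀ p, |g p| ≤ M) :
    Summable fun p : Nat.Primes => g p * (p : ℝ) ^ (-(1 + ε)) := by
  refine Summable.of_norm_bounded ((summable_primes_rpow hε).mul_left M) fun p => ?_
  rw [norm_eq_abs, abs_mul, abs_of_nonneg (by positivity : 0 ≤ (p : ℝ) ^ (-(1 + ε)))]
  exact mul_le_mul_of_nonneg_right (hg p) (by positivity)

lemma summable_primes_inv_sq : Summable fun p : Nat.Primes => 1 / (p : ℝ) ^ 2 :=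
  hasSum_zeta_two.summable.subtype _

lemma tsum_primes_inv_sq_le : ∑' p : Nat.Primes, 1 / (p : ℝ) ^ 2 ≤ 2 := by
  have h : ∑' p : Nat.Primes, 1 / (p : ℝ) ^ 2 ≤ π ^ 2 / 6 := by
    rw [← hasSum_zeta_two.tsum_eq]
    exact hasSum_zeta_two.summable.tsum_subtype_le (fun n : ℕ => 1 / (n : ℝ) ^ 2)
      {p | p.Prime} fun _ => by positivity
  nlinarith [pi_lt_d2, pi_pos]

lemma prime_cpow_neg (p : Nat.Primes) (ε t : ℝ) :
    (p : ℂ) ^ (-(((1 + ε : ℝ) : ℂ) + t * Complex.I)) =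
      ((p : ℝ) ^ (-(1 + ε)) : ℝ) * Complex.exp (((-(t * log p) : ℝ) : ℂ) * Complex.I) := by
  have hp : (0 : ℝ) < p := by exact_mod_cast p.2.pos
  have hcast : ((p : ℕ) : ℂ) = ((p : ℝ) : ℂ) := by simp
  have hne : ((p : ℝ) : ℂ) ≠ 0 := by exact_mod_cast hp.ne'
  rw [hcast, neg_add, Complex.cpow_add _ _ hne, Complex.ofReal_cpow hp.le,
    Complex.cpow_def_of_ne_zero hne (-(t * Complex.I)), ← Complex.ofReal_log hp.le]
  push_cast
  ring_nf

lemma norm_prime_cpow_neg_le (p : Nat.Primes) {ε : ℝ} (hε : 0 ≤ ε) (t : ℝ) :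
    ‖(p : ℂ) ^ (-(((1 + ε : ℝ) : ℂ) + t * Complex.I))‖ ≤ 1 / (p : ℝ) := by
  have hp : (1 : ℝ) ≤ p := by exact_mod_cast p.2.one_lt.le
  rw [prime_cpow_neg, norm_mul, Complex.norm_exp_ofReal_mul_I, mul_one, Complex.norm_real,
    norm_of_nonneg (by positivity), one_div, ← rpow_neg_one]
  exact rpow_le_rpow_of_exponent_le hp (by linarith)

lemma re_prime_cpow_neg (p : Nat.Primes) (ε t : ℝ) :
    ((p : ℂ) ^ (-(((1 + ε : ℝ) : ℂ) + t * Complex.I))).re =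
      cos (t * log p) * (p : ℝ) ^ (-(1 + ε)) := by
  rw [prime_cpow_neg, Complex.re_ofReal_mul, Complex.exp_ofReal_mul_I_re, cos_neg, mul_comm]

lemma abs_re_add_log_one_sub_le {z : ℂ} {q : ℝ} (hz : ‖z‖ ≤ q) (hq : q ≤ 1 / 2) :
    |z.re - (-Complex.log (1 - z)).re| ≤ q ^ 2 := by
  have h := Complex.norm_log_one_add_sub_self_le (z := -z) (by rw [norm_neg]; linarith)
  rw [norm_neg, ← sub_eq_add_neg, sub_neg_eq_add] at h
  have hinv : (1 - ‖z‖)⁻¹ ≤ 2 := by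
    rw [inv_le_comm₀ (by linarith) (by norm_num)]
    linarith
  have hinv0 : 0 ≤ (1 - ‖z‖)⁻¹ := inv_nonneg.mpr (by linarith)
  rw [← Complex.sub_re, sub_neg_eq_add, add_comm z]
  calc |(Complex.log (1 - z) + z).re| ≤ ‖z‖ ^ 2 * (1 - ‖z‖)⁻¹ / 2 :=
        (Complex.abs_re_le_norm _).trans h
    _ ≤ q ^ 2 * 2 / 2 := by gcongr
    _ = q ^ 2 := by ring

lemma hasSum_log_norm_riemannZeta {s : ℂ} (hs : 1 < s.re) :
    HasSum (fun p : Nat.Primes => (-Complex.log (1 - (p : ℂ) ^ (-s))).re)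
      (log ‖riemannZeta s‖) := by
  have hsum : Summable fun p : Nat.Primes => -Complex.log (1 - (p : ℂ) ^ (-s)) := by
    refine (DirichletCharacter.summable_neg_log_one_sub_mul_prime_cpow (N := 1) 1 hs).congr
      fun p => ?_
    rw [MulChar.one_apply (isUnit_of_subsingleton _), one_mul]
  rw [← riemannZeta_eulerProduct_exp_log hs, Complex.norm_exp, log_exp]
  exact Complex.hasSum_re hsum.hasSum

lemma abs_primeCosSum_sub_log_norm_zeta_le {ε : ℝ} (hε : 0 < ε) (t : ℝ) :
    |primeCosSum ε t - log ‖riemannZeta (((1 + ε : ℝ) : ℂ) + t * Complex.I)‖| ≤ 2 := by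
  have hlog := hasSum_log_norm_riemannZeta (s := ((1 + ε : ℝ) : ℂ) + t * Complex.I)
    (by simpa using hε)
  have hcos : Summable fun p : Nat.Primes => cos (t * log p) * (p : ℝ) ^ (-(1 + ε)) :=
    summable_mul_primes_rpow hε fun p => abs_cos_le_one _
  rw [primeCosSum, ← hlog.tsum_eq, ← hcos.tsum_sub hlog.summable, ← norm_eq_abs]
  refine (tsum_of_norm_bounded summable_primes_inv_sq.hasSum fun p => ?_).trans
    tsum_primes_inv_sq_le
  have hp2 : (2 : ℝ) ≤ p := by exact_mod_cast p.2.two_le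
  rw [← re_prime_cpow_neg, ← one_div_pow]
  exact abs_re_add_log_one_sub_le (norm_prime_cpow_neg_le p hε.le t)
    (one_div_le_one_div_of_le two_pos hp2)

lemma abs_primeCosSum_add_log_le {ε : ℝ} (hε : 0 < ε) (hε1 : ε ≤ 1) (t : ℝ) :
    |primeCosSum ε t + log ‖(ε + t * Complex.I : ℂ)‖| ≤ 38 + 6 * log (|t| + 3) := by
  set s : ℂ := ((1 + ε : ℝ) : ℂ) + t * Complex.I with hs
  have hre : s.re = 1 + ε := by simp [hs]
  have him : s.im = t := by simp [hs]
  have hs1 : s - 1 = ε + t * Complex.I := by rw [hs]; push_cast; ring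
  have hsum := abs_primeCosSum_sub_log_norm_zeta_le hε t
  have hlog := abs_log_norm_sub_one_mul_riemannZeta_le (s := s) (by linarith) (by linarith)
  have hne := sub_one_ne_zero_of_one_lt_re (s := s) (by linarith)
  have hζ : riemannZeta s ≠ 0 := riemannZeta_ne_zero_of_one_le_re (by linarith)
  rw [norm_mul, log_mul (norm_ne_zero_iff.mpr hne) (norm_ne_zero_iff.mpr hζ), hs1, him] at hlog
  rw [abs_le] at *
  constructor <;> linarith

/-! ### The Fourier series of `|cos|` -/

lemma exp_int_mul_pi_mul_I (m : ℤ) : Complex.exp (m * (π * Complex.I)) = (-1) ^ m := by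
  rw [Complex.exp_int_mul, Complex.exp_pi_mul_I]

lemma neg_one_zpow_neg (n : ℤ) : (-1 : ℂ) ^ (-n) = (-1) ^ n := by
  rw [zpow_neg, ← inv_zpow, inv_neg_one]

lemma integral_exp_odd_mul_I (m : ℤ) :
    ∫ x in (-(π / 2))..(π / 2), Complex.exp ((2 * m + 1) * Complex.I * x) =
      2 * (-1) ^ m / (2 * m + 1) := by
  have hodd : (2 * m + 1 : ℂ) ≠ 0 := by
    have : (2 * m + 1 : ℤ) ≠ 0 := by omega
    exact_mod_cast this
  have hright : Complex.exp ((2 * m + 1) * Complex.I * (π / 2 : ℝ)) = (-1) ^ m * Complex.I := by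
    have hsplit : (2 * m + 1) * Complex.I * (π / 2 : ℝ) =
        m * (π * Complex.I) + π / 2 * Complex.I := by push_cast; ring
    rw [hsplit, Complex.exp_add, exp_int_mul_pi_mul_I, Complex.exp_pi_div_two_mul_I]
  have hleft : Complex.exp ((2 * m + 1) * Complex.I * (-(π / 2) : ℝ)) =
      -((-1) ^ m * Complex.I) := by
    have hsplit : (2 * m + 1) * Complex.I * (-(π / 2) : ℝ) =
        (-m : ℤ) * (π * Complex.I) + -(π / 2 * Complex.I) := by push_cast; ring
    rw [hsplit, Complex.exp_add, exp_int_mul_pi_mul_I, Complex.exp_neg,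
      Complex.exp_pi_div_two_mul_I, Complex.inv_I, neg_one_zpow_neg, mul_neg]
  rw [integral_exp_mul_complex (mul_ne_zero hodd Complex.I_ne_zero), hright, hleft]
  field_simp [Complex.I_ne_zero]
  ring

lemma integral_exp_mul_cos (n : ℤ) :
    ∫ x in (-(π / 2))..(π / 2), Complex.exp (-(2 * n * Complex.I) * x) * ((cos x : ℝ) : ℂ) =
      2 * (-1) ^ n / (1 - 4 * (n : ℂ) ^ 2) := by
  have hodd : ∀ m : ℤ, (2 * m + 1 : ℂ) ≠ 0 := fun m => by
    have : (2 * m + 1 : ℤ) ≠ 0 := by omega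
    exact_mod_cast this
  have hne := hodd n
  have hne' : (1 - 2 * n : ℂ) ≠ 0 := by simpa [sub_eq_neg_add] using hodd (-n)
  have hsplit : ∀ x : ℝ, Complex.exp (-(2 * n * Complex.I) * x) * ((cos x : ℝ) : ℂ) =
      1 / 2 * Complex.exp ((2 * (-n : ℤ) + 1) * Complex.I * x) +
        1 / 2 * Complex.exp ((2 * (-n - 1 : ℤ) + 1) * Complex.I * x) := fun x => by
    rw [Complex.ofReal_cos, Complex.cos, mul_div_assoc', mul_add, ← Complex.exp_add,
      ← Complex.exp_add]
    push_cast
    ring_nf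
  have hint : ∀ m : ℤ, IntervalIntegrable
      (fun x : ℝ => 1 / 2 * Complex.exp ((2 * m + 1) * Complex.I * x)) MeasureTheory.volume
      (-(π / 2)) (π / 2) := fun m => (by fun_prop : Continuous _).intervalIntegrable _ _
  simp_rw [hsplit]
  rw [intervalIntegral.integral_add (hint _) (hint _), intervalIntegral.integral_const_mul,
    intervalIntegral.integral_const_mul, integral_exp_odd_mul_I, integral_exp_odd_mul_I,
    zpow_sub₀ (by norm_num), neg_one_zpow_neg, zpow_one]
  have hden : (1 - 4 * (n : ℂ) ^ 2) = (1 - 2 * n) * (2 * n + 1) := by ring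
  have hfst : (2 * ((-n : ℤ) : ℂ) + 1) = 1 - 2 * n := by push_cast; ring
  have hsnd : (2 * ((-n - 1 : ℤ) : ℂ) + 1) = -(2 * n + 1) := by push_cast; ring
  rw [hden, hfst, hsnd]
  field_simp
  ring

lemma periodic_abs_cos : Function.Periodic (fun x : ℝ => ((|cos x| : ℝ) : ℂ)) π := fun x => by
  simp [cos_add_pi]

local instance : Fact (0 < π) := ⟨pi_pos⟩

/-- `|cos|` as a continuous function on the circle `ℝ / πℤ`, with complex values so that Mathlib's
Fourier series apply to it. -/
noncomputable def absCosCircle : C(AddCircle π, ℂ) where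
  toFun := periodic_abs_cos.lift
  continuous_toFun := continuous_coinduced_dom.mpr <|
    show Continuous fun x : ℝ => ((|cos x| : ℝ) : ℂ) by fun_prop

lemma absCosCircle_coe (x : ℝ) : absCosCircle (x : AddCircle π) = ((|cos x| : ℝ) : ℂ) := rfl

lemma fourier_coe_pi (n : ℤ) (x : ℝ) :
    fourier n (x : AddCircle π) = Complex.exp (2 * n * Complex.I * x) := by
  have : (π : ℂ) ≠ 0 := by exact_mod_cast pi_ne_zero
  rw [fourier_coe_apply]
  congr 1
  field_simp

lemma fourierCoeff_absCosCircle (n : ℤ) :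
    fourierCoeff absCosCircle n = 2 / π * (-1) ^ n / (1 - 4 * (n : ℂ) ^ 2) := by
  have hcongr : ∫ x in (-(π / 2))..(π / 2), fourier (-n) (x : AddCircle π) • absCosCircle x =
      ∫ x in (-(π / 2))..(π / 2),
        Complex.exp (-(2 * n * Complex.I) * x) * ((cos x : ℝ) : ℂ) := by
    refine intervalIntegral.integral_congr fun x hx => ?_
    rw [Set.uIcc_of_le (by linarith [pi_pos])] at hx
    rw [fourier_coe_pi, absCosCircle_coe, smul_eq_mul, abs_of_nonneg (cos_nonneg_of_mem_Icc hx)]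
    push_cast
    ring_nf
  rw [fourierCoeff_eq_intervalIntegral _ _ (-(π / 2)), show -(π / 2) + π = π / 2 by ring, hcongr,
    integral_exp_mul_cos, Complex.real_smul]
  push_cast
  ring

lemma norm_fourierCoeff_absCosCircle_le {n : ℤ} (hn : n ≠ 0) :
    ‖fourierCoeff absCosCircle n‖ ≤ 1 / (n : ℝ) ^ 2 := by
  have hsq : (1 : ℝ) ≤ (n : ℝ) ^ 2 := by exact_mod_cast sq_pos_of_ne_zero hn
  have hden : ‖1 - 4 * (n : ℂ) ^ 2‖ = 4 * (n : ℝ) ^ 2 - 1 := by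
    rw [show (1 - 4 * (n : ℂ) ^ 2) = ((1 - 4 * (n : ℝ) ^ 2 : ℝ) : ℂ) by push_cast; ring,
      Complex.norm_real, norm_eq_abs, abs_sub_comm, abs_of_nonneg (by linarith)]
  have hπ : 2 / π ≤ 1 := (div_le_one pi_pos).mpr two_le_pi
  rw [fourierCoeff_absCosCircle, norm_div, hden, norm_mul, norm_zpow, norm_neg, norm_one, one_zpow,
    mul_one, norm_div, Complex.norm_real, norm_of_nonneg pi_pos.le, Complex.norm_ofNat]
  gcongr
  linarith

lemma summable_fourierCoeff_absCosCircle : Summable (fourierCoeff absCosCircle) := by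
  refine Summable.of_norm_bounded_eventually (summable_one_div_int_pow.mpr one_lt_two) ?_
  rw [Filter.eventually_cofinite]
  refine (Set.finite_singleton (0 : ℤ)).subset fun n hn => ?_
  by_contra hn0
  exact hn (norm_fourierCoeff_absCosCircle_le hn0)

/-- The coefficients of the cosine series of `2|cos t|`. -/
noncomputable def absCosCoeff (k : ℕ) : ℝ :=
  8 / π * ((-1) ^ k / (4 * ((k : ℝ) + 1) ^ 2 - 1))

lemma two_mul_fourier_add_fourier_neg (k : ℕ) (t : ℝ) :
    2 * (fourierCoeff absCosCircle (k + 1 : ℕ) • fourier (k + 1 : ℕ) (t : AddCircle π) +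
      fourierCoeff absCosCircle (-(k + 1 : ℕ)) • fourier (-(k + 1 : ℕ)) (t : AddCircle π)) =
      ((absCosCoeff k * cos (2 * (k + 1) * t) : ℝ) : ℂ) := by
  have hden : (4 * ((k : ℂ) + 1) ^ 2 - 1) ≠ 0 := by
    have : (4 * ((k : ℝ) + 1) ^ 2 - 1) ≠ 0 := by nlinarith [k.cast_nonneg (α := ℝ)]
    exact_mod_cast this
  have hden' : (1 - 4 * ((k : ℂ) + 1) ^ 2) ≠ 0 := by rwa [← neg_sub, neg_ne_zero] at hden
  have hπ : (π : ℂ) ≠ 0 := by exact_mod_cast pi_ne_zero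
  have hcos := Complex.two_cos (2 * (k + 1) * t)
  have hpos : 2 * (((k + 1 : ℕ) : ℤ) : ℂ) * Complex.I * t = 2 * (k + 1) * t * Complex.I := by
    push_cast; ring
  have hneg : 2 * ((-((k + 1 : ℕ) : ℤ) : ℤ) : ℂ) * Complex.I * t =
      -(2 * (k + 1) * t) * Complex.I := by
    push_cast; ring
  rw [fourierCoeff_absCosCircle, fourierCoeff_absCosCircle, fourier_coe_pi, fourier_coe_pi,
    neg_one_zpow_neg, hpos, hneg, smul_eq_mul, smul_eq_mul, absCosCoeff, zpow_natCast, pow_succ]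
  push_cast
  rw [neg_sq, ← mul_add, ← hcos]
  field_simp
  ring

lemma hasSum_two_abs_cos (t : ℝ) :
    HasSum (fun k : ℕ => absCosCoeff k * cos (2 * (k + 1) * t)) (2 * |cos t| - 4 / π) := by
  have h := (has_pointwise_sum_fourier_series_of_summable summable_fourierCoeff_absCosCircle
    (t : AddCircle π)).nat_add_neg
  rw [← hasSum_nat_add_iff' 1] at h
  have h0 : fourierCoeff absCosCircle 0 • fourier 0 (t : AddCircle π) = ((2 / π : ℝ) : ℂ) := by
    rw [fourierCoeff_absCosCircle, fourier_coe_pi]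
    simp
  have h2 := h.mul_left 2
  simp_rw [two_mul_fourier_add_fourier_neg] at h2
  rw [Finset.sum_range_one, Nat.cast_zero, neg_zero, h0, absCosCircle_coe] at h2
  have hsum : (2 : ℂ) * (((|cos t| : ℝ) : ℂ) + fourierCoeff absCosCircle 0 •
      fourier 0 (t : AddCircle π) - ((2 / π : ℝ) + (2 / π : ℝ))) =
      ((2 * |cos t| - 4 / π : ℝ) : ℂ) := by
    rw [h0]
    push_cast
    ring
  rw [h0] at hsum
  exact Complex.hasSum_ofReal.mp (hsum ▸ h2)

/-! ### The sum of `2|cos (θ log p / 2)|` over primes -/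

lemma sum_range_inv_mul_sqrt_le (n : ℕ) :
    ∑ k ∈ Finset.range (n + 1), 1 / (((k : ℝ) + 1) * √(k + 1)) ≤ 3 - 2 / √(n + 1) := by
  induction n with
  | zero => norm_num
  | succ n ih =>
    rw [Finset.sum_range_succ]
    set a := √((n : ℝ) + 1)
    have ha0 : 0 < a := sqrt_pos.mpr (by positivity)
    have ha2 : a ^ 2 = (n : ℝ) + 1 := sq_sqrt (by positivity)
    push_cast
    set b := √((n : ℝ) + 1 + 1)
    have hb0 : 0 < b := sqrt_pos.mpr (by positivity)
    have hb2 : b ^ 2 = (n : ℝ) + 1 + 1 := sq_sqrt (by positivity)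
    have hab : a ≤ b := sqrt_le_sqrt (by linarith)
    rw [← hb2]
    have hterm : 1 / (b ^ 2 * b) ≤ 2 / a - 2 / b := by
      rw [div_sub_div _ _ ha0.ne' hb0.ne', div_le_div_iff₀ (by positivity) (by positivity)]
      have : (b - a) * (b + a) = 1 := by nlinarith
      have hle : a ≤ (b - a) * (2 * b) * b := by
        nlinarith [mul_nonneg (sub_nonneg.mpr hab) hb0.le]
      nlinarith
    linarith

lemma sum_range_inv_mul_sqrt_le_three (n : ℕ) :
    ∑ k ∈ Finset.range n, 1 / (((k : ℝ) + 1) * √(k + 1)) ≤ 3 := by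
  cases n with
  | zero => simp
  | succ n =>
    have hpos : (0 : ℝ) ≤ 2 / √(n + 1) := by positivity
    linarith [sum_range_inv_mul_sqrt_le n]

lemma summable_inv_mul_sqrt : Summable fun k : ℕ => 1 / (((k : ℝ) + 1) * √(k + 1)) :=
  summable_of_sum_range_le (fun _ => by positivity) sum_range_inv_mul_sqrt_le_three

lemma tsum_inv_mul_sqrt_le : ∑' k : ℕ, 1 / (((k : ℝ) + 1) * √(k + 1)) ≤ 3 :=
  summable_inv_mul_sqrt.tsum_le_of_sum_range_le sum_range_inv_mul_sqrt_le_three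

lemma four_div_pi_le_two : 4 / π ≤ 2 := by
  rw [div_le_iff₀ pi_pos]
  linarith [pi_gt_three]

lemma abs_absCosCoeff_le (k : ℕ) : |absCosCoeff k| ≤ 1 / ((k : ℝ) + 1) ^ 2 := by
  have hk : (1 : ℝ) ≤ ((k : ℝ) + 1) ^ 2 := one_le_pow₀ (by linarith [k.cast_nonneg (α := ℝ)])
  have hpi := pi_gt_three
  rw [absCosCoeff, abs_mul, abs_div, abs_div, abs_pow, abs_neg, abs_one, one_pow,
    abs_of_pos pi_pos, abs_of_pos (by linarith : (0 : ℝ) < 4 * ((k : ℝ) + 1) ^ 2 - 1),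
    abs_of_pos (by norm_num : (0 : ℝ) < 8), div_mul_div_comm, mul_one,
    div_le_div_iff₀ (by nlinarith) (by positivity)]
  nlinarith

lemma hasSum_absCosCoeff : HasSum absCosCoeff (2 - 4 / π) := by
  simpa only [mul_zero, cos_zero, mul_one, abs_one] using hasSum_two_abs_cos 0

lemma log_add_four_le (k : ℕ) : log ((k : ℝ) + 4) ≤ 2 * √(k + 1) := by
  have : (0 : ℝ) ≤ k := k.cast_nonneg
  have hs : 0 < √((k : ℝ) + 1) := sqrt_pos.mpr (by positivity)
  have hs2 : √((k : ℝ) + 1) ^ 2 = k + 1 := sq_sqrt (by positivity)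
  have hsq : (k : ℝ) + 4 ≤ (2 * √(k + 1)) ^ 2 := by nlinarith
  have hlog := log_le_log (by positivity) hsq
  rw [log_pow, log_mul (by norm_num) hs.ne'] at hlog
  push_cast at hlog
  linarith [log_le_sub_one_of_pos hs, log_two_lt_d9]

lemma norm_add_mul_I_mono {ε θ : ℝ} (hθ : 0 < θ) (k : ℕ) :
    ‖(ε + θ * Complex.I : ℂ)‖ ≤ ‖(ε + ((k + 1) * θ : ℝ) * Complex.I : ℂ)‖ := by
  rw [Complex.norm_add_mul_I, Complex.norm_add_mul_I]
  have : (0 : ℝ) ≤ k := k.cast_nonneg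
  have hle : θ ≤ (k + 1) * θ := by nlinarith
  exact sqrt_le_sqrt (by gcongr)

lemma norm_add_mul_I_le_mul (ε θ : ℝ) (k : ℕ) :
    ‖(ε + ((k + 1) * θ : ℝ) * Complex.I : ℂ)‖ ≤ (k + 1) * ‖(ε + θ * Complex.I : ℂ)‖ := by
  rw [Complex.norm_add_mul_I, Complex.norm_add_mul_I]
  refine sqrt_le_iff.mpr ⟨by positivity, ?_⟩
  rw [mul_pow, mul_pow, sq_sqrt (by positivity)]
  have hk : (1 : ℝ) ≤ ((k : ℝ) + 1) ^ 2 := one_le_pow₀ (by linarith [k.cast_nonneg (α := ℝ)])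
  nlinarith [sq_nonneg ε]

lemma abs_primeCosSum_mul_add_log_le {ε θ : ℝ} (hε : 0 < ε) (hε1 : ε ≤ 1) (hθ : 0 < θ)
    (hθ1 : θ ≤ 1) (k : ℕ) :
    |primeCosSum ε ((k + 1) * θ) + log ‖(ε + θ * Complex.I : ℂ)‖| ≤ 52 * √(k + 1) := by
  have : (0 : ℝ) ≤ k := k.cast_nonneg
  have hnorm : 0 < ‖(ε + θ * Complex.I : ℂ)‖ := by
    rw [Complex.norm_add_mul_I]
    positivity
  have hmono := norm_add_mul_I_mono (ε := ε) hθ k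
  have hlower := log_le_log hnorm hmono
  have hupper := log_le_log (hnorm.trans_le hmono) (norm_add_mul_I_le_mul ε θ k)
  rw [log_mul (by positivity) hnorm.ne'] at hupper
  have hshift : log (|((k : ℝ) + 1) * θ| + 3) ≤ log ((k : ℝ) + 4) := by
    refine log_le_log (by positivity) ?_
    rw [abs_of_nonneg (by positivity)]
    nlinarith
  have hlogk : log ((k : ℝ) + 1) ≤ log ((k : ℝ) + 4) := log_le_log (by positivity) (by linarith)
  have hsqrt : 1 ≤ √((k : ℝ) + 1) := one_le_sqrt.mpr (by linarith)
  have hlog4 := log_add_four_le k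
  have hsum := abs_primeCosSum_add_log_le hε hε1 ((k + 1) * θ)
  rw [abs_le] at hsum ⊢
  constructor <;> linarith

lemma abs_absCosCoeff_mul_primeCosSum_add_log_le {ε θ : ℝ} (hε : 0 < ε) (hε1 : ε ≤ 1)
    (hθ : 0 < θ) (hθ1 : θ ≤ 1) (k : ℕ) :
    |absCosCoeff k * (primeCosSum ε ((k + 1) * θ) + log ‖(ε + θ * Complex.I : ℂ)‖)| ≤
      52 * (1 / (((k : ℝ) + 1) * √(k + 1))) := by
  have hs : 0 < √((k : ℝ) + 1) := sqrt_pos.mpr (by positivity)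
  have hs2 : √((k : ℝ) + 1) ^ 2 = k + 1 := sq_sqrt (by positivity)
  rw [abs_mul]
  calc _ ≤ 1 / ((k : ℝ) + 1) ^ 2 * (52 * √(k + 1)) := by
        gcongr
        · exact abs_absCosCoeff_le k
        · exact abs_primeCosSum_mul_add_log_le hε hε1 hθ hθ1 k
    _ = 52 * (1 / (((k : ℝ) + 1) * √(k + 1))) := by
        generalize √((k : ℝ) + 1) = r at hs hs2 ⊢
        rw [← hs2]
        field_simp

lemma tsum_absCosCoeff_mul_primeCosSum_le {ε θ : ℝ} (hε : 0 < ε) (hε1 : ε ≤ 1) (hθ : 0 < θ)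
    (hθ1 : θ ≤ 1) :
    ∑' k : ℕ, absCosCoeff k * primeCosSum ε ((k + 1) * θ) ≤
      156 + (2 - 4 / π) * log (1 / θ) := by
  set N := log ‖(ε + θ * Complex.I : ℂ)‖
  have hbound := abs_absCosCoeff_mul_primeCosSum_add_log_le hε hε1 hθ hθ1
  have hsummable : Summable fun k : ℕ => absCosCoeff k * (primeCosSum ε ((k + 1) * θ) + N) :=
    Summable.of_norm_bounded (summable_inv_mul_sqrt.mul_left 52) hbound
  have hmain : ∑' k : ℕ, absCosCoeff k * (primeCosSum ε ((k + 1) * θ) + N) ≤ 156 := by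
    have hle := hsummable.tsum_le_tsum (fun k => (le_abs_self _).trans (hbound k))
      (summable_inv_mul_sqrt.mul_left 52)
    rw [tsum_mul_left] at hle
    linarith [tsum_inv_mul_sqrt_le]
  have hsplit : ∑' k : ℕ, absCosCoeff k * primeCosSum ε ((k + 1) * θ) =
      ∑' k : ℕ, absCosCoeff k * (primeCosSum ε ((k + 1) * θ) + N) - (2 - 4 / π) * N := by
    rw [← (hasSum_absCosCoeff.mul_right N).tsum_eq,
      ← hsummable.tsum_sub (hasSum_absCosCoeff.summable.mul_right N)]
    exact tsum_congr fun k => by ring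
  have hN : -N ≤ log (1 / θ) := by
    rw [one_div, log_inv, neg_le_neg_iff]
    refine log_le_log hθ (le_sqrt_of_sq_le ?_ |>.trans_eq (Complex.norm_add_mul_I ε θ).symm)
    linarith [sq_nonneg ε]
  have hmul := mul_le_mul_of_nonneg_left hN (sub_nonneg.mpr four_div_pi_le_two)
  linarith

lemma summable_absCosCoeff_mul_cos_mul_rpow {ε : ℝ} (hε : 0 < ε) (θ : ℝ) :
    Summable (Function.uncurry fun (p : Nat.Primes) (k : ℕ) =>
      absCosCoeff k * cos ((k + 1) * θ * log p) * (p : ℝ) ^ (-(1 + ε))) := by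
  have hinv : Summable fun k : ℕ => 1 / ((k : ℝ) + 1) ^ 2 := by
    simpa using (summable_nat_add_iff 1).mpr hasSum_zeta_two.summable
  refine Summable.of_norm_bounded ((summable_primes_rpow hε).mul_of_nonneg hinv
    (fun p => by positivity) (fun k => by positivity)) fun x => ?_
  rw [Function.uncurry, norm_mul, norm_mul, norm_eq_abs, norm_eq_abs,
    norm_of_nonneg (by positivity : 0 ≤ (x.1 : ℝ) ^ (-(1 + ε))), mul_comm]
  gcongr
  exact (mul_le_of_le_one_right (abs_nonneg _) (abs_cos_le_one _)).trans (abs_absCosCoeff_le _)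

lemma tsum_primes_two_abs_cos_sub_mul_rpow {ε : ℝ} (hε : 0 < ε) (θ : ℝ) :
    ∑' p : Nat.Primes, (2 * |cos (θ / 2 * log p)| - 4 / π) * (p : ℝ) ^ (-(1 + ε)) =
      ∑' k : ℕ, absCosCoeff k * primeCosSum ε ((k + 1) * θ) := by
  have hfourier : ∀ p : Nat.Primes,
      (2 * |cos (θ / 2 * log p)| - 4 / π) * (p : ℝ) ^ (-(1 + ε)) =
        ∑' k : ℕ, absCosCoeff k * cos ((k + 1) * θ * log p) * (p : ℝ) ^ (-(1 + ε)) := fun p => by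
    rw [tsum_mul_right, ← (hasSum_two_abs_cos (θ / 2 * log p)).tsum_eq]
    congr! 5
    ring
  refine (tsum_congr hfourier).trans
    ((summable_absCosCoeff_mul_cos_mul_rpow hε θ).tsum_comm.symm.trans (tsum_congr fun k => ?_))
  rw [primeCosSum, ← tsum_mul_left]
  exact tsum_congr fun p => by ring

lemma primeCosSum_zero_le {ε : ℝ} (hε : 0 < ε) (hε1 : ε ≤ 1) :
    primeCosSum ε 0 ≤ log (1 / ε) + 50 := by
  have h := abs_primeCosSum_add_log_le hε hε1 0
  rw [Complex.ofReal_zero, zero_mul, add_zero, Complex.norm_real, norm_of_nonneg hε.le,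
    abs_zero, zero_add, abs_le] at h
  have hlog3 := log_le_sub_one_of_pos (by norm_num : (0 : ℝ) < 3)
  rw [one_div, log_inv]
  linarith [h.2]

lemma tsum_two_abs_cos_primes_le {ε θ : ℝ} (hε : 0 < ε) (hε1 : ε ≤ 1) (hθ : 0 < θ)
    (hθ1 : θ ≤ 1) :
    ∑' p : Nat.Primes, 2 * |cos (θ / 2 * log p)| * (p : ℝ) ^ (-(1 + ε)) ≤
      4 / π * log (1 / ε) + (2 - 4 / π) * log (1 / θ) + 300 := by
  have hpi0 : 0 < 4 / π := by positivity
  have hsummable : Summable fun p : Nat.Primes =>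
      (2 * |cos (θ / 2 * log p)| - 4 / π) * (p : ℝ) ^ (-(1 + ε)) := by
    refine summable_mul_primes_rpow hε (M := 2) fun p => ?_
    rw [abs_le]
    constructor <;> linarith [abs_cos_le_one (θ / 2 * log p), abs_nonneg (cos (θ / 2 * log p)),
      four_div_pi_le_two]
  have hsplit : ∑' p : Nat.Primes, 2 * |cos (θ / 2 * log p)| * (p : ℝ) ^ (-(1 + ε)) =
      ∑' p : Nat.Primes, (2 * |cos (θ / 2 * log p)| - 4 / π) * (p : ℝ) ^ (-(1 + ε)) +
        4 / π * primeCosSum ε 0 := by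
    simp only [primeCosSum, zero_mul, cos_zero, one_mul]
    rw [← tsum_mul_left, ← hsummable.tsum_add ((summable_primes_rpow hε).mul_left _)]
    exact tsum_congr fun p => by ring
  have hzero := mul_le_mul_of_nonneg_left (primeCosSum_zero_le hε hε1) hpi0.le
  rw [hsplit, tsum_primes_two_abs_cos_sub_mul_rpow hε]
  linarith [tsum_absCosCoeff_mul_primeCosSum_le hε hε1 hθ hθ1, four_div_pi_le_two]

/-! ### Sums over smooth numbers and over primes -/

lemma sum_le_exp_sum_primesBelow {f g : ℕ → ℝ} (hf0 : ∀ n, 0 ≤ f n) (hf1 : f 1 = 1)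
    (hmul : ∀ {m n : ℕ}, m.Coprime n → f (m * n) = f m * f n)
    (hs : ∀ {p : ℕ}, p.Prime → Summable fun k : ℕ => f (p ^ k)) {N : ℕ}
    (hg : ∀ {p : ℕ}, p.Prime → p < N → ∑' k : ℕ, f (p ^ k) ≤ 1 + g p)
    {S : Finset ℕ} (hS : ∀ a ∈ S, a ∈ N.smoothNumbers) :
    ∑ a ∈ S, f a ≤ exp (∑ p ∈ N.primesBelow, g p) := by
  classical
  have hnorm : ∀ {p : ℕ}, p.Prime → Summable fun k : ℕ => ‖f (p ^ k)‖ := fun hp =>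
    (hs hp).congr fun k => (norm_of_nonneg (hf0 _)).symm
  have heuler := (EulerProduct.summable_and_hasSum_smoothNumbers_prod_primesBelow_tsum hf1 hmul
    hnorm N).2
  calc ∑ a ∈ S, f a = ∑ a ∈ S.subtype (· ∈ N.smoothNumbers), f a := by
        rw [Finset.sum_subtype_of_mem _ hS]
    _ ≤ ∏ p ∈ N.primesBelow, ∑' k : ℕ, f (p ^ k) := sum_le_hasSum _ (fun a _ => hf0 a) heuler
    _ ≤ ∏ p ∈ N.primesBelow, exp (g p) := by
        refine Finset.prod_le_prod (fun p _ => tsum_nonneg fun k => hf0 _) fun p hp => ?_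
        obtain ⟨hpN, hp⟩ := Nat.mem_primesBelow.mp hp
        exact (hg hp hpN).trans (by linarith [add_one_le_exp (g p)])
    _ = exp (∑ p ∈ N.primesBelow, g p) := (exp_sum _ _).symm

lemma sum_primeFactors_log_le (n : ℕ) : ∑ p ∈ n.primeFactors, log p ≤ log n := by
  rcases eq_or_ne n 0 with rfl | hn
  · simp
  rw [← log_prod fun p hp => by exact_mod_cast (Nat.prime_of_mem_primeFactors hp).ne_zero,
    ← Nat.cast_prod]
  refine log_le_log ?_ ?_
  · exact_mod_cast Finset.prod_pos fun p hp => (Nat.prime_of_mem_primeFactors hp).pos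
  · exact_mod_cast Nat.le_of_dvd (Nat.pos_of_ne_zero hn) (Nat.prod_primeFactors_dvd n)

lemma sum_log_mul_div_primesBelow_le (N : ℕ) :
    ∑ p ∈ (N + 1).primesBelow, log p * (N / p : ℕ) ≤ N * log N := by
  calc ∑ p ∈ (N + 1).primesBelow, log p * (N / p : ℕ)
      = ∑ p ∈ (N + 1).primesBelow, ∑ n ∈ Finset.Ioc 0 N, if p ∣ n then log p else 0 := by
        refine Finset.sum_congr rfl fun p _ => ?_
        rw [← Finset.sum_filter, Finset.sum_const, Nat.Ioc_filter_dvd_card_eq_div, nsmul_eq_mul,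
          mul_comm]
    _ = ∑ n ∈ Finset.Ioc 0 N, ∑ p ∈ (N + 1).primesBelow with p ∣ n, log p := by
        rw [Finset.sum_comm]
        simp_rw [← Finset.sum_filter]
    _ ≤ ∑ _ ∈ Finset.Ioc 0 N, log N := by
        refine Finset.sum_le_sum fun n hn => ?_
        rw [Finset.mem_Ioc] at hn
        calc ∑ p ∈ (N + 1).primesBelow with p ∣ n, log p ≤ ∑ p ∈ n.primeFactors, log p := by
              refine Finset.sum_le_sum_of_subset_of_nonneg (fun p hp => ?_)
                fun p _ _ => log_natCast_nonneg p
              rw [Finset.mem_filter, Nat.mem_primesBelow] at hp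
              exact Nat.mem_primeFactors.mpr ⟨hp.1.2, hp.2, hn.1.ne'⟩
          _ ≤ log n := sum_primeFactors_log_le n
          _ ≤ log N := log_le_log (by exact_mod_cast hn.1) (by exact_mod_cast hn.2)
    _ = N * log N := by simp

lemma sum_log_div_primesBelow_le {N : ℕ} (hN : 1 ≤ N) :
    ∑ p ∈ (N + 1).primesBelow, log p / p ≤ log N + log 4 := by
  have hN0 : (0 : ℝ) < N := by exact_mod_cast hN
  have htheta : ∑ p ∈ (N + 1).primesBelow, log p ≤ log 4 * N := by
    have h := Chebyshev.theta_le_log4_mul_x hN0.le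
    rwa [Chebyshev.theta_eq_sum_primesLE_log] at h
  have hfloor : ∑ p ∈ (N + 1).primesBelow, (N * (log p / p)) ≤
      ∑ p ∈ (N + 1).primesBelow, (log p * (N / p : ℕ) + log p) := by
    refine Finset.sum_le_sum fun p _ => ?_
    have : 0 ≤ log p := log_natCast_nonneg p
    have hdiv : (N : ℝ) / p ≤ (N / p : ℕ) + 1 := by
      rw [← Nat.floor_div_eq_div (K := ℝ)]
      exact (Nat.lt_floor_add_one _).le
    calc N * (log p / p) = log p * (N / p) := by ring
      _ ≤ log p * ((N / p : ℕ) + 1) := by gcongr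
      _ = log p * (N / p : ℕ) + log p := by ring
  rw [← Finset.mul_sum, Finset.sum_add_distrib] at hfloor
  have hmain : N * ∑ p ∈ (N + 1).primesBelow, log p / p ≤ N * (log N + log 4) := by
    linarith [sum_log_mul_div_primesBelow_le N]
  exact le_of_mul_le_mul_left hmain hN0

/-! ### Bounding `Δ` by twisted divisor sums -/

/-- The completely multiplicative function `n ↦ n^{iθ}`. -/
noncomputable def twist (θ : ℝ) : ArithmeticFunction ℂ :=
  ⟨fun n => if n = 0 then 0 else Complex.exp ((θ * log n : ℝ) * Complex.I), if_pos rfl⟩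

lemma twist_apply (θ : ℝ) {n : ℕ} (hn : n ≠ 0) :
    twist θ n = Complex.exp ((θ * log n : ℝ) * Complex.I) :=
  if_neg hn

lemma norm_twist (θ : ℝ) {n : ℕ} (hn : n ≠ 0) : ‖twist θ n‖ = 1 := by
  rw [twist_apply θ hn, Complex.norm_exp_ofReal_mul_I]

lemma isMultiplicative_twist (θ : ℝ) : (twist θ).IsMultiplicative := by
  rw [ArithmeticFunction.IsMultiplicative.iff_ne_zero]
  refine ⟨by simp [twist], fun {m n} hm hn _ => ?_⟩
  rw [twist_apply θ hm, twist_apply θ hn, twist_apply θ (mul_ne_zero hm hn), ← Complex.exp_add,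
    Nat.cast_mul, log_mul (by exact_mod_cast hm) (by exact_mod_cast hn)]
  push_cast
  ring_nf

/-- The twisted divisor sum `∑_{d ∣ n} d^{iθ}`, as a Dirichlet convolution. -/
noncomputable def divisorTwist (θ : ℝ) : ArithmeticFunction ℂ :=
  twist θ * (ArithmeticFunction.zeta : ArithmeticFunction ℂ)

lemma isMultiplicative_divisorTwist (θ : ℝ) : (divisorTwist θ).IsMultiplicative :=
  (isMultiplicative_twist θ).mul ArithmeticFunction.isMultiplicative_zeta.natCast

lemma divisorTwist_apply (θ : ℝ) (n : ℕ) : divisorTwist θ n = ∑ d ∈ n.divisors, twist θ d :=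
  ArithmeticFunction.coe_mul_zeta_apply

lemma norm_divisorTwist_le (θ : ℝ) (n : ℕ) : ‖divisorTwist θ n‖ ≤ n.divisors.card := by
  rw [divisorTwist_apply]
  refine (norm_sum_le _ _).trans_eq ?_
  rw [Finset.sum_congr rfl fun d hd => norm_twist θ (Nat.pos_of_mem_divisors hd).ne',
    Finset.sum_const, nsmul_one]

lemma norm_one_add_exp_mul_I (t : ℝ) :
    ‖1 + Complex.exp ((t : ℝ) * Complex.I)‖ = 2 * |cos (t / 2)| := by
  have hfactor : 1 + Complex.exp ((t : ℝ) * Complex.I) =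
      Complex.exp ((t / 2 : ℝ) * Complex.I) * ((2 * cos (t / 2) : ℝ) : ℂ) := by
    push_cast
    rw [Complex.two_cos, mul_add, ← Complex.exp_add, ← Complex.exp_add]
    ring_nf
    rw [Complex.exp_zero, add_comm]
  rw [hfactor, norm_mul, Complex.norm_exp_ofReal_mul_I, one_mul, Complex.norm_real, norm_eq_abs,
    abs_mul, abs_two]

lemma norm_divisorTwist_prime (θ : ℝ) {p : ℕ} (hp : p.Prime) :
    ‖divisorTwist θ p‖ = 2 * |cos (θ / 2 * log p)| := by
  rw [divisorTwist_apply, hp.divisors, Finset.sum_pair hp.one_lt.ne,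
    (isMultiplicative_twist θ).map_one, twist_apply θ hp.ne_zero, norm_one_add_exp_mul_I]
  ring_nf

lemma continuous_norm_divisorTwist (n : ℕ) : Continuous fun θ : ℝ => ‖divisorTwist θ n‖ := by
  simp only [divisorTwist_apply]
  refine continuous_norm.comp (continuous_finsetSum _ fun d hd => ?_)
  simp only [twist_apply _ (Nat.pos_of_mem_divisors hd).ne']
  fun_prop

lemma integral_one_sub_mul_cos {v : ℝ} (hv : v ≠ 0) :
    ∫ θ in (0 : ℝ)..1, (1 - θ) * cos (θ * v) = (1 - cos v) / v ^ 2 := by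
  have hderiv : ∀ θ ∈ Set.uIcc (0 : ℝ) 1, HasDerivAt
      (fun θ => (1 - θ) * (sin (θ * v) / v) - cos (θ * v) / v ^ 2)
      ((1 - θ) * cos (θ * v)) θ := fun θ _ => by
    have hmul : HasDerivAt (fun θ : ℝ => θ * v) v θ := by
      simpa using (hasDerivAt_id θ).mul_const v
    have hsub : HasDerivAt (fun θ : ℝ => 1 - θ) (-1) θ := by
      simpa using (hasDerivAt_id θ).const_sub 1
    convert! (hsub.mul (hmul.sin.div_const v)).sub (hmul.cos.div_const (v ^ 2)) using 1
    field_simp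
    ring
  rw [intervalIntegral.integral_eq_sub_of_hasDerivAt hderiv
    (Continuous.intervalIntegrable (by fun_prop) _ _)]
  simp only [sub_self, zero_mul, one_mul, sin_zero, zero_div, mul_zero, cos_zero]
  ring

lemma integral_one_sub_mul_cos_nonneg (v : ℝ) :
    0 ≤ ∫ θ in (0 : ℝ)..1, (1 - θ) * cos (θ * v) := by
  rcases eq_or_ne v 0 with rfl | hv
  · simp only [mul_zero, cos_zero, mul_one]
    exact intervalIntegral.integral_nonneg zero_le_one fun θ hθ => by linarith [hθ.2]
  · rw [integral_one_sub_mul_cos hv]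
    exact div_nonneg (by linarith [cos_le_one v]) (sq_nonneg v)

lemma le_integral_one_sub_mul_cos {v : ℝ} (hv : |v| ≤ 1 / 2) :
    7 / 16 ≤ ∫ θ in (0 : ℝ)..1, (1 - θ) * cos (θ * v) := by
  have hconst : ∫ θ in (0 : ℝ)..1, (1 - θ) * (7 / 8) = 7 / 16 := by
    rw [intervalIntegral.integral_mul_const, intervalIntegral.integral_sub (by simp) (by simp),
      integral_one, integral_id]
    norm_num
  rw [← hconst]
  refine intervalIntegral.integral_mono_on zero_le_one
    (Continuous.intervalIntegrable (by fun_prop) _ _)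
    (Continuous.intervalIntegrable (by fun_prop) _ _) fun θ hθ => ?_
  have hsq : (θ * v) ^ 2 ≤ 1 / 4 := by
    have habs : |θ * v| ≤ 1 / 2 := by
      rw [abs_mul, abs_of_nonneg hθ.1]
      exact (mul_le_of_le_one_left (abs_nonneg v) hθ.2).trans hv
    nlinarith [sq_abs (θ * v), abs_nonneg (θ * v)]
  exact mul_le_mul_of_nonneg_left (by linarith [one_sub_sq_div_two_le_cos (x := θ * v)])
    (by linarith [hθ.2])

lemma sum_cos_log_sub_le_norm_divisorTwist (θ c : ℝ) (n : ℕ) :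
    ∑ d ∈ n.divisors, cos (θ * (log d - c)) ≤ ‖divisorTwist θ n‖ := by
  have hre : ∑ d ∈ n.divisors, cos (θ * (log d - c)) =
      (Complex.exp ((-(θ * c) : ℝ) * Complex.I) * divisorTwist θ n).re := by
    rw [divisorTwist_apply, Finset.mul_sum, Complex.re_sum]
    refine Finset.sum_congr rfl fun d hd => ?_
    rw [twist_apply θ (Nat.pos_of_mem_divisors hd).ne', ← Complex.exp_add, ← add_mul,
      ← Complex.ofReal_add, Complex.exp_ofReal_mul_I_re]
    ring_nf
  rw [hre]
  refine (Complex.re_le_norm _).trans_eq ?_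
  rw [norm_mul, Complex.norm_exp_ofReal_mul_I, one_mul]

lemma sum_integral_one_sub_mul_cos_le (n : ℕ) (c : ℝ) :
    ∑ d ∈ n.divisors, ∫ θ in (0 : ℝ)..1, (1 - θ) * cos (θ * (log d - c)) ≤
      ∫ θ in (0 : ℝ)..1, ‖divisorTwist θ n‖ := by
  rw [← intervalIntegral.integral_finsetSum
    fun d _ => Continuous.intervalIntegrable (by fun_prop) _ _]
  refine intervalIntegral.integral_mono_on zero_le_one
    (Continuous.intervalIntegrable (by fun_prop) _ _)
    (Continuous.intervalIntegrable (continuous_norm_divisorTwist n) _ _) fun θ hθ => ?_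
  rw [← Finset.mul_sum]
  calc (1 - θ) * ∑ d ∈ n.divisors, cos (θ * (log d - c))
      ≤ (1 - θ) * ‖divisorTwist θ n‖ :=
        mul_le_mul_of_nonneg_left (sum_cos_log_sub_le_norm_divisorTwist θ c n) (by linarith [hθ.2])
    _ ≤ ‖divisorTwist θ n‖ := mul_le_of_le_one_left (norm_nonneg _) (by linarith [hθ.1])

/-- The kernel `v ↦ ∫₀¹ (1 - θ) cos (θ v) dθ` is nonnegative everywhere and at least `7 / 16` on the
window `|v| ≤ 1 / 2`. -/
lemma hooleyDelta_le_integral (n : ℕ) :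
    (hooleyDelta n : ℝ) ≤ 16 / 7 * ∫ θ in (0 : ℝ)..1, ‖divisorTwist θ n‖ := by
  obtain ⟨u, hu⟩ := exists_hooleyDelta_eq_card_windowDivisors n
  have hwindow : (hooleyDelta n : ℝ) * (7 / 16) ≤
      ∑ d ∈ n.divisors, ∫ θ in (0 : ℝ)..1, (1 - θ) * cos (θ * (log d - (u + 1 / 2))) := by
    rw [hu, ← nsmul_eq_mul]
    refine (Finset.card_nsmul_le_sum _ _ _ fun d hd => ?_).trans
      (Finset.sum_le_sum_of_subset_of_nonneg (Finset.filter_subset _ _)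
        fun d _ _ => integral_one_sub_mul_cos_nonneg _)
    obtain ⟨⟨hdvd, hn⟩, hlower, hupper⟩ := mem_windowDivisors.mp hd
    have hd0 : (0 : ℝ) < d := by
      exact_mod_cast Nat.pos_of_dvd_of_pos hdvd (Nat.pos_of_ne_zero hn)
    have hlower' := (lt_log_iff_exp_lt hd0).mpr hlower
    have hupper' := (log_le_iff_le_exp hd0).mpr hupper
    refine le_integral_one_sub_mul_cos (abs_le.mpr ⟨?_, ?_⟩) <;> linarith
  linarith [sum_integral_one_sub_mul_cos_le n (u + 1 / 2)]

/-! ### The logarithmic mean of `Δ` -/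

lemma hasSum_add_three_mul_half_pow :
    HasSum (fun k : ℕ => ((k : ℝ) + 3) * (1 / 2) ^ k) 8 := by
  have hcoe := hasSum_coe_mul_geometric_of_norm_lt_one (𝕜 := ℝ) (r := 1 / 2) (by norm_num)
  have hgeom := (hasSum_geometric_of_lt_one (r := (1 / 2 : ℝ)) (by norm_num)
    (by norm_num)).mul_left 3
  convert! hcoe.add hgeom using 1
  · ext k; ring
  · norm_num

lemma card_divisors_prime_pow {p : ℕ} (hp : p.Prime) (k : ℕ) : (p ^ k).divisors.card = k + 1 := by
  rw [Nat.divisors_prime_pow hp, Finset.card_map, Finset.card_range]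

/-- The summand of the Dirichlet series of `|∑_{d ∣ n} d^{iθ}|` at `1 + ε`. -/
noncomputable def twistTerm (ε θ : ℝ) (n : ℕ) : ℝ := ‖divisorTwist θ n‖ * (n : ℝ) ^ (-(1 + ε))

lemma twistTerm_nonneg (ε θ : ℝ) (n : ℕ) : 0 ≤ twistTerm ε θ n :=
  mul_nonneg (norm_nonneg _) (rpow_nonneg (Nat.cast_nonneg _) _)

lemma twistTerm_one (ε θ : ℝ) : twistTerm ε θ 1 = 1 := by
  simp [twistTerm, (isMultiplicative_divisorTwist θ).map_one]

lemma twistTerm_mul (ε θ : ℝ) {m n : ℕ} (h : m.Coprime n) :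
    twistTerm ε θ (m * n) = twistTerm ε θ m * twistTerm ε θ n := by
  rw [twistTerm, (isMultiplicative_divisorTwist θ).map_mul_of_coprime h, norm_mul, Nat.cast_mul,
    mul_rpow (Nat.cast_nonneg _) (Nat.cast_nonneg _), twistTerm, twistTerm]
  ring

lemma continuous_twistTerm (ε : ℝ) (n : ℕ) : Continuous fun θ => twistTerm ε θ n :=
  (continuous_norm_divisorTwist n).mul_const _

lemma twistTerm_prime_pow_add_two_le {ε : ℝ} (hε : 0 < ε) (θ : ℝ) {p : ℕ} (hp : p.Prime) (k : ℕ) :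
    twistTerm ε θ (p ^ (k + 2)) ≤ 1 / (p : ℝ) ^ 2 * (((k : ℝ) + 3) * (1 / 2) ^ k) := by
  have hp2 : (2 : ℝ) ≤ p := by exact_mod_cast hp.two_le
  have hnorm : ‖divisorTwist θ (p ^ (k + 2))‖ ≤ k + 3 := by
    refine (norm_divisorTwist_le _ _).trans ?_
    rw [card_divisors_prime_pow hp]
    push_cast
    linarith
  have hrpow : ((p ^ (k + 2) : ℕ) : ℝ) ^ (-(1 + ε)) ≤ 1 / (p : ℝ) ^ 2 * (1 / 2) ^ k := by
    calc ((p ^ (k + 2) : ℕ) : ℝ) ^ (-(1 + ε)) ≤ ((p ^ (k + 2) : ℕ) : ℝ) ^ (-1 : ℝ) := by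
          refine rpow_le_rpow_of_exponent_le ?_ (by linarith)
          exact_mod_cast Nat.one_le_pow _ _ hp.pos
      _ = 1 / (p : ℝ) ^ 2 * (1 / p) ^ k := by
          rw [rpow_neg_one, one_div_pow, Nat.cast_pow, pow_add]
          field_simp
      _ ≤ 1 / (p : ℝ) ^ 2 * (1 / 2) ^ k := by gcongr
  calc twistTerm ε θ (p ^ (k + 2)) ≤ (k + 3) * (1 / (p : ℝ) ^ 2 * (1 / 2) ^ k) :=
        mul_le_mul hnorm hrpow (by positivity) (by positivity)
    _ = 1 / (p : ℝ) ^ 2 * (((k : ℝ) + 3) * (1 / 2) ^ k) := by ring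

lemma summable_twistTerm_prime_pow {ε : ℝ} (hε : 0 < ε) (θ : ℝ) {p : ℕ} (hp : p.Prime) :
    Summable fun k : ℕ => twistTerm ε θ (p ^ k) :=
  (summable_nat_add_iff 2).mp <| Summable.of_nonneg_of_le (fun _ => twistTerm_nonneg _ _ _)
    (fun k => twistTerm_prime_pow_add_two_le hε θ hp k)
    (hasSum_add_three_mul_half_pow.summable.mul_left _)

lemma tsum_twistTerm_prime_pow_le {ε : ℝ} (hε : 0 < ε) (θ : ℝ) {p : ℕ} (hp : p.Prime) :
    ∑' k : ℕ, twistTerm ε θ (p ^ k) ≤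
      1 + (2 * |cos (θ / 2 * log p)| * (p : ℝ) ^ (-(1 + ε)) + 8 * (1 / (p : ℝ) ^ 2)) := by
  have hs := summable_twistTerm_prime_pow hε θ hp
  rw [← hs.sum_add_tsum_nat_add 2, Finset.sum_range_succ, Finset.sum_range_one, pow_zero, pow_one,
    twistTerm_one, twistTerm, norm_divisorTwist_prime θ hp]
  have h := ((summable_nat_add_iff 2).mpr hs).tsum_le_tsum
    (fun k => twistTerm_prime_pow_add_two_le hε θ hp k)
    (hasSum_add_three_mul_half_pow.summable.mul_left _)
  rw [tsum_mul_left, hasSum_add_three_mul_half_pow.tsum_eq] at h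
  linarith

lemma sum_primesBelow_le_tsum {g : ℕ → ℝ} (hg : ∀ n, 0 ≤ g n)
    (hs : Summable fun p : Nat.Primes => g p) (N : ℕ) :
    ∑ p ∈ N.primesBelow, g p ≤ ∑' p : Nat.Primes, g p := by
  classical
  let S : Finset Nat.Primes := N.primesBelow.subtype Nat.Prime
  have h : ∑ p ∈ N.primesBelow, g p = ∑ p ∈ S, g p :=
    (Finset.sum_subtype_of_mem g fun p hp => (Nat.mem_primesBelow.mp hp).2).symm
  rw [h]
  exact hs.sum_le_tsum S fun p _ => hg p

lemma sum_twistTerm_le {ε θ : ℝ} (hε : 0 < ε) (hε1 : ε ≤ 1) (hθ : 0 < θ) (hθ1 : θ ≤ 1) (N : ℕ) :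
    ∑ a ∈ Finset.Icc 1 N, twistTerm ε θ a ≤ exp 316 * (1 / ε) ^ (4 / π) * θ ^ (4 / π - 2) := by
  have heuler := sum_le_exp_sum_primesBelow (twistTerm_nonneg ε θ) (twistTerm_one ε θ)
    (twistTerm_mul ε θ) (summable_twistTerm_prime_pow hε θ) (N := N + 1)
    (g := fun p => 2 * |cos (θ / 2 * log p)| * (p : ℝ) ^ (-(1 + ε)) + 8 * (1 / (p : ℝ) ^ 2))
    (fun hp _ => tsum_twistTerm_prime_pow_le hε θ hp) (S := Finset.Icc 1 N) (fun a ha => by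
      rw [Finset.mem_Icc] at ha
      exact Nat.mem_smoothNumbers_of_lt ha.1 (Nat.lt_succ_of_le ha.2))
  have hsummable : Summable fun p : Nat.Primes =>
      2 * |cos (θ / 2 * log p)| * (p : ℝ) ^ (-(1 + ε)) := by
    refine summable_mul_primes_rpow hε (M := 2) fun p => ?_
    rw [abs_mul, abs_two, abs_abs]
    linarith [abs_cos_le_one (θ / 2 * log p)]
  have hcos := sum_primesBelow_le_tsum
    (g := fun p => 2 * |cos (θ / 2 * log p)| * (p : ℝ) ^ (-(1 + ε)))
    (fun n => by positivity) hsummable (N + 1)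
  have hsq := sum_primesBelow_le_tsum (g := fun p => 1 / (p : ℝ) ^ 2)
    (fun n => by positivity) summable_primes_inv_sq (N + 1)
  have htsum := tsum_two_abs_cos_primes_le hε hε1 hθ hθ1
  rw [one_div θ, log_inv] at htsum
  refine heuler.trans ?_
  rw [Finset.sum_add_distrib, ← Finset.mul_sum, rpow_def_of_pos (by positivity : 0 < 1 / ε),
    rpow_def_of_pos hθ, ← exp_add, ← exp_add, exp_le_exp]
  linarith [tsum_primes_inv_sq_le]

lemma four_div_pi_ge : 1.26 ≤ 4 / π := by
  rw [le_div_iff₀ pi_pos]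
  linarith [pi_lt_d2]

lemma integral_sum_twistTerm_le {ε : ℝ} (hε : 0 < ε) (hε1 : ε ≤ 1) (N : ℕ) :
    ∫ θ in (0 : ℝ)..1, ∑ a ∈ Finset.Icc 1 N, twistTerm ε θ a ≤
      4 * (exp 316 * (1 / ε) ^ (4 / π)) := by
  have hpi := four_div_pi_ge
  have hintegrable : IntervalIntegrable
      (fun θ : ℝ => exp 316 * (1 / ε) ^ (4 / π) * θ ^ (4 / π - 2)) MeasureTheory.volume 0 1 :=
    (intervalIntegral.intervalIntegrable_rpow' (by linarith)).const_mul _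
  calc ∫ θ in (0 : ℝ)..1, ∑ a ∈ Finset.Icc 1 N, twistTerm ε θ a
      ≤ ∫ θ in (0 : ℝ)..1, exp 316 * (1 / ε) ^ (4 / π) * θ ^ (4 / π - 2) :=
        intervalIntegral.integral_mono_on_of_le_Ioo zero_le_one
          (Continuous.intervalIntegrable
            (continuous_finsetSum _ fun a _ => continuous_twistTerm ε a) _ _)
          hintegrable fun θ hθ => sum_twistTerm_le hε hε1 hθ.1 hθ.2.le N
    _ = 1 / (4 / π - 1) * (exp 316 * (1 / ε) ^ (4 / π)) := by
        rw [intervalIntegral.integral_const_mul, integral_rpow (Or.inl (by linarith)), one_rpow,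
          zero_rpow (by linarith)]
        ring
    _ ≤ 4 * (exp 316 * (1 / ε) ^ (4 / π)) := by
        gcongr
        rw [div_le_iff₀ (by linarith)]
        linarith

/-- For `a ≤ x` the factor `a ^ (-1 / log x)` is at least `1 / e`. -/
lemma hooleyDelta_div_le_integral {x : ℝ} (hx : 1 < x) {a : ℕ} (ha : a ≠ 0) (hax : (a : ℝ) ≤ x) :
    (hooleyDelta a : ℝ) / a ≤ 16 / 7 * exp 1 * ∫ θ in (0 : ℝ)..1, twistTerm (1 / log x) θ a := by
  have ha0 : (0 : ℝ) < a := by positivity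
  have hone : 1 ≤ exp 1 * (a : ℝ) ^ (-(1 / log x)) := by
    have hlog : log a / log x ≤ 1 := div_le_one_of_le₀ (log_le_log ha0 hax) (log_pos hx).le
    rw [rpow_def_of_pos ha0, ← exp_add]
    refine one_le_exp ?_
    rw [mul_neg, mul_one_div]
    linarith
  have hinv : 1 / (a : ℝ) ≤ exp 1 * (a : ℝ) ^ (-(1 + 1 / log x)) := by
    rw [neg_add_rev, rpow_add ha0, rpow_neg_one, ← mul_assoc, one_div]
    exact le_mul_of_one_le_left (by positivity) hone
  have hnonneg : 0 ≤ ∫ θ in (0 : ℝ)..1, ‖divisorTwist θ a‖ :=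
    intervalIntegral.integral_nonneg zero_le_one fun _ _ => norm_nonneg _
  simp only [twistTerm]
  rw [intervalIntegral.integral_mul_const]
  calc (hooleyDelta a : ℝ) / a = hooleyDelta a * (1 / a) := by ring
    _ ≤ (16 / 7 * ∫ θ in (0 : ℝ)..1, ‖divisorTwist θ a‖) *
        (exp 1 * (a : ℝ) ^ (-(1 + 1 / log x))) := by
        gcongr
        exact hooleyDelta_le_integral a
    _ = _ := by ring

/-- The logarithmic mean `∑_{a ≤ x} Δ(a) / a`. -/
noncomputable def logMean (x : ℝ) : ℝ := ∑ a ∈ Finset.Icc 1 ⌊x⌋₊, (hooleyDelta a : ℝ) / a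

lemma logMean_nonneg (x : ℝ) : 0 ≤ logMean x := Finset.sum_nonneg fun _ _ => by positivity

lemma logMean_mono {x y : ℝ} (h : x ≤ y) : logMean x ≤ logMean y :=
  Finset.sum_le_sum_of_subset_of_nonneg
    (Finset.Icc_subset_Icc_right (Nat.floor_le_floor h)) fun _ _ _ => by positivity

lemma logMean_le {x : ℝ} (hx : exp 1 ≤ x) : logMean x ≤ exp 321 * log x ^ (4 / π) := by
  have hx1 : 1 < x := (one_lt_exp_iff.mpr one_pos).trans_le hx
  have hx0 : 0 < x := one_pos.trans hx1
  have hL : 1 ≤ log x := (le_log_iff_exp_le hx0).mpr hx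
  have hintegral := integral_sum_twistTerm_le (ε := 1 / log x) (by positivity)
    ((div_le_one (by positivity)).mpr hL) ⌊x⌋₊
  rw [one_div_one_div] at hintegral
  calc logMean x
      ≤ ∑ a ∈ Finset.Icc 1 ⌊x⌋₊,
          16 / 7 * exp 1 * ∫ θ in (0 : ℝ)..1, twistTerm (1 / log x) θ a := by
        refine Finset.sum_le_sum fun a ha => ?_
        rw [Finset.mem_Icc] at ha
        exact hooleyDelta_div_le_integral hx1 (by omega) ((Nat.le_floor_iff hx0.le).mp ha.2)
    _ = 16 / 7 * exp 1 *
          ∫ θ in (0 : ℝ)..1, ∑ a ∈ Finset.Icc 1 ⌊x⌋₊, twistTerm (1 / log x) θ a := by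
        rw [← Finset.mul_sum, intervalIntegral.integral_finsetSum
          fun a _ => (continuous_twistTerm _ a).intervalIntegrable _ _]
    _ ≤ 16 / 7 * exp 1 * (4 * (exp 316 * log x ^ (4 / π))) := by gcongr
    _ = 64 / 7 * exp 317 * log x ^ (4 / π) := by
        rw [show (317 : ℝ) = 316 + 1 by norm_num, exp_add]
        ring
    _ ≤ exp 4 * exp 317 * log x ^ (4 / π) := by
        gcongr
        calc (64 / 7 : ℝ) ≤ 2 ^ 4 := by norm_num
          _ ≤ exp 1 ^ 4 := by gcongr; linarith [add_one_le_exp (1 : ℝ)]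
          _ = exp 4 := by rw [← exp_nat_mul]; norm_num
    _ = exp 321 * log x ^ (4 / π) := by rw [← exp_add]; norm_num

/-! ### Rankin weights and sums over smooth numbers -/

/-- The arithmetic function `n ↦ n^β`, set to `0` at `0`. -/
noncomputable def rpowArith (β : ℝ) : ArithmeticFunction ℝ :=
  ⟨fun n => if n = 0 then 0 else (n : ℝ) ^ β, if_pos rfl⟩

lemma rpowArith_apply (β : ℝ) {n : ℕ} (hn : n ≠ 0) : rpowArith β n = (n : ℝ) ^ β :=
  if_neg hn

lemma isMultiplicative_rpowArith (β : ℝ) : (rpowArith β).IsMultiplicative := by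
  rw [ArithmeticFunction.IsMultiplicative.iff_ne_zero]
  refine ⟨by simp [rpowArith], fun {m n} hm hn _ => ?_⟩
  rw [rpowArith_apply β hm, rpowArith_apply β hn, rpowArith_apply β (mul_ne_zero hm hn),
    Nat.cast_mul, mul_rpow (Nat.cast_nonneg _) (Nat.cast_nonneg _)]

/-- The Möbius inverse of `n ↦ n^β`; Jordan's totient for integral `β`. -/
noncomputable def jordanRpow (β : ℝ) : ArithmeticFunction ℝ :=
  rpowArith β * (ArithmeticFunction.moebius : ArithmeticFunction ℝ)

lemma jordanRpow_mul_zeta (β : ℝ) :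
    jordanRpow β * (ArithmeticFunction.zeta : ArithmeticFunction ℝ) = rpowArith β := by
  rw [jordanRpow, mul_assoc, ArithmeticFunction.coe_moebius_mul_coe_zeta, mul_one]

lemma isMultiplicative_jordanRpow (β : ℝ) : (jordanRpow β).IsMultiplicative :=
  (isMultiplicative_rpowArith β).mul ArithmeticFunction.isMultiplicative_moebius.intCast

lemma sum_divisors_jordanRpow (β : ℝ) {n : ℕ} (hn : n ≠ 0) :
    ∑ d ∈ n.divisors, jordanRpow β d = (n : ℝ) ^ β := by
  rw [← ArithmeticFunction.coe_mul_zeta_apply, jordanRpow_mul_zeta, rpowArith_apply β hn]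

lemma jordanRpow_prime_pow (β : ℝ) {p : ℕ} (hp : p.Prime) (k : ℕ) :
    jordanRpow β (p ^ (k + 1)) = ((p : ℝ) ^ β) ^ (k + 1) - ((p : ℝ) ^ β) ^ k := by
  have hsucc := sum_divisors_jordanRpow β (pow_ne_zero (k + 1) hp.ne_zero)
  have hpred := sum_divisors_jordanRpow β (pow_ne_zero k hp.ne_zero)
  rw [Nat.sum_divisors_prime_pow hp] at hsucc hpred
  rw [Finset.sum_range_succ, hpred] at hsucc
  have hpow : ∀ j : ℕ, ((p ^ j : ℕ) : ℝ) ^ β = ((p : ℝ) ^ β) ^ j := fun j => by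
    rw [Nat.cast_pow, ← rpow_natCast_mul p.cast_nonneg,
      ← rpow_mul_natCast p.cast_nonneg, mul_comm]
  rw [hpow, hpow] at hsucc
  linarith

lemma jordanRpow_nonneg {β : ℝ} (hβ : 0 ≤ β) (n : ℕ) : 0 ≤ jordanRpow β n := by
  rcases eq_or_ne n 0 with rfl | hn
  · simp
  rw [(isMultiplicative_jordanRpow β).multiplicative_factorization _ hn]
  refine Finset.prod_nonneg fun p hp => ?_
  have hpp : p.Prime := Nat.prime_of_mem_primeFactors hp
  have hone : 1 ≤ (p : ℝ) ^ β := one_le_rpow (by exact_mod_cast hpp.one_le) hβ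
  rcases n.factorization p with _ | k
  · simp [(isMultiplicative_jordanRpow β).map_one]
  · refine (sub_nonneg.mpr ?_).trans_eq (jordanRpow_prime_pow β hpp k).symm
    exact pow_le_pow_right₀ hone (Nat.le_succ k)

/-- The multiplicative weight `τ(d) J(d) / d`, with `J` the Möbius inverse of `n ↦ n^β`. -/
noncomputable def rankinWeight (β : ℝ) (d : ℕ) : ℝ := d.divisors.card * jordanRpow β d / d

lemma rankinWeight_nonneg {β : ℝ} (hβ : 0 ≤ β) (d : ℕ) : 0 ≤ rankinWeight β d :=
  div_nonneg (mul_nonneg (Nat.cast_nonneg _) (jordanRpow_nonneg hβ d)) (Nat.cast_nonneg _)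

lemma rankinWeight_one (β : ℝ) : rankinWeight β 1 = 1 := by
  simp [rankinWeight, (isMultiplicative_jordanRpow β).map_one]

lemma rankinWeight_mul (β : ℝ) {m n : ℕ} (h : m.Coprime n) :
    rankinWeight β (m * n) = rankinWeight β m * rankinWeight β n := by
  rw [rankinWeight, (isMultiplicative_jordanRpow β).map_mul_of_coprime h, h.card_divisors_mul,
    rankinWeight, rankinWeight, div_mul_div_comm]
  push_cast
  ring

lemma hasSum_add_two_mul_pow :
    HasSum (fun k : ℕ => ((k : ℝ) + 2) * (71 / 100) ^ k) (12900 / 841) := by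
  have hcoe := hasSum_coe_mul_geometric_of_norm_lt_one (𝕜 := ℝ) (r := 71 / 100) (by norm_num)
  have hgeom := (hasSum_geometric_of_lt_one (r := (71 / 100 : ℝ)) (by norm_num)
    (by norm_num)).mul_left 2
  convert! hcoe.add hgeom using 1
  · ext k; ring
  · norm_num

lemma inv_sqrt_prime_le {p : ℕ} (hp : p.Prime) : (√p)⁻¹ ≤ 71 / 100 := by
  have hp2 : (2 : ℝ) ≤ p := by exact_mod_cast hp.two_le
  rw [inv_le_comm₀ (sqrt_pos.mpr (by linarith)) (by norm_num)]
  exact le_sqrt_of_sq_le (by linarith)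

lemma prime_rpow_sub_one_le {β : ℝ} (hβ1 : β ≤ 1 / 2) {p : ℕ} (hp : p.Prime) :
    (p : ℝ) ^ (β - 1) ≤ 71 / 100 := by
  calc (p : ℝ) ^ (β - 1) ≤ (p : ℝ) ^ (-(1 / 2) : ℝ) :=
        rpow_le_rpow_of_exponent_le (by exact_mod_cast hp.one_le) (by linarith)
    _ = (√p)⁻¹ := by rw [rpow_neg (Nat.cast_nonneg _), sqrt_eq_rpow]
    _ ≤ 71 / 100 := inv_sqrt_prime_le hp

lemma rankinWeight_prime_pow (β : ℝ) {p : ℕ} (hp : p.Prime) (k : ℕ) :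
    rankinWeight β (p ^ (k + 1)) =
      ((k : ℝ) + 2) * ((p : ℝ) ^ (β - 1)) ^ (k + 1) * (1 - ((p : ℝ) ^ β)⁻¹) := by
  have hp0 : (0 : ℝ) < p := by exact_mod_cast hp.pos
  have : 0 < (p : ℝ) ^ (β - 1) := by positivity
  have hpr : (p : ℝ) ^ β = (p : ℝ) ^ (β - 1) * p := by
    rw [← rpow_add_one hp0.ne', sub_add_cancel]
  rw [rankinWeight, card_divisors_prime_pow hp, jordanRpow_prime_pow β hp, hpr]
  push_cast
  field_simp
  ring

lemma rankinWeight_prime_pow_le {β : ℝ} (hβ : 0 ≤ β) (hβ1 : β ≤ 1 / 2) {p : ℕ} (hp : p.Prime)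
    (k : ℕ) : rankinWeight β (p ^ (k + 1)) ≤
      (p : ℝ) ^ (β - 1) * (β * log p) * (((k : ℝ) + 2) * (71 / 100) ^ k) := by
  have hp0 : (0 : ℝ) < p := by exact_mod_cast hp.pos
  have : 0 ≤ log p := log_natCast_nonneg p
  have hinv : 1 - ((p : ℝ) ^ β)⁻¹ ≤ β * log p := by
    rw [← rpow_neg hp0.le, rpow_def_of_pos hp0]
    linarith [add_one_le_exp (log p * -β)]
  rw [rankinWeight_prime_pow β hp]
  set r := (p : ℝ) ^ (β - 1)
  calc ((k : ℝ) + 2) * r ^ (k + 1) * (1 - ((p : ℝ) ^ β)⁻¹)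
      ≤ ((k : ℝ) + 2) * r ^ (k + 1) * (β * log p) := by gcongr
    _ = r * (β * log p) * (((k : ℝ) + 2) * r ^ k) := by ring
    _ ≤ r * (β * log p) * (((k : ℝ) + 2) * (71 / 100) ^ k) := by
        gcongr
        exact prime_rpow_sub_one_le hβ1 hp

lemma summable_rankinWeight_prime_pow {β : ℝ} (hβ : 0 ≤ β) (hβ1 : β ≤ 1 / 2) {p : ℕ}
    (hp : p.Prime) : Summable fun k : ℕ => rankinWeight β (p ^ k) :=
  (summable_nat_add_iff 1).mp <| Summable.of_nonneg_of_le (fun _ => rankinWeight_nonneg hβ _)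
    (fun k => rankinWeight_prime_pow_le hβ hβ1 hp k) (hasSum_add_two_mul_pow.summable.mul_left _)

lemma tsum_rankinWeight_prime_pow_le {β : ℝ} (hβ : 0 ≤ β) (hβ1 : β ≤ 1 / 2) {p : ℕ}
    (hp : p.Prime) :
    ∑' k : ℕ, rankinWeight β (p ^ k) ≤ 1 + 16 * (p : ℝ) ^ (β - 1) * (β * log p) := by
  have hs := summable_rankinWeight_prime_pow hβ hβ1 hp
  have : 0 ≤ log p := log_natCast_nonneg p
  rw [hs.tsum_eq_zero_add, pow_zero, rankinWeight_one]
  have htail := ((summable_nat_add_iff 1).mpr hs).tsum_le_tsum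
    (fun k => rankinWeight_prime_pow_le hβ hβ1 hp k) (hasSum_add_two_mul_pow.summable.mul_left _)
  rw [tsum_mul_left, hasSum_add_two_mul_pow.tsum_eq] at htail
  have hnonneg : 0 ≤ (p : ℝ) ^ (β - 1) * (β * log p) := by positivity
  linarith

lemma log_four_le_two : log 4 ≤ 2 := by
  rw [show (4 : ℝ) = 2 ^ 2 by norm_num, log_pow, Nat.cast_ofNat]
  linarith [log_two_lt_d9]

lemma sum_primesBelow_log_div_le {N : ℕ} (hN : 1 ≤ N) :
    ∑ p ∈ N.primesBelow, log p / (p : ℝ) ≤ log N + 2 := by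
  calc ∑ p ∈ N.primesBelow, log p / (p : ℝ) ≤ ∑ p ∈ (N + 1).primesBelow, log p / (p : ℝ) := by
        refine Finset.sum_le_sum_of_subset_of_nonneg (fun p hp => ?_)
          fun p _ _ => div_nonneg (log_natCast_nonneg p) (Nat.cast_nonneg _)
        rw [Nat.mem_primesBelow] at hp ⊢
        exact ⟨hp.1.trans (Nat.lt_succ_self N), hp.2⟩
    _ ≤ log N + log 4 := sum_log_div_primesBelow_le hN
    _ ≤ log N + 2 := by linarith [log_four_le_two]

/-- The constant in Rankin's bound for sums over the `N`-smooth `a` weighted by `a ^ β`, where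
`β * log N ≤ κ`. -/
noncomputable def rankinConst (κ : ℝ) : ℝ := exp (16 * exp κ * (κ + 1))

lemma sum_rankinWeight_le {β κ : ℝ} (hβ : 0 ≤ β) (hβ1 : β ≤ 1 / 2) {N : ℕ} (hN : 1 ≤ N)
    (hκ : β * log N ≤ κ) {S : Finset ℕ} (hS : ∀ a ∈ S, a ∈ N.smoothNumbers) :
    ∑ d ∈ S, rankinWeight β d ≤ rankinConst κ := by
  have hfactor : ∀ {p : ℕ}, p.Prime → p < N →
      ∑' k : ℕ, rankinWeight β (p ^ k) ≤ 1 + 16 * exp κ * β * (log p / p) := fun {p} hp hpN => by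
    have hp0 : (0 : ℝ) < p := by exact_mod_cast hp.pos
    have : 0 ≤ log p := log_natCast_nonneg p
    have hrpow : (p : ℝ) ^ (β - 1) ≤ exp κ / p := by
      rw [rpow_sub_one hp0.ne', rpow_def_of_pos hp0]
      have : log p ≤ log N := log_le_log hp0 (by exact_mod_cast hpN.le)
      gcongr
      nlinarith
    calc ∑' k : ℕ, rankinWeight β (p ^ k) ≤ 1 + 16 * (p : ℝ) ^ (β - 1) * (β * log p) :=
          tsum_rankinWeight_prime_pow_le hβ hβ1 hp
      _ ≤ 1 + 16 * (exp κ / p) * (β * log p) := by gcongr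
      _ = 1 + 16 * exp κ * β * (log p / p) := by ring
  refine (sum_le_exp_sum_primesBelow (rankinWeight_nonneg hβ) (rankinWeight_one β)
    (rankinWeight_mul β) (fun hp => summable_rankinWeight_prime_pow hβ hβ1 hp) hfactor hS).trans ?_
  rw [rankinConst, exp_le_exp, ← Finset.mul_sum]
  calc 16 * exp κ * β * ∑ p ∈ N.primesBelow, log p / (p : ℝ)
      ≤ 16 * exp κ * β * (log N + 2) := by
        gcongr
        exact sum_primesBelow_log_div_le hN
    _ = 16 * exp κ * (β * log N + β * 2) := by ring
    _ ≤ 16 * exp κ * (κ + 1) := by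
        gcongr
        linarith

lemma sum_sum_divisorsAntidiagonal_le {f g : ℕ → ℝ} (hf : ∀ d, 0 ≤ f d) (hg : ∀ m, 0 ≤ g m)
    {S T U : Finset ℕ} (hT : ∀ a ∈ S, a.divisors ⊆ T) (hU : ∀ a ∈ S, a.divisors ⊆ U) :
    ∑ a ∈ S, ∑ d ∈ a.divisorsAntidiagonal, f d.1 * g d.2 ≤ (∑ d ∈ T, f d) * ∑ m ∈ U, g m := by
  classical
  calc ∑ a ∈ S, ∑ d ∈ a.divisorsAntidiagonal, f d.1 * g d.2
      = ∑ d ∈ S.biUnion Nat.divisorsAntidiagonal, f d.1 * g d.2 := by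
        rw [Finset.sum_biUnion]
        intro a _ b _ hab
        refine Finset.disjoint_left.mpr fun d hda hdb => hab ?_
        rw [Nat.mem_divisorsAntidiagonal] at hda hdb
        exact hda.1.symm.trans hdb.1
    _ ≤ ∑ d ∈ T ×ˢ U, f d.1 * g d.2 := by
        refine Finset.sum_le_sum_of_subset_of_nonneg (Finset.biUnion_subset.mpr fun a ha d hd => ?_)
          fun d _ _ => mul_nonneg (hf _) (hg _)
        exact Finset.mem_product.mpr ⟨hT a ha (Nat.fst_mem_divisors_of_mem_antidiagonal hd),
          hU a ha (Nat.snd_mem_divisors_of_mem_antidiagonal hd)⟩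
    _ = (∑ d ∈ T, f d) * ∑ m ∈ U, g m := by rw [Finset.sum_product, Finset.sum_mul_sum]

/-- Expand `a ^ β` as a divisor sum of its Möbius inverse. -/
lemma hooleyDelta_div_mul_rpow_le {β : ℝ} (hβ : 0 ≤ β) {a : ℕ} (ha : a ≠ 0) :
    (hooleyDelta a : ℝ) / a * (a : ℝ) ^ β ≤
      ∑ d ∈ a.divisorsAntidiagonal, rankinWeight β d.1 * ((hooleyDelta d.2 : ℝ) / d.2) := by
  rw [← sum_divisors_jordanRpow β ha, Finset.mul_sum, Nat.sum_divisorsAntidiagonal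
    (f := fun i j => rankinWeight β i * ((hooleyDelta j : ℝ) / j))]
  refine Finset.sum_le_sum fun d hd => ?_
  obtain ⟨m, rfl⟩ := (Nat.mem_divisors.mp hd).1
  have hd0 : d ≠ 0 := left_ne_zero_of_mul ha
  have hdelta : (hooleyDelta (d * m) : ℝ) ≤ d.divisors.card * hooleyDelta m := by
    rw [mul_comm d m]
    exact_mod_cast hooleyDelta_mul_le m hd0
  have hjordan := jordanRpow_nonneg hβ d
  rw [Nat.mul_div_cancel_left m (Nat.pos_of_ne_zero hd0), rankinWeight, Nat.cast_mul]
  calc (hooleyDelta (d * m) : ℝ) / (d * m) * jordanRpow β d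
      ≤ d.divisors.card * hooleyDelta m / (d * m) * jordanRpow β d := by gcongr
    _ = d.divisors.card * jordanRpow β d / d * (hooleyDelta m / m) := by ring

lemma sum_smooth_hooleyDelta_rpow_le {x β κ : ℝ} (hβ : 0 ≤ β) (hβ1 : β ≤ 1 / 2) {N : ℕ}
    (hN : 1 ≤ N) (hκ : β * log N ≤ κ) {S : Finset ℕ}
    (hS : ∀ a ∈ S, a ∈ N.smoothNumbers ∧ (a : ℝ) ≤ x) :
    ∑ a ∈ S, (hooleyDelta a : ℝ) / a * (a : ℝ) ^ β ≤
      rankinConst κ * logMean x := by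
  classical
  have hdiv : ∀ a ∈ S, ∀ d ∈ a.divisors, d ∈ Finset.Icc 1 ⌊x⌋₊ ∧ d ∈ N.smoothNumbers :=
    fun a ha d hd => ⟨Finset.mem_Icc.mpr ⟨Nat.pos_of_mem_divisors hd,
      (Nat.divisor_le hd).trans (Nat.le_floor (hS a ha).2)⟩,
      Nat.mem_smoothNumbers_of_dvd (hS a ha).1 (Nat.dvd_of_mem_divisors hd)⟩
  calc ∑ a ∈ S, (hooleyDelta a : ℝ) / a * (a : ℝ) ^ β
      ≤ ∑ a ∈ S, ∑ d ∈ a.divisorsAntidiagonal,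
          rankinWeight β d.1 * ((hooleyDelta d.2 : ℝ) / d.2) :=
        Finset.sum_le_sum fun a ha =>
          hooleyDelta_div_mul_rpow_le hβ (Nat.ne_zero_of_mem_smoothNumbers (hS a ha).1)
    _ ≤ (∑ d ∈ Finset.Icc 1 ⌊x⌋₊ with d ∈ N.smoothNumbers, rankinWeight β d) *
          logMean x :=
        sum_sum_divisorsAntidiagonal_le (g := fun m => (hooleyDelta m : ℝ) / m)
          (rankinWeight_nonneg hβ) (fun m => by positivity)
          (fun a ha d hd => Finset.mem_filter.mpr (hdiv a ha d hd))
          (fun a ha d hd => (hdiv a ha d hd).1)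
    _ ≤ rankinConst κ * logMean x := by
        gcongr
        · exact logMean_nonneg x
        · exact sum_rankinWeight_le hβ hβ1 hN hκ fun a ha => (Finset.mem_filter.mp ha).2

lemma sum_Icc_inv_sqrt_le (N : ℕ) : ∑ n ∈ Finset.Icc 1 N, (√n)⁻¹ ≤ 2 * √N := by
  induction N with
  | zero => simp
  | succ N ih =>
    rw [Finset.sum_Icc_succ_top (by omega)]
    push_cast
    set b := √((N : ℝ) + 1)
    set a := √(N : ℝ)
    have ha0 : 0 ≤ a := sqrt_nonneg _
    have hb0 : 0 < b := sqrt_pos.mpr (by positivity)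
    have ha2 : a ^ 2 = N := sq_sqrt (Nat.cast_nonneg _)
    have hb2 : b ^ 2 = N + 1 := sq_sqrt (by positivity)
    have hab : a ≤ b := sqrt_le_sqrt (by linarith)
    have hterm : b⁻¹ ≤ 2 * (b - a) := by
      rw [inv_eq_one_div, div_le_iff₀ hb0]
      nlinarith
    linarith

lemma hasSum_inv_sqrt_prime_pow {p : ℕ} (hp : p.Prime) :
    HasSum (fun k : ℕ => (√((p ^ k : ℕ) : ℝ))⁻¹) (1 - (√p)⁻¹)⁻¹ := by
  have hpow : ∀ k : ℕ, (√((p ^ k : ℕ) : ℝ))⁻¹ = (√p)⁻¹ ^ k := fun k => by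
    rw [Nat.cast_pow, inv_pow, sqrt_eq_rpow, sqrt_eq_rpow, rpow_pow_comm p.cast_nonneg]
  simp only [hpow]
  exact hasSum_geometric_of_lt_one (by positivity) (by linarith [inv_sqrt_prime_le hp])

lemma sum_smooth_inv_sqrt_le (N : ℕ) {S : Finset ℕ} (hS : ∀ a ∈ S, a ∈ N.smoothNumbers) :
    ∑ a ∈ S, (√a)⁻¹ ≤ exp (8 * √N) := by
  have hfactor : ∀ {p : ℕ}, p.Prime → p < N →
      ∑' k : ℕ, (√((p ^ k : ℕ) : ℝ))⁻¹ ≤ 1 + 4 * (√p)⁻¹ := fun {p} hp _ => by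
    have hle := inv_sqrt_prime_le hp
    have hnonneg : 0 ≤ (√p)⁻¹ := by positivity
    rw [(hasSum_inv_sqrt_prime_pow hp).tsum_eq, inv_le_comm₀ (by linarith) (by linarith),
      inv_eq_one_div, div_le_iff₀ (by linarith)]
    nlinarith
  refine (sum_le_exp_sum_primesBelow (f := fun n : ℕ => (√n)⁻¹) (fun n => by positivity) (by simp)
    (fun {m n} _ => by rw [Nat.cast_mul, sqrt_mul (Nat.cast_nonneg _), mul_inv])
    (fun hp => (hasSum_inv_sqrt_prime_pow hp).summable) hfactor hS).trans (exp_le_exp.mpr ?_)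
  have hsub : ∑ p ∈ N.primesBelow, (√p)⁻¹ ≤ ∑ n ∈ Finset.Icc 1 N, (√n)⁻¹ := by
    refine Finset.sum_le_sum_of_subset_of_nonneg (fun p hp => ?_) fun p _ _ => by positivity
    rw [Nat.mem_primesBelow] at hp
    exact Finset.mem_Icc.mpr ⟨hp.2.one_le, hp.1.le⟩
  rw [← Finset.mul_sum]
  linarith [sum_Icc_inv_sqrt_le N]

/-! ### Threshold decompositions -/

lemma mem_of_prime_dvd_prod_pow {s : Finset ℕ} (hs : ∀ r ∈ s, r.Prime) {f : ℕ → ℕ} {p : ℕ}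
    (hp : p.Prime) (hdvd : p ∣ ∏ r ∈ s, r ^ f r) : p ∈ s := by
  obtain ⟨r, hr, hpr⟩ := (hp.prime.dvd_finsetProd_iff _).mp hdvd
  rwa [(Nat.prime_dvd_prime_iff_eq hp (hs r hr)).mp (hp.dvd_of_dvd_pow hpr)]

/-- The largest divisor of `n` all of whose prime factors are less than `q`, for `n ≠ 0`. -/
def smoothPart (q n : ℕ) : ℕ :=
  ∏ p ∈ n.primeFactors.filter (· < q), p ^ n.factorization p

/-- The largest divisor of `n` all of whose prime factors are at least `q`, for `n ≠ 0`. -/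
def roughPart (q n : ℕ) : ℕ :=
  ∏ p ∈ n.primeFactors.filter (¬ · < q), p ^ n.factorization p

lemma prime_of_mem_filter_primeFactors {P : ℕ → Prop} [DecidablePred P] {n p : ℕ}
    (hp : p ∈ n.primeFactors.filter P) : p.Prime :=
  Nat.prime_of_mem_primeFactors (Finset.mem_of_mem_filter p hp)

lemma smoothPart_mul_roughPart (q : ℕ) {n : ℕ} (hn : n ≠ 0) :
    smoothPart q n * roughPart q n = n := by
  rw [smoothPart, roughPart, Finset.prod_filter_mul_prod_filter_not]
  exact Nat.prod_factorization_pow_eq_self hn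

lemma smoothPart_mem_smoothNumbers (q n : ℕ) : smoothPart q n ∈ q.smoothNumbers :=
  Nat.mem_smoothNumbers'.mpr fun _ hp hdvd => (Finset.mem_filter.mp
    (mem_of_prime_dvd_prod_pow (fun _ => prime_of_mem_filter_primeFactors) hp hdvd)).2

lemma isRough_roughPart (q n : ℕ) : IsRough q (roughPart q n) := fun _ hp hdvd => by
  exact_mod_cast not_lt.mp (Finset.mem_filter.mp
    (mem_of_prime_dvd_prod_pow (fun _ => prime_of_mem_filter_primeFactors) hp hdvd)).2

lemma smoothPart_zero_left (n : ℕ) : smoothPart 0 n = 1 := by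
  simp [smoothPart]

lemma smoothPart_eq_self {q n : ℕ} (hn : n ≠ 0) (hq : n < q) : smoothPart q n = n := by
  rw [smoothPart, Finset.filter_true_of_mem fun p hp => (Nat.le_of_mem_primeFactors hp).trans_lt hq]
  exact Nat.prod_factorization_pow_eq_self hn

lemma smoothPart_succ_of_mem {q n : ℕ} (hq : q ∈ n.primeFactors) :
    smoothPart (q + 1) n = smoothPart q n * q ^ n.factorization q := by
  have : n.primeFactors.filter (· < q + 1) = insert q (n.primeFactors.filter (· < q)) := by
    ext p
    simp only [Finset.mem_filter, Finset.mem_insert, Nat.lt_succ_iff_lt_or_eq]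
    grind
  rw [smoothPart, this, Finset.prod_insert (by simp), smoothPart, mul_comm]

lemma smoothPart_succ_of_notMem {q n : ℕ} (hq : q ∉ n.primeFactors) :
    smoothPart (q + 1) n = smoothPart q n := by
  rw [smoothPart, smoothPart]
  congr 1
  refine Finset.filter_congr fun p hp => ?_
  have : p ≠ q := fun h => hq (h ▸ hp)
  omega

lemma dvd_roughPart {q n : ℕ} (hq : q ∈ n.primeFactors) : q ∣ roughPart q n := by
  obtain ⟨hp, hdvd, hn⟩ := Nat.mem_primeFactors.mp hq
  exact (dvd_pow_self q (hp.factorization_pos_of_dvd hn hdvd).ne').trans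
    (Finset.dvd_prod_of_mem _ (Finset.mem_filter.mpr ⟨hq, lt_irrefl q⟩))

/-- A threshold decomposition: `n = a * b`, where `a ≤ Z` collects the prime factors of `n` less
than the prime `q ∣ b`, and `Z < a * q ^ v_q(n)`. -/
structure ThresholdDecomp (Z : ℝ) (n q a b : ℕ) : Prop where
  prime : q.Prime
  eq_mul : n = a * b
  dvd : q ∣ b
  smooth : a ∈ q.smoothNumbers
  rough : IsRough q b
  le : (a : ℝ) ≤ Z
  lt : Z < a * (q : ℝ) ^ n.factorization q

lemma ThresholdDecomp.left_ne_zero {Z : ℝ} {n q a b : ℕ} (h : ThresholdDecomp Z n q a b) :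
    a ≠ 0 :=
  Nat.ne_zero_of_mem_smoothNumbers h.smooth

lemma ThresholdDecomp.mem_Icc {Z : ℝ} {n q a b : ℕ} (h : ThresholdDecomp Z n q a b) :
    a ∈ Finset.Icc 1 ⌊Z⌋₊ :=
  Finset.mem_Icc.mpr ⟨Nat.pos_of_ne_zero h.left_ne_zero, Nat.le_floor h.le⟩

lemma exists_thresholdDecomp {Z : ℝ} (hZ : 1 ≤ Z) {n : ℕ} (hnZ : Z < n) :
    ∃ q a b : ℕ, ThresholdDecomp Z n q a b := by
  classical
  have hn : n ≠ 0 := by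
    rintro rfl
    rw [Nat.cast_zero] at hnZ
    linarith
  have hex : ∃ m : ℕ, Z < smoothPart m n :=
    ⟨n + 1, by rwa [smoothPart_eq_self hn n.lt_succ_self]⟩
  have hfind0 : Nat.find hex ≠ 0 := fun h => by
    have := Nat.find_spec hex
    rw [h, smoothPart_zero_left, Nat.cast_one] at this
    linarith
  obtain ⟨q, hq⟩ := Nat.exists_eq_add_one_of_ne_zero hfind0
  have hlt : Z < smoothPart (q + 1) n := hq ▸ Nat.find_spec hex
  have hle : (smoothPart q n : ℝ) ≤ Z := not_lt.mp (Nat.find_min hex (by omega))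
  have hmem : q ∈ n.primeFactors := by
    by_contra h
    rw [smoothPart_succ_of_notMem h] at hlt
    linarith
  rw [smoothPart_succ_of_mem hmem] at hlt
  exact ⟨q, smoothPart q n, roughPart q n, Nat.prime_of_mem_primeFactors hmem,
    (smoothPart_mul_roughPart q hn).symm, dvd_roughPart hmem, smoothPart_mem_smoothNumbers q n,
    isRough_roughPart q n, hle, by exact_mod_cast hlt⟩

lemma card_filter_dvd_intervalNat_le {u Y : ℝ} (hu : 0 ≤ u) {m : ℕ} (hm : m ≠ 0)
    (hmY : (m : ℝ) ≤ Y) : (((intervalNat u Y).filter (m ∣ ·)).card : ℝ) ≤ 2 * Y / m := by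
  have hm0 : (0 : ℝ) < m := by exact_mod_cast Nat.pos_of_ne_zero hm
  have hcard := (abs_le.mp (abs_card_filter_dvd_intervalNat_sub_le hu (hm0.le.trans hmY) m)).2
  have hone : 1 ≤ Y / m := by rwa [le_div_iff₀ hm0, one_mul]
  calc (((intervalNat u Y).filter (m ∣ ·)).card : ℝ) ≤ Y / m + Y / m := by linarith
    _ = 2 * Y / m := by ring

open scoped Classical in
lemma card_mul_isRough_intervalNat_le {u Y z : ℝ} (hu : 0 ≤ u) (hz : 2 ≤ z) {m : ℕ}
    (hm : m ≠ 0) (hY : z ^ 2 * log z ≤ Y / m) :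
    (((intervalNat u Y).filter fun n => ∃ b : ℕ, n = m * b ∧ IsRough z b).card : ℝ) ≤
      5 * (Y / m) / log z := by
  have hm0 : (0 : ℝ) < m := by exact_mod_cast Nat.pos_of_ne_zero hm
  have hlog : 0 < log z := log_pos (by linarith)
  have hYm : 0 ≤ Y / m := le_trans (by positivity) hY
  have hY0 : 0 ≤ Y := by
    simpa [div_mul_cancel₀ _ hm0.ne'] using mul_nonneg hYm hm0.le
  have hsub : ((intervalNat u Y).filter fun n => ∃ b : ℕ, n = m * b ∧ IsRough z b) ⊆
      ((intervalNat (u / m) (Y / m)).filter (IsRough z)).image (m * ·) := by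
    intro n hn
    rw [Finset.mem_filter, mem_intervalNat hu hY0] at hn
    obtain ⟨⟨hlow, hup⟩, b, rfl, hb⟩ := hn
    push_cast at hlow hup
    refine Finset.mem_image.mpr ⟨b, Finset.mem_filter.mpr
      ⟨(mem_intervalNat (div_nonneg hu hm0.le) hYm).mpr ⟨?_, ?_⟩, hb⟩, rfl⟩
    · rwa [div_lt_iff₀' hm0]
    · rwa [← add_div, le_div_iff₀' hm0]
  refine le_trans ?_ (card_isRough_intervalNat_le (div_nonneg hu hm0.le) hz hY)
  exact_mod_cast (Finset.card_le_card hsub).trans Finset.card_image_le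

/-! ### Sums over the classes of a threshold decomposition -/

lemma sum_filter_le_sum_mul_card {α ι : Type*} {I : Finset α} {P : α → Prop} [DecidablePred P]
    {J : Finset ι} {Q : ι → α → Prop} [∀ j, DecidablePred (Q j)] {F : α → ℝ} {c K : ι → ℝ}
    (hc : ∀ j ∈ J, 0 ≤ c j) (hF : ∀ n ∈ I, P n → ∃ j ∈ J, Q j n ∧ F n ≤ c j)
    (hK : ∀ j ∈ J, ((I.filter (Q j)).card : ℝ) ≤ K j) :
    ∑ n ∈ I.filter P, F n ≤ ∑ j ∈ J, c j * K j := by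
  have hterm : ∀ n, ∀ j ∈ J, 0 ≤ if Q j n then c j else 0 := fun n j hj => by
    split_ifs
    exacts [hc j hj, le_rfl]
  calc ∑ n ∈ I.filter P, F n ≤ ∑ n ∈ I.filter P, ∑ j ∈ J, if Q j n then c j else 0 := by
        refine Finset.sum_le_sum fun n hn => ?_
        rw [Finset.mem_filter] at hn
        obtain ⟨j, hj, hQ, hle⟩ := hF n hn.1 hn.2
        calc F n ≤ if Q j n then c j else 0 := by rwa [if_pos hQ]
          _ ≤ _ := Finset.single_le_sum (hterm n) hj
    _ ≤ ∑ n ∈ I, ∑ j ∈ J, if Q j n then c j else 0 :=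
        Finset.sum_le_sum_of_subset_of_nonneg (Finset.filter_subset _ _) fun n _ _ =>
          Finset.sum_nonneg (hterm n)
    _ = ∑ j ∈ J, c j * (I.filter (Q j)).card := by
        rw [Finset.sum_comm]
        refine Finset.sum_congr rfl fun j _ => ?_
        rw [← Finset.sum_filter, Finset.sum_const, nsmul_eq_mul, mul_comm]
    _ ≤ _ := Finset.sum_le_sum fun j hj => mul_le_mul_of_nonneg_left (hK j hj) (hc j hj)

lemma sum_filter_le_hooleyDelta_le {u Y Z : ℝ} (hZ : 0 ≤ Z) :
    ∑ n ∈ (intervalNat u Y).filter (fun n : ℕ => (n : ℝ) ≤ Z), (hooleyDelta n : ℝ) ≤ Z ^ 2 := by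
  have hsub : (intervalNat u Y).filter (fun n : ℕ => (n : ℝ) ≤ Z) ⊆ Finset.Icc 1 ⌊Z⌋₊ := by
    intro n hn
    rw [Finset.mem_filter] at hn
    exact Finset.mem_Icc.mpr ⟨pos_of_mem_intervalNat hn.1, Nat.le_floor hn.2⟩
  calc _ ≤ ∑ n ∈ Finset.Icc 1 ⌊Z⌋₊, (hooleyDelta n : ℝ) :=
        Finset.sum_le_sum_of_subset_of_nonneg hsub fun _ _ _ => by positivity
    _ ≤ ∑ _n ∈ Finset.Icc 1 ⌊Z⌋₊, Z := by
        refine Finset.sum_le_sum fun n hn => ?_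
        have hself : (hooleyDelta n : ℝ) ≤ n := by
          exact_mod_cast (hooleyDelta_le_card_divisors n).trans (Nat.card_divisors_le_self n)
        exact hself.trans ((Nat.le_floor_iff hZ).mp (Finset.mem_Icc.mp hn).2)
    _ ≤ Z * Z := by
        rw [Finset.sum_const, Nat.card_Icc, Nat.add_sub_cancel, nsmul_eq_mul]
        exact mul_le_mul_of_nonneg_right (Nat.floor_le hZ) hZ
    _ = Z ^ 2 := (sq Z).symm

lemma ThresholdDecomp.hooleyDelta_le {x Z z : ℝ} {n q a b : ℕ} (h : ThresholdDecomp Z n q a b)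
    (hz : 1 < z) (hzq : z ≤ q) (hn : n ≠ 0) (hnx : (n : ℝ) ≤ x) :
    (hooleyDelta n : ℝ) ≤ 2 ^ (log x / log z) * hooleyDelta a := by
  have hb : b ≠ 0 := right_ne_zero_of_mul (h.eq_mul ▸ hn)
  have : (0 : ℝ) < b := by exact_mod_cast Nat.pos_of_ne_zero hb
  have hbn : (b : ℝ) ≤ n := by
    rw [h.eq_mul]
    exact_mod_cast Nat.le_mul_of_pos_left b (Nat.pos_of_ne_zero h.left_ne_zero)
  have hrough : IsRough z b := fun p hp hpb => hzq.trans (h.rough p hp hpb)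
  have hlz := log_pos hz
  calc (hooleyDelta n : ℝ) ≤ b.divisors.card * hooleyDelta a := by
        rw [h.eq_mul]
        exact_mod_cast hooleyDelta_mul_le a hb
    _ ≤ 2 ^ (log b / log z) * hooleyDelta a := by
        gcongr
        exact card_divisors_le_of_isRough hz hb hrough
    _ ≤ 2 ^ (log x / log z) * hooleyDelta a := by
        gcongr
        · exact one_le_two
        · exact hbn.trans hnx

open scoped Classical in
lemma sum_large_prime_hooleyDelta_le {r u Y Z z : ℝ} (hu : 0 ≤ u) (hz : 2 ≤ z)
    (hZ : 0 ≤ Z) (hZu : Z ≤ u + Y) (hY : z ^ 2 * log z * Z ≤ Y)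
    (hr : log (u + Y) ≤ r * log z) :
    ∑ n ∈ (intervalNat u Y).filter (fun n => ∃ q a b, ThresholdDecomp Z n q a b ∧ z ≤ q),
      (hooleyDelta n : ℝ) ≤ 2 ^ r * (5 * Y / log z) * logMean (u + Y) := by
  have hlz : 0 < log z := log_pos (by linarith)
  have hY0 : 0 ≤ Y := le_trans (by positivity) hY
  calc _ ≤ ∑ a ∈ Finset.Icc 1 ⌊Z⌋₊, 2 ^ r * (hooleyDelta a : ℝ) * (5 * (Y / a) / log z) := by
        refine sum_filter_le_sum_mul_card (Q := fun a n => ∃ b : ℕ, n = a * b ∧ IsRough z b)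
          (fun a _ => by positivity) ?_ fun a ha => ?_
        · rintro n hn ⟨q, a, b, h, hzq⟩
          refine ⟨a, h.mem_Icc, ⟨b, h.eq_mul, fun p hp hpb => hzq.trans (h.rough p hp hpb)⟩, ?_⟩
          refine (h.hooleyDelta_le (by linarith) hzq (pos_of_mem_intervalNat hn).ne'
            (le_of_mem_intervalNat hn)).trans ?_
          gcongr
          · exact one_le_two
          · rwa [div_le_iff₀ hlz]
        · obtain ⟨ha1, haZ⟩ := Finset.mem_Icc.mp ha
          have ha0 : (0 : ℝ) < a := by exact_mod_cast ha1
          refine card_mul_isRough_intervalNat_le hu hz (by omega) ?_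
          rw [le_div_iff₀ ha0]
          refine le_trans ?_ hY
          gcongr
          exact (Nat.le_floor_iff hZ).mp haZ
    _ = 2 ^ r * (5 * Y / log z) * logMean Z := by
        rw [logMean, Finset.mul_sum]
        exact Finset.sum_congr rfl fun a _ => by ring
    _ ≤ _ := by
        gcongr
        exact logMean_mono hZu

section PrimePower

variable {z : ℝ} {q : ℕ}

/-- The first power of `q` exceeding `z`, for `1 < q` and `1 ≤ z`. -/
noncomputable def firstPowGt (z : ℝ) (q : ℕ) : ℕ := q ^ (Nat.log q ⌊z⌋₊ + 1)

lemma ThresholdDecomp.firstPowGt_dvd {n a b : ℕ} (h : ThresholdDecomp (z ^ 2) n q a b)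
    (hz : 1 ≤ z) (haz : (a : ℝ) ≤ z) : firstPowGt z q ∣ n := by
  refine (pow_dvd_pow q ?_).trans (Nat.ordProj_dvd n q)
  by_contra hlt
  have hpow : q ^ n.factorization q ≤ ⌊z⌋₊ :=
    (Nat.pow_le_pow_right h.prime.pos (by omega)).trans
      (Nat.pow_log_le_self q (Nat.floor_pos.mpr hz).ne')
  have hpow' : (q : ℝ) ^ n.factorization q ≤ z := by
    exact_mod_cast (Nat.le_floor_iff (by linarith)).mp hpow
  have : (a : ℝ) * (q : ℝ) ^ n.factorization q ≤ z * z := by gcongr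
  linarith [h.lt, sq z]

lemma firstPowGt_le_sq (hz : 1 ≤ z) (hqz : (q : ℝ) ≤ z) : (firstPowGt z q : ℝ) ≤ z ^ 2 := by
  have hpow : (q : ℝ) ^ Nat.log q ⌊z⌋₊ ≤ z := by
    exact_mod_cast (Nat.le_floor_iff (by linarith)).mp
      (Nat.pow_log_le_self q (Nat.floor_pos.mpr hz).ne')
  rw [firstPowGt, Nat.cast_pow, pow_succ, sq]
  gcongr

lemma sqrt_mul_le_firstPowGt (hz : 0 ≤ z) (hq : 1 < q) (hqz : (q : ℝ) ≤ z) :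
    √z * q ≤ firstPowGt z q := by
  have hq1 : (1 : ℝ) ≤ q := by exact_mod_cast hq.le
  have hlog : 1 ≤ Nat.log q ⌊z⌋₊ := Nat.log_pos hq (Nat.le_floor hqz)
  have hz_lt : z < (firstPowGt z q : ℝ) :=
    (Nat.floor_lt hz).mp (Nat.lt_pow_succ_log_self hq ⌊z⌋₊)
  have hq_le : (q : ℝ) ^ 2 ≤ firstPowGt z q := by
    rw [firstPowGt, Nat.cast_pow]
    exact pow_le_pow_right₀ hq1 (by omega)
  refine le_of_sq_le_sq ?_ (Nat.cast_nonneg _)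
  rw [mul_pow, sq_sqrt hz, sq (firstPowGt z q : ℝ)]
  gcongr

lemma card_filter_firstPowGt_dvd_le {u Y : ℝ} (hu : 0 ≤ u) (hz : 1 ≤ z) (hY : z ^ 2 ≤ Y)
    (hq : 1 < q) (hqz : (q : ℝ) ≤ z) :
    (((intervalNat u Y).filter (firstPowGt z q ∣ ·)).card : ℝ) ≤ 2 * Y / √z * (q : ℝ)⁻¹ := by
  have hY0 : 0 ≤ Y := (sq_nonneg z).trans hY
  have : (0 : ℝ) < q := by exact_mod_cast one_pos.trans hq
  calc _ ≤ 2 * Y / (firstPowGt z q : ℝ) :=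
        card_filter_dvd_intervalNat_le hu (pow_ne_zero _ (by omega))
          ((firstPowGt_le_sq hz hqz).trans hY)
    _ ≤ 2 * Y / (√z * q) := by
        have : 0 < √z := sqrt_pos.mpr (by linarith)
        gcongr
        exact sqrt_mul_le_firstPowGt (by linarith) hq hqz
    _ = _ := by rw [← div_div, div_eq_mul_inv]

open scoped Classical in
lemma sum_prime_power_hooleyDelta_le {u Y D : ℝ} (hu : 0 ≤ u) (hz : 1 ≤ z) (hY : z ^ 2 ≤ Y)
    (hD0 : 0 ≤ D) (hD : ∀ n ∈ intervalNat u Y, (hooleyDelta n : ℝ) ≤ D) :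
    ∑ n ∈ (intervalNat u Y).filter
        (fun n => ∃ q a b, ThresholdDecomp (z ^ 2) n q a b ∧ (q : ℝ) < z ∧ (a : ℝ) ≤ z),
      (hooleyDelta n : ℝ) ≤ D * (2 * Y / √z * (1 + log z)) := by
  have hY0 : 0 ≤ Y := (sq_nonneg z).trans hY
  calc _ ≤ ∑ q ∈ Finset.Icc 2 ⌊z⌋₊, D * (2 * Y / √z * (q : ℝ)⁻¹) := by
        refine sum_filter_le_sum_mul_card (Q := fun q n => firstPowGt z q ∣ n)
          (fun _ _ => hD0) ?_ fun q hq => ?_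
        · rintro n hn ⟨q, a, b, h, hqz, haz⟩
          exact ⟨q, Finset.mem_Icc.mpr ⟨h.prime.two_le, Nat.le_floor hqz.le⟩,
            h.firstPowGt_dvd hz haz, hD n hn⟩
        · obtain ⟨hq1, hqz⟩ := Finset.mem_Icc.mp hq
          exact card_filter_firstPowGt_dvd_le hu hz hY hq1
            ((Nat.le_floor_iff (by linarith)).mp hqz)
    _ = D * (2 * Y / √z * ∑ q ∈ Finset.Icc 2 ⌊z⌋₊, (q : ℝ)⁻¹) := by
        rw [← Finset.mul_sum, ← Finset.mul_sum]
    _ ≤ D * (2 * Y / √z * ∑ q ∈ Finset.Icc 1 ⌊z⌋₊, (q : ℝ)⁻¹) := by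
        gcongr
        exact one_le_two
    _ ≤ D * (2 * Y / √z * (1 + log z)) := by
        have hharm := harmonic_floor_le_one_add_log z hz
        rw [harmonic_eq_sum_Icc] at hharm
        push_cast at hharm
        gcongr

end PrimePower

/-- The `q`-smooth integers in `(z, Z]`. -/
noncomputable def smoothIoc (q : ℕ) (z Z : ℝ) : Finset ℕ :=
  (Finset.Icc 1 ⌊Z⌋₊).filter fun a : ℕ => z < a ∧ a ∈ q.smoothNumbers

lemma mem_smoothIoc {q a : ℕ} {z Z : ℝ} :
    a ∈ smoothIoc q z Z ↔ a ∈ Finset.Icc 1 ⌊Z⌋₊ ∧ z < a ∧ a ∈ q.smoothNumbers :=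
  Finset.mem_filter

lemma pos_of_mem_smoothIoc {q a : ℕ} {z Z : ℝ} (ha : a ∈ smoothIoc q z Z) : 0 < a :=
  (Finset.mem_Icc.mp (mem_smoothIoc.mp ha).1).1

lemma le_of_mem_smoothIoc {q a : ℕ} {z Z : ℝ} (ha : a ∈ smoothIoc q z Z) : (a : ℝ) ≤ Z :=
  (Nat.le_floor_iff' (pos_of_mem_smoothIoc ha).ne').mp (Finset.mem_Icc.mp (mem_smoothIoc.mp ha).1).2

lemma card_filter_dvd_intervalNat_le_inv_sqrt {u Y z : ℝ} (hu : 0 ≤ u) (hz : 0 < z) {m : ℕ}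
    (hzm : z ≤ m) (hmY : (m : ℝ) ≤ Y) :
    (((intervalNat u Y).filter (m ∣ ·)).card : ℝ) ≤ 2 * Y / √z * (√m)⁻¹ := by
  have hm0 : (0 : ℝ) < m := hz.trans_le hzm
  have hY0 : 0 ≤ Y := hm0.le.trans hmY
  have : 0 < √z := sqrt_pos.mpr hz
  have : 0 < √m := sqrt_pos.mpr hm0
  calc _ ≤ 2 * Y / (m : ℝ) :=
        card_filter_dvd_intervalNat_le hu (by exact_mod_cast hm0.ne') hmY
    _ = 2 * Y / (√m * √m) := by rw [mul_self_sqrt hm0.le]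
    _ ≤ 2 * Y / (√z * √m) := by gcongr
    _ = _ := by rw [← div_div, div_eq_mul_inv]

open scoped Classical in
lemma sum_tiny_prime_hooleyDelta_le {u Y Z z w D : ℝ} (hu : 0 ≤ u) (hz : 0 < z) (hZ : 0 ≤ Z)
    (hY : Z ≤ Y) (hw : 0 ≤ w) (hD0 : 0 ≤ D)
    (hD : ∀ n ∈ intervalNat u Y, (hooleyDelta n : ℝ) ≤ D) :
    ∑ n ∈ (intervalNat u Y).filter
        (fun n => ∃ q a b, ThresholdDecomp Z n q a b ∧ z < a ∧ (q : ℝ) ≤ w),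
      (hooleyDelta n : ℝ) ≤ D * (2 * Y / √z * exp (8 * √w)) := by
  have hY0 : 0 ≤ Y := hZ.trans hY
  calc _ ≤ ∑ a ∈ smoothIoc ⌊w⌋₊ z Z, D * (2 * Y / √z * (√a)⁻¹) := by
        refine sum_filter_le_sum_mul_card (Q := fun a n => a ∣ n) (fun _ _ => hD0) ?_ fun a ha => ?_
        · rintro n hn ⟨q, a, b, h, hza, hqw⟩
          exact ⟨a, mem_smoothIoc.mpr ⟨h.mem_Icc, hza,
            Nat.smoothNumbers_mono (Nat.le_floor hqw) h.smooth⟩, Dvd.intro _ h.eq_mul.symm, hD n hn⟩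
        · exact card_filter_dvd_intervalNat_le_inv_sqrt hu hz (mem_smoothIoc.mp ha).2.1.le
            ((le_of_mem_smoothIoc ha).trans hY)
    _ = D * (2 * Y / √z * ∑ a ∈ smoothIoc ⌊w⌋₊ z Z, (√a)⁻¹) := by
        rw [← Finset.mul_sum, ← Finset.mul_sum]
    _ ≤ D * (2 * Y / √z * exp (8 * √⌊w⌋₊)) := by
        gcongr
        exact sum_smooth_inv_sqrt_le ⌊w⌋₊ fun a ha => (mem_smoothIoc.mp ha).2.2
    _ ≤ _ := by
        gcongr
        exact Nat.floor_le hw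

/-! ### Middle primes -/

lemma sum_le_exp_mul_sum_mul_rpow {S : Finset ℕ} {f : ℕ → ℝ} (hf : ∀ a ∈ S, 0 ≤ f a) {z : ℝ}
    (hz : 0 < z) (hS : ∀ a ∈ S, z ≤ a) {β : ℝ} (hβ : 0 ≤ β) :
    ∑ a ∈ S, f a ≤ exp (-(β * log z)) * ∑ a ∈ S, f a * (a : ℝ) ^ β := by
  rw [Finset.mul_sum]
  refine Finset.sum_le_sum fun a ha => ?_
  have hone : 1 ≤ exp (-(β * log z)) * (a : ℝ) ^ β := by
    rw [rpow_def_of_pos (hz.trans_le (hS a ha)), ← exp_add, one_le_exp_iff]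
    have : β * log z ≤ β * log a := by
      gcongr
      exact hS a ha
    linarith
  calc f a ≤ f a * (exp (-(β * log z)) * (a : ℝ) ^ β) := le_mul_of_one_le_right (hf a ha) hone
    _ = _ := by ring

lemma two_rpow_mul_exp_neg_le {r κ L s t : ℝ} (hκ : r * log 2 + 1 ≤ κ) (hs : 0 < s)
    (ht : 0 < t) (hL : L ≤ r * t) :
    (2 : ℝ) ^ (L / s) * exp (-(κ / s * t)) ≤ 2 * s ^ 2 / t ^ 2 := by
  have hexponent : log 2 * (L / s) + -(κ / s * t) ≤ -(t / s) := by
    have hL' : log 2 * (L / s) ≤ log 2 * (r * t / s) := by gcongr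
    have hκ' : (r * log 2 + 1) * (t / s) ≤ κ * (t / s) := by gcongr
    calc log 2 * (L / s) + -(κ / s * t) ≤ log 2 * (r * t / s) - κ * (t / s) := by
          rw [div_mul_eq_mul_div, mul_div_assoc κ]
          linarith
      _ ≤ log 2 * (r * t / s) - (r * log 2 + 1) * (t / s) := by linarith
      _ = -(t / s) := by ring
  calc (2 : ℝ) ^ (L / s) * exp (-(κ / s * t))
      = exp (log 2 * (L / s) + -(κ / s * t)) := by rw [rpow_def_of_pos two_pos, ← exp_add]
    _ ≤ exp (-(t / s)) := exp_le_exp.mpr hexponent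
    _ ≤ ((t / s) ^ 2 / 2)⁻¹ := by
        have := quadratic_le_exp_of_nonneg (div_pos ht hs).le
        rw [exp_neg]
        gcongr
        linarith [div_pos ht hs]
    _ = 2 * s ^ 2 / t ^ 2 := by field_simp

/-- Rankin's trick with the exponent `κ / log q`. -/
lemma two_rpow_mul_sum_smoothIoc_hooleyDelta_div_le {r κ L Z z x : ℝ} (hr : 0 ≤ r)
    (hκ : r * log 2 + 1 ≤ κ) (hz : 1 < z) (hL : L ≤ r * log z) (hZ : Z ≤ x)
    {q : ℕ} (hq : exp (2 * κ) ≤ q) :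
    (2 : ℝ) ^ (L / log q) * ∑ a ∈ smoothIoc q z Z, (hooleyDelta a : ℝ) / a ≤
      2 * log q ^ 2 / log z ^ 2 * (rankinConst κ * logMean x) := by
  have hκ1 : 1 ≤ κ := by linarith [mul_nonneg hr (log_nonneg one_le_two)]
  have hq0 : (0 : ℝ) < q := (exp_pos _).trans_le hq
  have hlq : 2 * κ ≤ log q := (le_log_iff_exp_le hq0).mpr hq
  have hlq0 : 0 < log q := by linarith
  have hβ : 0 ≤ κ / log q := by positivity
  have hβ1 : κ / log q ≤ 1 / 2 := by
    rw [div_le_iff₀ hlq0]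
    linarith
  have hrankin : ∑ a ∈ smoothIoc q z Z, (hooleyDelta a : ℝ) / a * (a : ℝ) ^ (κ / log q) ≤
      rankinConst κ * logMean x :=
    sum_smooth_hooleyDelta_rpow_le hβ hβ1 (by exact_mod_cast hq0)
      (div_mul_cancel₀ _ hlq0.ne').le
      fun a ha => ⟨(mem_smoothIoc.mp ha).2.2, (le_of_mem_smoothIoc ha).trans hZ⟩
  have hnonneg : 0 ≤ rankinConst κ * logMean x := mul_nonneg (exp_pos _).le (logMean_nonneg x)
  calc (2 : ℝ) ^ (L / log q) * ∑ a ∈ smoothIoc q z Z, (hooleyDelta a : ℝ) / a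
      ≤ (2 : ℝ) ^ (L / log q) * (exp (-(κ / log q * log z)) * (rankinConst κ * logMean x)) := by
        gcongr
        refine (sum_le_exp_mul_sum_mul_rpow (fun a _ => by positivity) (by linarith)
          (fun a ha => (mem_smoothIoc.mp ha).2.1.le) hβ).trans ?_
        gcongr
    _ = (2 : ℝ) ^ (L / log q) * exp (-(κ / log q * log z)) * (rankinConst κ * logMean x) := by
        ring
    _ ≤ _ := by
        gcongr
        exact two_rpow_mul_exp_neg_le hκ hlq0 (log_pos hz) hL

/-- The primes in `(w, z]`. -/
noncomputable def primesIoc (w z : ℝ) : Finset ℕ :=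
  (⌊z⌋₊ + 1).primesBelow.filter fun q : ℕ => w < q

lemma mem_primesIoc {w z : ℝ} {q : ℕ} : q ∈ primesIoc w z ↔ q.Prime ∧ w < q ∧ (q : ℝ) ≤ z := by
  rw [primesIoc, Finset.mem_filter, Nat.mem_primesBelow, Nat.lt_add_one_iff]
  constructor
  · rintro ⟨⟨hqz, hp⟩, hw⟩
    exact ⟨hp, hw, (Nat.le_floor_iff' hp.ne_zero).mp hqz⟩
  · rintro ⟨hp, hw, hqz⟩
    exact ⟨⟨Nat.le_floor hqz, hp⟩, hw⟩

lemma sum_primesIoc_log_div_le {w z : ℝ} (hz : 4 ≤ z) :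
    ∑ q ∈ primesIoc w z, log q / q ≤ 2 * log z := by
  have hfloor : 1 ≤ ⌊z⌋₊ := Nat.floor_pos.mpr (by linarith)
  have : (0 : ℝ) < ⌊z⌋₊ := by exact_mod_cast hfloor
  calc ∑ q ∈ primesIoc w z, log q / q ≤ ∑ q ∈ (⌊z⌋₊ + 1).primesBelow, log q / q :=
        Finset.sum_le_sum_of_subset_of_nonneg (Finset.filter_subset _ _) fun q _ _ =>
          div_nonneg (log_natCast_nonneg q) (Nat.cast_nonneg q)
    _ ≤ log ⌊z⌋₊ + log 4 := sum_log_div_primesBelow_le hfloor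
    _ ≤ log z + log z := by
        gcongr
        exact Nat.floor_le (by linarith)
    _ = 2 * log z := (two_mul _).symm

section MiddlePrimes

variable {r κ u Y Z z : ℝ}

lemma card_mul_prime_isRough_intervalNat_le (hu : 0 ≤ u) (hY : z ^ 4 * Z ≤ Y) {a q : ℕ}
    (hq : q.Prime) (hqz : (q : ℝ) ≤ z) (ha : 0 < a) (haZ : (a : ℝ) ≤ Z) [DecidablePred
      fun n => ∃ b : ℕ, n = a * q * b ∧ IsRough q b] :
    (((intervalNat u Y).filter fun n => ∃ b : ℕ, n = a * q * b ∧ IsRough q b).card : ℝ) ≤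
      5 * (Y / (a * q)) / log q := by
  classical
  have hq2 : (2 : ℝ) ≤ q := by exact_mod_cast hq.two_le
  have ha0 : (0 : ℝ) < a := by exact_mod_cast ha
  have hlog : log q ≤ z := (log_le_self (by positivity)).trans hqz
  have hz0 : 0 ≤ z := by linarith
  have hZ0 : 0 ≤ Z := ha0.le.trans haZ
  have hcard := card_mul_isRough_intervalNat_le (Y := Y) hu hq2
    (mul_ne_zero ha.ne' hq.ne_zero) <| by
      push_cast
      rw [le_div_iff₀ (by positivity)]
      calc (q : ℝ) ^ 2 * log q * (a * q) ≤ z ^ 2 * z * (Z * z) := by gcongr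
        _ = z ^ 4 * Z := by ring
        _ ≤ Y := hY
  push_cast at hcard
  convert hcard

lemma sum_smoothIoc_two_rpow_mul_hooleyDelta_le (hr : 0 ≤ r) (hκ : r * log 2 + 1 ≤ κ)
    (hz : 1 < z) (hY : 0 ≤ Y) (hZu : Z ≤ u + Y) (hL : log (u + Y) ≤ r * log z) {q : ℕ}
    (hq : q.Prime) (hκq : exp (2 * κ) ≤ q) :
    ∑ a ∈ smoothIoc q z Z, 2 ^ (log (u + Y) / log q) * (hooleyDelta a : ℝ) *
        (5 * (Y / (a * q)) / log q) ≤
      10 * Y * rankinConst κ * logMean (u + Y) / log z ^ 2 * (log q / q) := by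
  have hq0 : (0 : ℝ) < q := by exact_mod_cast hq.pos
  have hlq : 0 < log q := log_pos (by exact_mod_cast hq.one_lt)
  calc _ = 5 * Y / (q * log q) * ((2 : ℝ) ^ (log (u + Y) / log q) *
          ∑ a ∈ smoothIoc q z Z, (hooleyDelta a : ℝ) / a) := by
        rw [Finset.mul_sum, Finset.mul_sum]
        refine Finset.sum_congr rfl fun a ha => ?_
        have ha0 : (a : ℝ) ≠ 0 := by exact_mod_cast (pos_of_mem_smoothIoc ha).ne'
        field_simp
    _ ≤ 5 * Y / (q * log q) *
          (2 * log q ^ 2 / log z ^ 2 * (rankinConst κ * logMean (u + Y))) := by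
        exact mul_le_mul_of_nonneg_left
          (two_rpow_mul_sum_smoothIoc_hooleyDelta_div_le hr hκ hz hL hZu hκq) (by positivity)
    _ = _ := by
        field_simp
        ring

open scoped Classical in
lemma sum_middle_prime_hooleyDelta_le (hr : 0 ≤ r) (hκ : r * log 2 + 1 ≤ κ) (hu : 0 ≤ u)
    (hz : 4 ≤ z) (hZ : 0 ≤ Z) (hZu : Z ≤ u + Y) (hY : z ^ 4 * Z ≤ Y)
    (hL : log (u + Y) ≤ r * log z) :
    ∑ n ∈ (intervalNat u Y).filter (fun n => ∃ q a b, ThresholdDecomp Z n q a b ∧ z < a ∧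
        exp (2 * κ) < q ∧ (q : ℝ) < z), (hooleyDelta n : ℝ) ≤
      20 * Y * rankinConst κ * logMean (u + Y) / log z := by
  have hlz : 0 < log z := log_pos (by linarith)
  have hY0 : 0 ≤ Y := le_trans (by positivity) hY
  have hC : 0 ≤ 10 * Y * rankinConst κ * logMean (u + Y) / log z ^ 2 :=
    div_nonneg (mul_nonneg (mul_nonneg (by positivity) (exp_pos _).le) (logMean_nonneg _))
      (sq_nonneg _)
  calc _ ≤ ∑ j ∈ (primesIoc (exp (2 * κ)) z).sigma fun q => smoothIoc q z Z,
          2 ^ (log (u + Y) / log j.1) * (hooleyDelta j.2 : ℝ) *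
            (5 * (Y / (j.2 * j.1)) / log j.1) := by
        refine sum_filter_le_sum_mul_card
          (Q := fun j n => ∃ b : ℕ, n = j.2 * j.1 * b ∧ IsRough j.1 b)
          (fun j _ => by positivity) ?_ fun j hj => ?_
        · rintro n hn ⟨q, a, b, h, hza, hκq, hqz⟩
          obtain ⟨b', rfl⟩ := h.dvd
          exact ⟨⟨q, a⟩, Finset.mem_sigma.mpr ⟨mem_primesIoc.mpr ⟨h.prime, hκq, hqz.le⟩,
              mem_smoothIoc.mpr ⟨h.mem_Icc, hza, h.smooth⟩⟩,
            ⟨b', by rw [h.eq_mul, mul_assoc], h.rough.of_dvd (dvd_mul_left _ _)⟩,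
            h.hooleyDelta_le (by exact_mod_cast h.prime.one_lt) le_rfl
              (pos_of_mem_intervalNat hn).ne' (le_of_mem_intervalNat hn)⟩
        · obtain ⟨hq, ha⟩ := Finset.mem_sigma.mp hj
          obtain ⟨hp, -, hqz⟩ := mem_primesIoc.mp hq
          exact card_mul_prime_isRough_intervalNat_le hu hY hp hqz (pos_of_mem_smoothIoc ha)
            (le_of_mem_smoothIoc ha)
    _ ≤ ∑ q ∈ primesIoc (exp (2 * κ)) z,
          10 * Y * rankinConst κ * logMean (u + Y) / log z ^ 2 * (log q / q) := by
        rw [Finset.sum_sigma]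
        refine Finset.sum_le_sum fun q hq => ?_
        obtain ⟨hp, hκq, -⟩ := mem_primesIoc.mp hq
        exact sum_smoothIoc_two_rpow_mul_hooleyDelta_le hr hκ (by linarith) hY0 hZu hL hp hκq.le
    _ ≤ 10 * Y * rankinConst κ * logMean (u + Y) / log z ^ 2 * (2 * log z) := by
        rw [← Finset.mul_sum]
        gcongr
        exact sum_primesIoc_log_div_le hz
    _ = _ := by
        field_simp
        ring

end MiddlePrimes

/-! ### Short intervals -/

lemma sum_filter_or_le {α : Type*} {I : Finset α} {f : α → ℝ} (hf : ∀ n, 0 ≤ f n)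
    (P Q : α → Prop) [DecidablePred P] [DecidablePred Q] [DecidablePred fun n => P n ∨ Q n] :
    ∑ n ∈ I.filter (fun n => P n ∨ Q n), f n ≤ ∑ n ∈ I.filter P, f n + ∑ n ∈ I.filter Q, f n := by
  classical
  have hor : I.filter (fun n => P n ∨ Q n) = I.filter P ∪ I.filter Q := by
    ext
    simp only [Finset.mem_filter, Finset.mem_union, and_or_left]
  rw [hor, ← Finset.sum_union_inter]
  exact le_add_of_nonneg_right (Finset.sum_nonneg fun n _ => hf n)

lemma thresholdDecomp_cases {Z : ℝ} (hZ : 1 ≤ Z) (w z : ℝ) (n : ℕ) :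
    (n : ℝ) ≤ Z ∨
      (∃ q a b, ThresholdDecomp Z n q a b ∧ z ≤ q) ∨
      (∃ q a b, ThresholdDecomp Z n q a b ∧ (q : ℝ) < z ∧ (a : ℝ) ≤ z) ∨
      (∃ q a b, ThresholdDecomp Z n q a b ∧ z < a ∧ (q : ℝ) ≤ w) ∨
      (∃ q a b, ThresholdDecomp Z n q a b ∧ z < a ∧ w < q ∧ (q : ℝ) < z) := by
  rcases le_or_gt (n : ℝ) Z with hnZ | hnZ
  · exact .inl hnZ
  obtain ⟨q, a, b, h⟩ := exists_thresholdDecomp hZ hnZ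
  rcases le_or_gt z q with hzq | hqz
  · exact .inr (.inl ⟨q, a, b, h, hzq⟩)
  rcases le_or_gt (a : ℝ) z with haz | hza
  · exact .inr (.inr (.inl ⟨q, a, b, h, hqz, haz⟩))
  rcases le_or_gt (q : ℝ) w with hqw | hwq
  · exact .inr (.inr (.inr (.inl ⟨q, a, b, h, hza, hqw⟩)))
  · exact .inr (.inr (.inr (.inr ⟨q, a, b, h, hza, hwq, hqz⟩)))

open scoped Classical in
lemma sum_intervalNat_hooleyDelta_le_add {r κ u Y z D : ℝ} (hr : 0 ≤ r)
    (hκ : r * log 2 + 1 ≤ κ) (hu : 0 ≤ u) (hz : 4 ≤ z) (hY : z ^ 6 ≤ Y)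
    (hL : log (u + Y) ≤ r * log z) (hD0 : 0 ≤ D)
    (hD : ∀ n ∈ intervalNat u Y, (hooleyDelta n : ℝ) ≤ D) :
    ∑ n ∈ intervalNat u Y, (hooleyDelta n : ℝ) ≤
      Y + (2 ^ r * (5 * Y / log z) * logMean (u + Y) + (D * (2 * Y / √z * (1 + log z)) +
        (D * (2 * Y / √z * exp (8 * exp κ)) +
          20 * Y * rankinConst κ * logMean (u + Y) / log z))) := by
  have hz1 : 1 ≤ z := by linarith
  have hZY : z ^ 2 ≤ Y := (pow_le_pow_right₀ hz1 (by norm_num)).trans hY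
  have hsq : (z ^ 2) ^ 2 ≤ Y := by
    rw [← pow_mul]
    exact (pow_le_pow_right₀ hz1 (by norm_num)).trans hY
  have hlog : z ^ 2 * log z * z ^ 2 ≤ Y := by
    have hlz : log z ≤ z ^ 2 := (log_le_self (by linarith)).trans (le_self_pow₀ hz1 two_ne_zero)
    calc z ^ 2 * log z * z ^ 2 ≤ z ^ 2 * z ^ 2 * z ^ 2 := by gcongr
      _ = z ^ 6 := by ring
      _ ≤ Y := hY
  have hf (n : ℕ) : (0 : ℝ) ≤ hooleyDelta n := Nat.cast_nonneg _
  have hlarge := sum_large_prime_hooleyDelta_le hu (by linarith) (sq_nonneg z) (by linarith)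
    hlog hL
  have hpower := sum_prime_power_hooleyDelta_le hu hz1 hZY hD0 hD
  have htiny := sum_tiny_prime_hooleyDelta_le (w := exp (2 * κ)) hu (by linarith : 0 < z)
    (sq_nonneg z) hZY (exp_pos _).le hD0 hD
  rw [← exp_half, mul_div_cancel_left₀ κ two_ne_zero] at htiny
  have hmiddle := sum_middle_prime_hooleyDelta_le hr hκ hu hz (sq_nonneg z) (by linarith)
    (by linarith [show z ^ 4 * z ^ 2 = z ^ 6 by ring]) hL
  have hcover := Finset.filter_true_of_mem fun n (_ : n ∈ intervalNat u Y) =>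
    thresholdDecomp_cases (one_le_pow₀ hz1 : 1 ≤ z ^ 2) (exp (2 * κ)) z n
  calc _ = _ := congrArg (fun s => ∑ n ∈ s, (hooleyDelta n : ℝ)) hcover.symm
    _ ≤ _ := (sum_filter_or_le hf _ _).trans <|
      add_le_add ((sum_filter_le_hooleyDelta_le (sq_nonneg z)).trans hsq) <|
      (sum_filter_or_le hf _ _).trans <| add_le_add hlarge <|
      (sum_filter_or_le hf _ _).trans <| add_le_add hpower <|
      (sum_filter_or_le hf _ _).trans <| add_le_add htiny hmiddle

/-- The constant in the divisor bound `τ(n) ≤ divisorConst ℓ * n ^ (1 / (14 * ℓ))`. -/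
noncomputable def divisorConst (ℓ : ℝ) : ℝ := (1 + 14 * ℓ / log 2) ^ ((2 : ℝ) ^ (14 * ℓ))

/-- The exponent `κ` of Rankin's method for `y = x ^ (1 / ℓ)` and `z = y ^ (1 / 6)`: the saving
`exp (-κ * log z / log q)` from the smooth part beats the weight `2 ^ (6 * ℓ * log z / log q)` of
a rough part without prime factors below `q`. -/
noncomputable def rankinExponent (ℓ : ℝ) : ℝ := 6 * ℓ * log 2 + 1

/-- The constant that the sieve argument yields for intervals of length at least
`x ^ (1 / ℓ)`. -/
noncomputable def shortIntervalConst (ℓ : ℝ) : ℝ :=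
  1 + (30 * 2 ^ (6 * ℓ) + 120 * rankinConst (rankinExponent ℓ)) * ℓ * exp 321 +
    2 * divisorConst ℓ + 2 * divisorConst ℓ * exp (8 * exp (rankinExponent ℓ))

lemma divisorConst_nonneg {ℓ : ℝ} (hℓ : 0 ≤ ℓ) : 0 ≤ divisorConst ℓ := by
  have := log_pos one_lt_two
  rw [divisorConst]
  positivity

lemma hooleyDelta_le_of_le_rpow {ℓ y : ℝ} (hℓ : 0 < ℓ) (hy : 0 ≤ y) {n : ℕ} (hn : n ≠ 0)
    (hny : n ≤ y ^ ℓ) : (hooleyDelta n : ℝ) ≤ divisorConst ℓ * y ^ (1 / 14 : ℝ) := by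
  have hδ : 0 < 1 / (14 * ℓ) := by positivity
  have hconst : 1 / (1 / (14 * ℓ) * log 2) = 14 * ℓ / log 2 := by field_simp
  calc (hooleyDelta n : ℝ) ≤ n.divisors.card := by
        exact_mod_cast hooleyDelta_le_card_divisors n
    _ ≤ divisorConst ℓ * (n : ℝ) ^ (1 / (14 * ℓ)) := by
        simpa only [divisorConst, hconst, one_div_one_div] using card_divisors_le_rpow hδ hn
    _ ≤ divisorConst ℓ * (y ^ ℓ) ^ (1 / (14 * ℓ)) := by
        have := divisorConst_nonneg hℓ.le
        gcongr
    _ = divisorConst ℓ * y ^ (1 / 14 : ℝ) := by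
        rw [← rpow_mul hy]
        congr 2
        field_simp

lemma hooleyDelta_le_of_mem_intervalNat {ℓ x y : ℝ} (hℓ : 0 < ℓ) (hy : 0 ≤ y)
    (hxy : x ≤ y ^ ℓ) {n : ℕ} (hn : n ∈ intervalNat (x - y) y) :
    (hooleyDelta n : ℝ) ≤ divisorConst ℓ * y ^ (1 / 14 : ℝ) :=
  hooleyDelta_le_of_le_rpow hℓ hy (pos_of_mem_intervalNat hn).ne' <|
    (le_of_mem_intervalNat hn).trans (by rwa [sub_add_cancel])

lemma one_le_log_rpow {x : ℝ} (hx : exp 1 ≤ x) : 1 ≤ log x ^ (-1 + 4 / π) := by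
  refine one_le_rpow ((le_log_iff_exp_le ((exp_pos _).trans_le hx)).mpr hx) ?_
  linarith [(one_le_div pi_pos).mpr pi_le_four]

lemma logMean_div_le {x M : ℝ} (hx : exp 1 ≤ x) {ℓ : ℝ} (hM : 0 < M) (hxM : log x ≤ ℓ * M) :
    logMean x / M ≤ ℓ * exp 321 * log x ^ (-1 + 4 / π) := by
  have hlog : 0 < log x :=
    one_pos.trans_le ((le_log_iff_exp_le ((exp_pos _).trans_le hx)).mpr hx)
  rw [div_le_iff₀ hM]
  calc logMean x ≤ exp 321 * log x ^ (4 / π) := logMean_le hx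
    _ = exp 321 * (log x ^ (-1 + 4 / π) * log x) := by
        rw [← rpow_add_one hlog.ne']
        ring_nf
    _ ≤ exp 321 * (log x ^ (-1 + 4 / π) * (ℓ * M)) := by gcongr
    _ = ℓ * exp 321 * log x ^ (-1 + 4 / π) * M := by ring

lemma rpow_div_sqrt_rpow_sixth {y : ℝ} (hy : 0 < y) :
    y ^ (1 / 14 : ℝ) / √(y ^ (1 / 6 : ℝ)) = (y ^ (1 / 84 : ℝ))⁻¹ := by
  rw [sqrt_eq_rpow, ← rpow_mul hy.le, ← rpow_sub hy, ← rpow_neg hy.le]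
  norm_num

lemma one_add_log_div_le_rpow {y : ℝ} (hy : exp 10000 ≤ y) :
    1 + log y / 6 ≤ y ^ (1 / 84 : ℝ) := by
  have hy0 : 0 < y := (exp_pos _).trans_le hy
  have hlog : 10000 ≤ log y := (le_log_iff_exp_le hy0).mpr hy
  have hquad := quadratic_le_exp_of_nonneg (by linarith : 0 ≤ log y / 84)
  rw [rpow_def_of_pos hy0, mul_one_div]
  nlinarith

lemma mul_rpow_mul_div_sqrt_le {y B C : ℝ} (hy : 0 < y) (hC : 0 ≤ C)
    (hB : B ≤ y ^ (1 / 84 : ℝ)) :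
    C * y ^ (1 / 14 : ℝ) * (2 * y / √(y ^ (1 / 6 : ℝ)) * B) ≤ 2 * C * y := by
  calc _ = 2 * C * y * (y ^ (1 / 14 : ℝ) / √(y ^ (1 / 6 : ℝ)) * B) := by ring
    _ = 2 * C * y * ((y ^ (1 / 84 : ℝ))⁻¹ * B) := by rw [rpow_div_sqrt_rpow_sixth hy]
    _ ≤ 2 * C * y * 1 := by
        gcongr
        rwa [inv_mul_le_iff₀ (by positivity), mul_one]
    _ = 2 * C * y := mul_one _

lemma sieve_terms_le {ℓ x y A H : ℝ} (hx : exp 1 ≤ x) (hy : 1 < y) (hA : 0 ≤ A) (hH : 0 ≤ H)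
    (hxy : log x ≤ ℓ * log y) :
    A * (5 * y / (log y / 6)) * logMean x + 20 * y * H * logMean x / (log y / 6) ≤
      (30 * A + 120 * H) * ℓ * exp 321 * y * log x ^ (-1 + 4 / π) := by
  have hlog : 0 < log y := log_pos hy
  calc _ = (30 * A + 120 * H) * y * (logMean x / log y) := by
        field_simp
        ring
    _ ≤ (30 * A + 120 * H) * y * (ℓ * exp 321 * log x ^ (-1 + 4 / π)) := by
        gcongr
        exact logMean_div_le hx hlog hxy
    _ = _ := by ring

lemma sum_intervalNat_hooleyDelta_le {ℓ x y : ℝ} (hℓ : 0 < ℓ) (hy : exp 10000 ≤ y)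
    (hyx : y ≤ x) (hxy : x ≤ y ^ ℓ) :
    ∑ n ∈ intervalNat (x - y) y, (hooleyDelta n : ℝ) ≤
      shortIntervalConst ℓ * y * log x ^ (-1 + 4 / π) := by
  have hy1 : 1 < y := (one_lt_exp_iff.mpr (by norm_num)).trans_le hy
  have hy0 : 0 < y := one_pos.trans hy1
  have hlog : 10000 ≤ log y := (le_log_iff_exp_le hy0).mpr hy
  have hx1 : exp 1 ≤ x := (exp_le_exp.mpr (by norm_num)).trans (hy.trans hyx)
  have hxlog : log x ≤ ℓ * log y :=
    (log_le_log (hy0.trans_le hyx) hxy).trans_eq (log_rpow hy0 ℓ)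
  have hlogz : log (y ^ (1 / 6 : ℝ)) = log y / 6 := by rw [log_rpow hy0, one_div_mul_eq_div]
  have hz4 : 4 ≤ y ^ (1 / 6 : ℝ) := by
    rw [rpow_def_of_pos hy0]
    linarith [add_one_le_exp (log y * (1 / 6))]
  have hz6 : (y ^ (1 / 6 : ℝ)) ^ 6 = y := by
    rw [← rpow_mul_natCast hy0.le]
    norm_num
  have hC : 0 ≤ divisorConst ℓ := divisorConst_nonneg hℓ.le
  have hsum := sum_intervalNat_hooleyDelta_le_add (r := 6 * ℓ) (κ := rankinExponent ℓ)
    (by positivity) le_rfl (sub_nonneg.mpr hyx) hz4 hz6.le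
    (by rw [sub_add_cancel, hlogz]; linarith) (mul_nonneg hC (by positivity))
    fun n hn => hooleyDelta_le_of_mem_intervalNat hℓ hy0.le hxy hn
  rw [sub_add_cancel, hlogz] at hsum
  have hsieve := sieve_terms_le (A := 2 ^ (6 * ℓ)) (H := rankinConst (rankinExponent ℓ)) hx1 hy1
    (by positivity) (exp_pos _).le hxlog
  have hpower := mul_rpow_mul_div_sqrt_le hy0 hC (one_add_log_div_le_rpow hy)
  set K := exp (8 * exp (rankinExponent ℓ))
  have htiny := mul_le_mul_of_nonneg_right
    (mul_rpow_mul_div_sqrt_le hy0 hC (one_le_rpow hy1.le (by norm_num))) (exp_pos _).le (a := K)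
  have hrest : (1 + 2 * divisorConst ℓ + 2 * divisorConst ℓ * K) * y ≤
      (1 + 2 * divisorConst ℓ + 2 * divisorConst ℓ * K) * y * log x ^ (-1 + 4 / π) :=
    le_mul_of_one_le_right (by positivity) (one_le_log_rpow hx1)
  rw [shortIntervalConst]
  linarith

lemma card_intervalNat_le {u Y : ℝ} (hu : 0 ≤ u) (hY : 0 ≤ Y) :
    ((intervalNat u Y).card : ℝ) ≤ Y + 1 := by
  have h := (abs_le.mp (abs_card_filter_dvd_intervalNat_sub_le hu hY 1)).2
  simp only [one_dvd, Finset.filter_true, Nat.cast_one, div_one] at h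
  linarith

lemma sum_intervalNat_hooleyDelta_le_of_le_exp {ℓ x y : ℝ} (hℓ : 0 < ℓ) (hy : 1 ≤ y)
    (hy' : y ≤ exp 10000) (hyx : y ≤ x) (hxy : x ≤ y ^ ℓ) :
    ∑ n ∈ intervalNat (x - y) y, (hooleyDelta n : ℝ) ≤ 2 * (divisorConst ℓ * exp 715) * y := by
  have hC : 0 ≤ divisorConst ℓ := divisorConst_nonneg hℓ.le
  have hy0 : 0 ≤ y := by linarith
  calc _ ≤ ∑ _n ∈ intervalNat (x - y) y, divisorConst ℓ * y ^ (1 / 14 : ℝ) :=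
        Finset.sum_le_sum fun n hn => hooleyDelta_le_of_mem_intervalNat hℓ hy0 hxy hn
    _ = (intervalNat (x - y) y).card * (divisorConst ℓ * y ^ (1 / 14 : ℝ)) := by
        rw [Finset.sum_const, nsmul_eq_mul]
    _ ≤ (2 * y) * (divisorConst ℓ * exp 715) := by
        gcongr
        · linarith [card_intervalNat_le (sub_nonneg.mpr hyx) hy0]
        · calc y ^ (1 / 14 : ℝ) ≤ exp 10000 ^ (1 / 14 : ℝ) := by gcongr
            _ ≤ exp 715 := by
                rw [← exp_mul]
                exact exp_le_exp.mpr (by norm_num)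
    _ = 2 * (divisorConst ℓ * exp 715) * y := by ring

/-! ### Comparison of constants -/

section Constants

variable {ℓ c : ℝ}

lemma two_rpow_ofNat_mul (ℓ : ℝ) (n : ℕ) [n.AtLeastTwo] :
    (2 : ℝ) ^ ((OfNat.ofNat n : ℝ) * ℓ) = ((2 : ℝ) ^ ℓ) ^ (OfNat.ofNat n : ℕ) := by
  rw [mul_comm, ← rpow_mul_natCast zero_le_two, Nat.cast_ofNat]

lemma two_le_two_rpow (hℓ : 1 ≤ ℓ) : 2 ≤ (2 : ℝ) ^ ℓ :=
  self_le_rpow_of_one_le one_le_two hℓ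

lemma exp_rankinExponent (ℓ : ℝ) : exp (rankinExponent ℓ) = exp 1 * ((2 : ℝ) ^ ℓ) ^ 6 := by
  rw [← two_rpow_ofNat_mul, rpow_def_of_pos two_pos, ← exp_add, rankinExponent]
  ring_nf

lemma exp_rankinExponent_le (ℓ : ℝ) : exp (rankinExponent ℓ) ≤ 3 * ((2 : ℝ) ^ ℓ) ^ 6 := by
  rw [exp_rankinExponent]
  gcongr
  exact exp_one_lt_three.le

lemma rankinExponent_nonneg (hℓ : 0 ≤ ℓ) : 0 ≤ rankinExponent ℓ := by
  rw [rankinExponent]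
  positivity

lemma rankinExponent_add_one_le (ℓ : ℝ) : rankinExponent ℓ + 1 ≤ 6 * (2 : ℝ) ^ ℓ := by
  have hlog := log_le_sub_one_of_pos (rpow_pos_of_pos two_pos ℓ)
  rw [log_rpow two_pos] at hlog
  rw [rankinExponent]
  linarith

lemma exp_le_rpow (hℓ : 1 ≤ ℓ) (hc : 0 ≤ c) : exp c ≤ (10 * ℓ) ^ c := by
  rw [← exp_one_rpow]
  gcongr
  linarith [exp_one_lt_three]

lemma exp_le_C2l (hℓ : 1 ≤ ℓ) (hc : c ≤ ((2 : ℝ) ^ ℓ) ^ 16) : exp c ≤ C2l ℓ := by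
  rw [C2l, two_rpow_ofNat_mul]
  exact (exp_le_exp.mpr hc).trans (exp_le_rpow hℓ (by positivity))

lemma rankinConst_mul_exp_le_C2l (hℓ : 1 ≤ ℓ) :
    rankinConst (rankinExponent ℓ) * exp 321 ≤ C2l ℓ := by
  set t := (2 : ℝ) ^ ℓ
  have ht : 2 ≤ t := two_le_two_rpow hℓ
  rw [rankinConst, ← exp_add]
  refine exp_le_C2l hℓ ?_
  have hexp : exp (rankinExponent ℓ) ≤ 3 * t ^ 6 := exp_rankinExponent_le ℓ
  have hκ : rankinExponent ℓ + 1 ≤ 6 * t := rankinExponent_add_one_le ℓ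
  have hκ0 : 0 ≤ rankinExponent ℓ := rankinExponent_nonneg (by linarith)
  have hpow9 : 2 ^ 9 ≤ t ^ 9 := by gcongr
  have hpow7 : 2 ^ 7 ≤ t ^ 7 := by gcongr
  calc 16 * exp (rankinExponent ℓ) * (rankinExponent ℓ + 1) + 321
      ≤ 16 * (3 * t ^ 6) * (6 * t) + 321 := by gcongr
    _ = 288 * t ^ 7 + 321 := by ring
    _ ≤ 2 ^ 9 * t ^ 7 := by linarith
    _ ≤ t ^ 9 * t ^ 7 := by gcongr
    _ = t ^ 16 := by ring

lemma two_rpow_le_rankinConst (hℓ : 0 ≤ ℓ) :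
    (2 : ℝ) ^ (6 * ℓ) ≤ rankinConst (rankinExponent ℓ) := by
  have hκ : 0 ≤ rankinExponent ℓ := rankinExponent_nonneg hℓ
  rw [rankinConst, rpow_def_of_pos two_pos]
  refine exp_le_exp.mpr ?_
  calc log 2 * (6 * ℓ) ≤ rankinExponent ℓ + 1 := by
        rw [rankinExponent]
        linarith
    _ ≤ 16 * exp (rankinExponent ℓ) * (rankinExponent ℓ + 1) :=
        le_mul_of_one_le_left (by linarith) (by linarith [one_le_exp hκ])

lemma divisorConst_le (hℓ : 1 ≤ ℓ) : divisorConst ℓ ≤ (10 * ℓ) ^ (2 * ((2 : ℝ) ^ ℓ) ^ 14) := by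
  have hlog := log_two_gt_d9
  have hbase : 1 + 14 * ℓ / log 2 ≤ (10 * ℓ) ^ (2 : ℝ) := by
    have : 14 * ℓ / log 2 ≤ 28 * ℓ := by
      rw [div_le_iff₀ (by linarith)]
      nlinarith
    rw [rpow_two]
    nlinarith
  rw [divisorConst, two_rpow_ofNat_mul, rpow_mul (by linarith : 0 ≤ 10 * ℓ)]
  gcongr

lemma divisorConst_mul_exp_le_C2l (hℓ : 1 ≤ ℓ) (hc : c ≤ ((2 : ℝ) ^ ℓ) ^ 14) :
    divisorConst ℓ * exp c ≤ C2l ℓ := by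
  set t := (2 : ℝ) ^ ℓ with ht
  have ht2 : 2 ≤ t := two_le_two_rpow hℓ
  have hpow : 3 * t ^ 14 ≤ t ^ 16 := by
    calc 3 * t ^ 14 ≤ t ^ 2 * t ^ 14 := by
          gcongr
          nlinarith
      _ = t ^ 16 := by ring
  calc divisorConst ℓ * exp c ≤ (10 * ℓ) ^ (2 * t ^ 14) * (10 * ℓ) ^ (t ^ 14) := by
        gcongr
        · exact divisorConst_le hℓ
        · exact (exp_le_exp.mpr hc).trans (exp_le_rpow hℓ (by positivity))
    _ = (10 * ℓ) ^ (3 * t ^ 14) := by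
        rw [← rpow_add (by linarith)]
        ring_nf
    _ ≤ C2l ℓ := by
        rw [C2l, two_rpow_ofNat_mul, ← ht]
        exact rpow_le_rpow_of_exponent_le (by linarith) hpow

lemma shortIntervalConst_le (hℓ : 1 ≤ ℓ) : shortIntervalConst ℓ ≤ 16748 * (5 * ℓ * C2l ℓ) := by
  set t := (2 : ℝ) ^ ℓ
  have ht2 : 2 ≤ t := two_le_two_rpow hℓ
  set H := rankinConst (rankinExponent ℓ)
  have hmain : (30 * 2 ^ (6 * ℓ) + 120 * H) * ℓ * exp 321 ≤ 150 * ℓ * C2l ℓ := by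
    calc (30 * 2 ^ (6 * ℓ) + 120 * H) * ℓ * exp 321 ≤ (30 * H + 120 * H) * ℓ * exp 321 := by
          gcongr
          exact two_rpow_le_rankinConst (by linarith)
      _ = 150 * ℓ * (H * exp 321) := by ring
      _ ≤ 150 * ℓ * C2l ℓ := by
          gcongr
          exact rankinConst_mul_exp_le_C2l hℓ
  have hpower : divisorConst ℓ ≤ C2l ℓ := by
    simpa only [exp_zero, mul_one] using
      divisorConst_mul_exp_le_C2l (c := 0) hℓ (by positivity)
  have htiny : divisorConst ℓ * exp (8 * exp (rankinExponent ℓ)) ≤ C2l ℓ := by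
    refine divisorConst_mul_exp_le_C2l hℓ ?_
    have hpow : 2 ^ 8 ≤ t ^ 8 := by gcongr
    calc 8 * exp (rankinExponent ℓ) ≤ 8 * (3 * t ^ 6) := by
          gcongr
          exact exp_rankinExponent_le ℓ
      _ ≤ t ^ 8 * t ^ 6 := by
          nlinarith [pow_pos (two_pos.trans_le ht2) 6]
      _ = t ^ 14 := by ring
  have hone : 1 ≤ C2l ℓ := by
    simpa only [exp_zero] using exp_le_C2l (c := 0) hℓ (by positivity)
  have hle : C2l ℓ ≤ ℓ * C2l ℓ := le_mul_of_one_le_left (by linarith) hℓ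
  rw [shortIntervalConst]
  linarith

lemma two_mul_divisorConst_mul_exp_le (hℓ : 1 ≤ ℓ) :
    2 * (divisorConst ℓ * exp 715) ≤ 16748 * (5 * ℓ * C2l ℓ) := by
  have hpow : (2 : ℝ) ^ 14 ≤ ((2 : ℝ) ^ ℓ) ^ 14 := by
    gcongr
    exact two_le_two_rpow hℓ
  have hle := divisorConst_mul_exp_le_C2l hℓ (by linarith : 715 ≤ ((2 : ℝ) ^ ℓ) ^ 14)
  have hC : 0 ≤ C2l ℓ := (mul_nonneg (divisorConst_nonneg (by linarith)) (exp_pos _).le).trans hle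
  nlinarith

lemma five_mul_C2l_le_Lam2 (hℓ : 0 ≤ ℓ) : 5 * ℓ * C2l ℓ ≤ Lam2 ℓ := by
  have hA : 0 < A2 := by norm_num [A2]
  have hD : 0 ≤ D2l ℓ := by
    have : 0 < max A2 (2 * 2 ^ (5 * ℓ * A2)) := lt_max_of_lt_left hA
    rw [D2l]
    split_ifs <;> positivity
  have hrest : 0 ≤ 12 * ℓ * 2 ^ (6 * ℓ) + 9 * ℓ * D2l ℓ := by positivity
  rw [Lam2]
  linarith

end Constants

lemma filter_Icc_floor_eq_intervalNat {x y : ℝ} (hy : 0 ≤ y) (hyx : y ≤ x) :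
    (Finset.Icc 1 ⌊x⌋₊).filter (fun n : ℕ => x - y < n) = intervalNat (x - y) y := by
  ext n
  rw [Finset.mem_filter, Finset.mem_Icc, mem_intervalNat (sub_nonneg.mpr hyx) hy, sub_add_cancel,
    Nat.le_floor_iff (hy.trans hyx)]
  refine ⟨fun h => ⟨h.2, h.1.2⟩, fun h => ⟨⟨?_, h.2⟩, h.1⟩⟩
  exact_mod_cast (sub_nonneg.mpr hyx).trans_lt h.1

lemma sum_intervalNat_hooleyDelta_le_phiConst {ℓ x y : ℝ} (hℓ : 1 ≤ ℓ) (hx : exp 1 ≤ x)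
    (hy : 1 ≤ y) (hyx : y ≤ x) (hxy : x ≤ y ^ ℓ) :
    ∑ n ∈ intervalNat (x - y) y, (hooleyDelta n : ℝ) ≤
      phiConst ℓ * y * log x ^ (-1 + 4 / π) := by
  have hℓ0 : 0 < ℓ := by linarith
  have hy0 : 0 ≤ y := by linarith
  have hconst : 16748 * (5 * ℓ * C2l ℓ) ≤ phiConst ℓ :=
    mul_le_mul_of_nonneg_left (five_mul_C2l_le_Lam2 hℓ0.le) (by norm_num)
  have hE : 1 ≤ log x ^ (-1 + 4 / π) := one_le_log_rpow hx
  rcases le_total (exp 10000) y with hlarge | hsmall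
  · have := (shortIntervalConst_le hℓ).trans hconst
    exact (sum_intervalNat_hooleyDelta_le hℓ0 hlarge hyx hxy).trans (by gcongr)
  · have hle := (two_mul_divisorConst_mul_exp_le hℓ).trans hconst
    have hφ : 0 ≤ phiConst ℓ := le_trans
      (mul_nonneg zero_le_two (mul_nonneg (divisorConst_nonneg hℓ0.le) (exp_pos _).le)) hle
    calc _ ≤ 2 * (divisorConst ℓ * exp 715) * y :=
          sum_intervalNat_hooleyDelta_le_of_le_exp hℓ0 hy hsmall hyx hxy
      _ ≤ phiConst ℓ * y := by gcongr
      _ ≤ _ := le_mul_of_one_le_right (mul_nonneg hφ hy0) hE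

lemma exp_one_le_of_threshold_le {ℓ x : ℝ} (hℓ : 1 ≤ ℓ)
    (hx : exp (7 ^ 28 * (12 * exp 1 * ℓ) ^ (28 * log (192 * exp 1 * ℓ))) ≤ x) : exp 1 ≤ x := by
  have he := one_le_exp zero_le_one
  have hlog : 0 ≤ log (192 * exp 1 * ℓ) := log_nonneg (by nlinarith)
  have hpow : 1 ≤ (12 * exp 1 * ℓ) ^ (28 * log (192 * exp 1 * ℓ)) :=
    one_le_rpow (by nlinarith) (by positivity)
  exact (exp_le_exp.mpr (by linarith)).trans hx

end ErdosHooley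

theorem statement_1_general (ℓ : ℝ) (hℓ : 1 ≤ ℓ) (x y : ℝ) (hx : Real.exp 1 ≤ x)
    (hy1 : x ^ (1 / ℓ) ≤ y) (hy2 : y ≤ x) :
    ∑ n ∈ (Finset.Icc 1 ⌊x⌋₊).filter (fun n : ℕ => x - y < (n : ℝ)),
        (hooleyDelta n : ℝ) ≤
      phiConst ℓ * y * Real.log x ^ (-1 + 4 / Real.pi) := by
  have hℓ0 : 0 < ℓ := by linarith
  have hx1 : 1 ≤ x := (Real.one_le_exp zero_le_one).trans hx
  have hx0 : 0 ≤ x := by linarith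
  have hy : 1 ≤ y := (Real.one_le_rpow hx1 (by positivity)).trans hy1
  have hxy : x ≤ y ^ ℓ := by
    rwa [← Real.rpow_inv_le_iff_of_pos hx0 (by linarith) hℓ0, ← one_div]
  rw [ErdosHooley.filter_Icc_floor_eq_intervalNat (by linarith) hy2]
  exact ErdosHooley.sum_intervalNat_hooleyDelta_le_phiConst hℓ hx hy hy2 hxy

/-- Explicit bound for the Erdős–Hooley Δ-function in short intervals. -/
theorem statement_1 (ℓ : ℝ) (hℓ : 1 ≤ ℓ) (x y : ℝ)
    (hx : Real.exp (7 ^ 28 * (12 * Real.exp 1 * ℓ) ^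
            (28 * Real.log (192 * Real.exp 1 * ℓ))) ≤ x)
    (hy1 : x ^ (1 / ℓ) ≤ y) (hy2 : y ≤ x) :
    ∑ n ∈ (Finset.Icc 1 ⌊x⌋₊).filter (fun n : ℕ => x - y < (n : ℝ)),
        (hooleyDelta n : ℝ) ≤
      phiConst ℓ * y * Real.log x ^ (-1 + 4 / Real.pi) := by
  exact statement_1_general ℓ hℓ x y (ErdosHooley.exp_one_le_of_threshold_le hℓ hx) hy1 hy2
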